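/- For each real A > 2, let q_A be a geometric random variable with P(q_A = k) = (2/A)(1 - 2/A)^{k-1} for k ≥ 1, and let U be uniform on [0,1], with ε, q_A, U independent. Set γ_A = ℓ~_{N(q_A)}, x_A = X_{N(q_A)}, and let u_A be the ⌈U · #I(γ_A)⌉-th smallest element of the finite set I(γ_A). Then the total variation distance between the law of the pair (u_A, γ_A) and the law of the pair (x_A, γ_A) tends to 0 as A → ∞. -/

import Mathlib

open MeasureTheory Filter

/-- Initial local time: edge `i` denotes the half-integer edge `i + 1/2`
joining `i` and `i+1`; `aInit i = a(i + 1/2)`, which is `0` if `|i+1/2| - 1/2`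
is even and `-1` if it is odd. -/
def aInit (i : ℤ) : ℤ := if Even (if 0 ≤ i then i else -i - 1) then 0 else -1

/-- State of the self-repelling walk: current position, edge local times
(`loc i` is the local time of the edge joining `i` and `i+1`, i.e. of the
half-integer edge `i + 1/2`), and the number of coins used so far. -/
structure SRWState where
  pos : ℤ
  loc : ℤ → ℤ
  coins : ℕ

/-- One step of the self-repelling walk driven by the coin sequence `ε`. -/
def srwStep (ε : ℕ → ℤ) (s : SRWState) : SRWState :=
  let lm := s.loc (s.pos - 1)   -- ℓ_n⁻ = ℓ_n(X_n - 1/2)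
  let lp := s.loc s.pos         -- ℓ_n⁺ = ℓ_n(X_n + 1/2)
  let next : ℤ := if lp < lm then s.pos + 1
    else if lm < lp then s.pos - 1
    else s.pos + ε s.coins
  { pos := next
    loc := fun i => if i = min s.pos next then s.loc i + 1 else s.loc i
    coins := if lm = lp then s.coins + 1 else s.coins }

/-- The self-repelling walk: state after `n` steps. -/
def srw (ε : ℕ → ℤ) : ℕ → SRWState
  | 0 => ⟨0, aInit, 0⟩
  | n + 1 => srwStep ε (srw ε n)

/-- Position `X_n` of the self-repelling walk. -/
def Xwalk (ε : ℕ → ℤ) (n : ℕ) : ℤ := (srw ε n).pos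

/-- Edge local time `ℓ_n(i + 1/2)`. -/
def ellEdge (ε : ℕ → ℤ) (n : ℕ) (i : ℤ) : ℤ := (srw ε n).loc i

/-- `ℓ_n⁻ = ℓ_n(X_n - 1/2)`. -/
def ellMinus (ε : ℕ → ℤ) (n : ℕ) : ℤ := ellEdge ε n (Xwalk ε n - 1)

/-- `ℓ_n⁺ = ℓ_n(X_n + 1/2)`. -/
def ellPlus (ε : ℕ → ℤ) (n : ℕ) : ℤ := ellEdge ε n (Xwalk ε n)

/-- `n` is an equality time: `ℓ_n⁻ = ℓ_n⁺`. -/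
def IsEqTime (ε : ℕ → ℤ) (n : ℕ) : Prop := ellMinus ε n = ellPlus ε n

/-- `N(k)`: the `(k+1)`-st smallest equality time. -/
noncomputable def timeN (ε : ℕ → ℤ) (k : ℕ) : ℕ := Nat.nth (IsEqTime ε) k

/-- `H_n = (ℓ_n⁻ + ℓ_n⁺)/2`. -/
def Hheight (ε : ℕ → ℤ) (n : ℕ) : ℤ := (ellMinus ε n + ellPlus ε n) / 2

/-- `ã(x)`: `0` for even `x`, `-1` for odd `x`. -/
def aTilde (x : ℤ) : ℤ := if Even x then 0 else -1

/-- Modified local time `ℓ~_n(x)`: equals `ℓ_n(x - 1/2)` for `x ≤ X_n` and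
`ℓ_n(x + 1/2)` for `x > X_n`. -/
def modLoc (ε : ℕ → ℤ) (n : ℕ) (x : ℤ) : ℤ :=
  if x ≤ Xwalk ε n then ellEdge ε n (x - 1) else ellEdge ε n x

/-- Area `𝒜(f) = Σ_x (f(x) - ã(x))` between `f` and `ã`. -/
noncomputable def areaA (f : ℤ → ℤ) : ℤ := ∑ᶠ x : ℤ, (f x - aTilde x)

/-- `m₋(f) = 1 + max {x ≤ 0 : f x = -1}`. -/
noncomputable def mMinus (f : ℤ → ℤ) : ℤ := 1 + sSup {x : ℤ | x ≤ 0 ∧ f x = -1}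

/-- `m₊(f) = -1 + min {x ≥ 0 : f x = -1}`. -/
noncomputable def mPlus (f : ℤ → ℤ) : ℤ := -1 + sInf {x : ℤ | 0 ≤ x ∧ f x = -1}

/-- `O(f)`: the number of zeros of `f` strictly between `m₋(f)` and `m₊(f)`. -/
noncomputable def nZeros (f : ℤ → ℤ) : ℕ :=
  {x : ℤ | mMinus f < x ∧ x < mPlus f ∧ f x = 0}.ncard

/-- `o₊ = max {x < m₊(f) : f x = 0}`. -/
noncomputable def oPlus (f : ℤ → ℤ) : ℤ := sSup {x : ℤ | x < mPlus f ∧ f x = 0}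

/-- `o₋ = min {x > m₋(f) : f x = 0}`. -/
noncomputable def oMinus (f : ℤ → ℤ) : ℤ := sInf {x : ℤ | mMinus f < x ∧ f x = 0}

open Classical in
/-- The admissible interval `I(f)`. -/
noncomputable def interI (f : ℤ → ℤ) : Set ℤ :=
  if f = aTilde then {0}
  else if nZeros f = 0 then Set.Icc (mMinus f) (mPlus f)
  else if 0 < oPlus f then Set.Ioc (oPlus f) (mPlus f)
  else Set.Ico (mMinus f) (oMinus f)

/-- Coins as `±1`-valued integers from booleans. -/
def coin (ω : ℕ → Bool) (j : ℕ) : ℤ := if ω j then 1 else -1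

/-- Total variation distance between two measures (as a real number):
supremum over measurable sets of the absolute difference of measures. -/
noncomputable def tvDist {α : Type*} [MeasurableSpace α] (μ ν : Measure α) : ℝ :=
  ⨆ E : {E : Set α // MeasurableSet E}, |(μ E.1).toReal - (ν E.1).toReal|

/-- The modified local time `γ_A = ℓ~_{N(q_A)}` as a function of the sample
`ω = (coins, value of q_A, value of U)`. -/
noncomputable def gammaRV (ω : (ℕ → Bool) × ℕ × ℝ) : ℤ → ℤ :=
  modLoc (coin ω.1) (timeN (coin ω.1) ω.2.1)

/-- The position `x_A = X_{N(q_A)}`. -/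
noncomputable def xRV (ω : (ℕ → Bool) × ℕ × ℝ) : ℤ :=
  Xwalk (coin ω.1) (timeN (coin ω.1) ω.2.1)

/-- `u_A`: the `⌈U · #I(γ_A)⌉`-th smallest element of the finite set of
consecutive integers `I(γ_A)`, i.e. `(min I(γ_A)) + ⌈U · #I(γ_A)⌉ - 1`. -/
noncomputable def uRV (ω : (ℕ → Bool) × ℕ × ℝ) : ℤ :=
  sInf (interI (gammaRV ω)) + ⌈ω.2.2 * ((interI (gammaRV ω)).ncard : ℝ)⌉ - 1


/-- One-step weight of the dual path at site `y`, from height `a` to height `b`. -/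
noncomputable def wr (y a b : ℤ) : ℝ :=
  if ¬ Even (a - y) then 0
  else if 1 ≤ a then (if b = a + 1 ∨ b = a - 1 then 1 / 2 else 0)
  else if a = 0 then (if 0 ≤ y then (if b = -1 then 1 else 0) else (if b = 1 then 1 else 0))
  else if a = -1 ∧ 0 < y ∧ b = 0 then 1 else 0

/-- Weight of the pair of edge local times at the walker. -/
noncomputable def wf (b c : ℤ) : ℝ :=
  if b = c then (if 0 ≤ b then 1 else 0)
  else if b = c + 2 then (if c = -1 then 1 else if 0 ≤ c then 1 / 2 else 0)
  else if c = b + 2 then (if b = -1 then 1 else if 0 ≤ b then 1 / 2 else 0)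
  else 0

/-- Probability to move towards the second edge. -/
noncomputable def wt (a b : ℤ) : ℝ := if b < a then 1 else if a = b then 1 / 2 else 0

lemma wr_nonneg (y a b : ℤ) : 0 ≤ wr y a b := by
  unfold wr; split_ifs <;> norm_num

lemma wf_nonneg (b c : ℤ) : 0 ≤ wf b c := by
  unfold wf; split_ifs <;> norm_num

lemma wf_symm (b c : ℤ) : wf b c = wf c b := by
  unfold wf; split_ifs <;> first | rfl | (exfalso; omega)

/-- value of `wr` for heights at least one -/
lemma wr_pos {y a b : ℤ} (ha : 1 ≤ a) (hp : Even (a - y)) (hb : b = a + 1 ∨ b = a - 1) :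
    wr y a b = 1 / 2 := by
  unfold wr; simp [ha, hp, hb]

lemma wr_ne {y a b : ℤ} (h : wr y a b ≠ 0) : Even (a - y) ∧ -1 ≤ a ∧ (b = a + 1 ∨ b = a - 1) ∧
    (a = 0 → 0 ≤ y → b = -1) ∧ (a = 0 → y < 0 → b = 1) ∧ (a = -1 → 0 < y ∧ b = 0) := by
  unfold wr at h
  split_ifs at h with h1 h2 h3 h4 h5 h6 h7 h8 <;> first | (exact absurd rfl h) | skip
  all_goals refine ⟨by simpa using h1, ?_⟩
  all_goals omega

lemma wf_ne {b c : ℤ} (h : wf b c ≠ 0) : (b = c ∧ 0 ≤ b) ∨ (b = c + 2 ∧ -1 ≤ c) ∨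
    (c = b + 2 ∧ -1 ≤ b) := by
  unfold wf at h
  split_ifs at h <;> first | (exact absurd rfl h) | skip
  all_goals omega

lemma wt_wf_zero {a b : ℤ} (h1 : a ≠ b + 1) (h2 : a ≠ b - 1) : wt a (b - 1) * wf a (b - 1) = 0 := by
  by_contra h
  have hw := wf_ne (right_ne_zero_of_mul h)
  have ht : wt a (b - 1) ≠ 0 := left_ne_zero_of_mul h
  unfold wt at ht
  split_ifs at ht <;> first | (exact absurd rfl ht) | skip
  all_goals omega

set_option maxHeartbeats 4000000 in
lemma local_identity (X a b c d : ℤ) (h0 : ¬ (X = 0 ∧ b = 0 ∧ c = 0)) :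
    wt a (b - 1) * (wf a (b - 1) * (wr (X - 1) (b - 1) c * wr X c d))
     + wt d (c - 1) * (wf d (c - 1) * (wr (-(X + 1)) (c - 1) b * wr (-X) b a))
     = wf b c * (wr (-X) b a * wr X c d) := by
  by_cases hp : Even (c - X)
  swap
  · have h1 : wr X c d = 0 := by unfold wr; simp [hp]
    have h2 : wr (-X) b a = 0 ∨ wr (-(X+1)) (c-1) b = 0 := by
      right; unfold wr; rw [if_pos]; rw [Int.even_iff] at *; omega
    rcases h2 with h2 | h2 <;> rw [h1, h2] <;> ring
  by_cases hq : Even (b + X)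
  swap
  · have h1 : wr (-X) b a = 0 := by unfold wr; simp [hq]
    have h2 : wr (X-1) (b-1) c = 0 := by
      unfold wr; rw [if_pos]; rw [Int.even_iff] at *; omega
    rw [h1, h2] ; ring
  have e1 : Even (b - 1 - (X - 1)) := by rw [Int.even_iff] at *; omega
  have e2 : Even (c - 1 - -(X + 1)) := by rw [Int.even_iff] at *; omega
  have e3 : Even (b - -X) := by rw [Int.even_iff] at *; omega
  have hX : 2 ∣ (c - X) := hp.two_dvd
  have hX2 : 2 ∣ (b + X) := hq.two_dvd
  by_cases hbc : b = c ∨ b = c + 2 ∨ c = b + 2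
  swap
  · have h1 : wr (X - 1) (b - 1) c = 0 := by
      by_contra h; have := wr_ne h; omega
    have h2 : wr (-(X + 1)) (c - 1) b = 0 := by
      by_contra h; have := wr_ne h; omega
    have h3 : wf b c = 0 := by
      by_contra h; have := wf_ne h; omega
    rw [h1, h2, h3]; ring
  by_cases ha : a = b + 1 ∨ a = b - 1
  swap
  · have h1 := wt_wf_zero (a := a) (b := b) (by tauto) (by tauto)
    have h2 : wr (-X) b a = 0 := by
      by_contra h; have := wr_ne h; omega
    rw [← mul_assoc, h1, h2]; ring
  by_cases hd : d = c + 1 ∨ d = c - 1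
  swap
  · have h1 := wt_wf_zero (a := d) (b := c) (by tauto) (by tauto)
    have h2 : wr X c d = 0 := by
      by_contra h; have := wr_ne h; omega
    rw [← mul_assoc (wt d _), h1, h2]; ring
  by_cases hc2 : c ≤ -2
  · have h1 : wr X c d = 0 := by
      by_contra h; have := wr_ne h; omega
    have h2 : wr (-(X + 1)) (c - 1) b = 0 := by
      by_contra h; have := wr_ne h; omega
    rw [h1, h2]; ring
  by_cases hb2 : b ≤ -2
  · have h1 : wr (-X) b a = 0 := by
      by_contra h; have := wr_ne h; omega
    have h2 : wr (X - 1) (b - 1) c = 0 := by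
      by_contra h; have := wr_ne h; omega
    rw [h1, h2]; ring
  by_cases hbc2 : 2 ≤ b ∧ 2 ≤ c
  · have h1 := wr_pos (y := X) (by omega) hp hd
    have h2 := wr_pos (y := -X) (by omega) e3 ha
    have h5 : wt a (b - 1) * wf a (b - 1) = 1 / 2 := by
      clear e1 e2 e3 hp hq hX hX2 hd h1 h2
      rcases ha with rfl | rfl <;> simp only [wf, wt] <;> split_ifs <;>
        first | (exfalso; omega) | norm_num
    have h6 : wt d (c - 1) * wf d (c - 1) = 1 / 2 := by
      clear e1 e2 e3 hp hq hX hX2 ha h1 h2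
      rcases hd with rfl | rfl <;> simp only [wf, wt] <;> split_ifs <;>
        first | (exfalso; omega) | norm_num
    rw [← mul_assoc (wt a _), ← mul_assoc (wt d _), h1, h2, h5, h6]
    rcases hbc with hbc | hbc | hbc
    · rw [wr_pos (y := X - 1) (by omega) e1 (by omega), wr_pos (y := -(X + 1)) (by omega) e2 (by omega)]
      have : wf b c = 1 := by simp only [wf]; rw [if_pos hbc, if_pos (by omega)]
      rw [this]; norm_num
    · have h4 : wr (-(X + 1)) (c - 1) b = 0 := by
        by_contra h; have := wr_ne h; omega
      rw [wr_pos (y := X - 1) (by omega) e1 (by omega), h4]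
      have : wf b c = 1 / 2 := by
        simp only [wf]; rw [if_neg (by omega), if_pos hbc, if_neg (by omega), if_pos (by omega)]
      rw [this]; norm_num
    · have h4 : wr (X - 1) (b - 1) c = 0 := by
        by_contra h; have := wr_ne h; omega
      rw [wr_pos (y := -(X + 1)) (by omega) e2 (by omega), h4]
      have : wf b c = 1 / 2 := by
        simp only [wf]
        rw [if_neg (by omega), if_neg (by omega), if_pos hbc, if_neg (by omega), if_pos (by omega)]
      rw [this]; norm_num
  simp only [wr, hp, e1, e2, e3, not_true_eq_false, if_false]
  clear e1 e2 e3 hp hq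
  have hc : c = -1 ∨ c = 0 ∨ c = 1 ∨ c = 2 ∨ c = 3 := by omega
  have hX' : X < -1 ∨ X = -1 ∨ X = 0 ∨ X = 1 ∨ 1 < X := by omega
  have hbc' : b = c ∨ b = c + 2 ∨ b = c - 2 := by omega
  clear hbc
  rcases hc with rfl | rfl | rfl | rfl | rfl <;> rcases hbc' with rfl | rfl | rfl <;>
   rcases ha with rfl | rfl <;> rcases hd with rfl | rfl <;>
   rcases hX' with hx | rfl | rfl | rfl | hx <;>
   first
   | (exfalso; omega)
   | (norm_num [wf, wt] <;> done)
   | (have q1 : ¬ (0 ≤ X) := by omega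
      have q2 : ¬ (0 < X) := by omega
      have q3 : ¬ (1 ≤ X) := by omega
      have q4 : ¬ (1 < X) := by omega
      have q5 : X < 0 := by omega
      have q6 : X < 1 := by omega
      have q7 : X < -1 := by omega
      have q8 : X ≤ 0 := by omega
      have q9 : X ≤ -1 := by omega
      have q0 : X + 1 ≤ 0 := by omega
      have r0 : X + 1 < 0 := by omega
      norm_num [wf, wt, *] <;> done)
   | (have q1 : (0 ≤ X) := by omega
      have q2 : (0 < X) := by omega
      have q3 : (1 ≤ X) := by omega
      have q4 : (1 < X) := by omega
      have q5 : ¬ X < 0 := by omega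
      have q6 : ¬ X < 1 := by omega
      have q7 : ¬ X < -1 := by omega
      have q8 : ¬ X ≤ 0 := by omega
      have q9 : ¬ X ≤ -1 := by omega
      have q0 : ¬ X + 1 ≤ 0 := by omega
      have r0 : ¬ X + 1 < 0 := by omega
      norm_num [wf, wt, *] <;> done)

lemma local_zero (a d : ℤ) :
    wt a (0 - 1) * (wf a (0 - 1) * (wr ((0:ℤ) - 1) (0 - 1) 0 * wr 0 0 d)) = 0 ∧
     wt d (0 - 1) * (wf d (0 - 1) * (wr (-((0:ℤ) + 1)) (0 - 1) 0 * wr (-0) 0 a)) = 0 := by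
  constructor <;> simp [wr]


/-- the profile agrees with the initial one outside a finite set -/
def CofA (l : ℤ → ℤ) : Prop := {i | l i ≠ aInit i}.Finite

/-- factor of the edge `i` in the visiting probability -/
noncomputable def wF (X : ℤ) (l : ℤ → ℤ) (i : ℤ) : ℝ :=
  if X ≤ i then wr i (l i) (l (i + 1)) else wr (-(i + 1)) (l i) (l (i - 1))

/-- the visiting probability of the state `(X, l)` -/
noncomputable def gW (X : ℤ) (l : ℤ → ℤ) : ℝ := wf (l (X - 1)) (l X) * ∏ᶠ i, wF X l i

/-- decrease the local time of the edge `i` -/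
def dec (l : ℤ → ℤ) (i : ℤ) : ℤ → ℤ := Function.update l i (l i - 1)

lemma dec_same (l : ℤ → ℤ) (i : ℤ) : dec l i i = l i - 1 := by simp [dec]
lemma dec_ne (l : ℤ → ℤ) {i j : ℤ} (h : j ≠ i) : dec l i j = l j := by simp [dec, h]

lemma CofA.dec {l : ℤ → ℤ} (h : CofA l) (i : ℤ) : CofA (dec l i) := by
  refine (Set.Finite.union h (Set.finite_singleton i)).subset ?_
  intro j hj
  by_cases hji : j = i
  · right; exact hji
  · left; simp only [Set.mem_ofPred_eq] at *; rwa [dec_ne l hji] at hj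

lemma aInit_nonneg {i : ℤ} (h : 0 ≤ i) : aInit i = if Even i then 0 else -1 := by
  simp [aInit, h]

lemma aInit_neg {i : ℤ} (h : i < 0) : aInit i = if Even i then -1 else 0 := by
  have h1 : ¬ (0 ≤ i) := by omega
  simp only [aInit, h1, if_false]
  rcases Int.even_or_odd i with h2 | h2
  · have : ¬ Even (-i - 1) := by rw [Int.even_iff] at *; omega
    simp [h2, this]
  · have h3 : Even (-i - 1) := by rw [Int.even_iff]; rw [Int.odd_iff] at h2; omega
    have h4 : ¬ Even i := by simpa using h2
    simp [h3, h4]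

lemma wF_init {X i : ℤ} (h : |X| + 2 < |i|) : wF X aInit i = 1 := by
  have hX := abs_le.1 (le_refl |X|)
  rcases le_or_gt 0 i with hi | hi
  · rw [abs_of_nonneg hi] at h
    have h1 : X ≤ i := by omega
    simp only [wF, h1, if_true]
    rw [aInit_nonneg hi, aInit_nonneg (by omega : 0 ≤ i + 1)]
    rcases Int.even_or_odd i with h2 | h2
    · have : ¬ Even (i + 1) := by rw [Int.even_iff] at *; omega
      simp [wr, h2, this, hi]
    · have h4 : ¬ Even i := by simpa using h2
      have h5 : Even (i + 1) := by rw [Int.even_iff] at *; omega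
      have h6 : ¬ Odd (-1 - i) := by rw [Int.odd_iff] at *; omega
      have h7 : 0 < i := by omega
      simp [wr, h4, h5, h6, h7]
  · rw [abs_of_neg hi] at h
    have h1 : ¬ X ≤ i := by omega
    simp only [wF, h1, if_false]
    rw [aInit_neg hi, aInit_neg (by omega : i - 1 < 0)]
    rcases Int.even_or_odd i with h2 | h2
    · have : ¬ Even (i - 1) := by rw [Int.even_iff] at *; omega
      have h6 : ¬ Odd (-1 - (-1 + -i)) := by rw [Int.odd_iff]; rw [Int.even_iff] at *; omega
      have h7 : i < -1 := by omega
      simp [wr, h2, this, h6, h7]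
    · have h4 : ¬ Even i := by simpa using h2
      have h5 : Even (i - 1) := by rw [Int.odd_iff] at *; rw [Int.even_iff]; omega
      have h6 : ¬ Odd (1 + i) := by rw [Int.odd_iff] at *; omega
      have h6 : Even (i + 1) := by rw [Int.odd_iff] at *; rw [Int.even_iff]; omega
      have h7 : i ≤ -1 := by omega
      simp [wr, h4, h5, h6, h7]

lemma wF_congr {X : ℤ} {l l' : ℤ → ℤ} {i : ℤ} (h0 : l i = l' i) (h1 : l (i + 1) = l' (i + 1))
    (h2 : l (i - 1) = l' (i - 1)) : wF X l i = wF X l' i := by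
  simp [wF, h0, h1, h2]

lemma finite_mulSupport_wF (X : ℤ) {l : ℤ → ℤ} (h : CofA l) :
    (Function.mulSupport (wF X l)).Finite := by
  have hf : ((Set.Icc (-(|X| + 2)) (|X| + 2)) ∪ {i | l i ≠ aInit i} ∪
    ((fun i => i + 1) '' {i | l i ≠ aInit i}) ∪ ((fun i => i - 1) '' {i | l i ≠ aInit i})).Finite :=
    (((Set.finite_Icc _ _).union h).union (h.image _)).union (h.image _)
  refine hf.subset ?_
  intro i hi
  by_contra hc
  simp only [Set.mem_union, not_or, Set.mem_image, Set.mem_ofPred_eq, not_exists, not_and] at hc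
  obtain ⟨⟨⟨h1, h2⟩, h3⟩, h4⟩ := hc
  apply hi
  rw [wF_congr (l' := aInit) (by tauto)
    (by by_contra hh; exact h4 (i + 1) hh (by ring)) (by by_contra hh; exact h3 (i - 1) hh (by ring))]
  apply wF_init
  by_contra hh
  apply h1
  rw [Set.mem_Icc, ← abs_le]
  omega

lemma finprod_split (F : ℤ → ℝ) (S : Finset ℤ) (h : (Function.mulSupport F).Finite) :
    ∏ᶠ i, F i = (∏ i ∈ S, F i) * ∏ᶠ i, (if i ∈ S then 1 else F i) := by
  have h1 : ∏ᶠ i, F i = ∏ᶠ i, ((if i ∈ S then F i else 1) * (if i ∈ S then 1 else F i)) := by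
    congr 1; ext i; split_ifs <;> simp
  rw [h1, finprod_mul_distrib]
  · congr 1
    rw [finprod_eq_prod_of_mulSupport_subset (s := S)]
    · exact Finset.prod_congr rfl (fun i hi => by simp [hi])
    · intro i hi
      by_contra hc
      apply hi
      simp only [Finset.mem_coe] at hc
      simp [hc]
  · refine h.subset ?_
    intro i hi hF
    apply hi
    simp [hF]
  · refine h.subset ?_
    intro i hi hF
    apply hi
    simp [hF]

lemma gW_split (X : ℤ) {l : ℤ → ℤ} (h : CofA l) :
    gW X l = wf (l (X - 1)) (l X) * (wr (-X) (l (X - 1)) (l (X - 2)) * wr X (l X) (l (X + 1))) *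
      ∏ᶠ i, (if i ∈ ({X - 1, X} : Finset ℤ) then 1 else wF X l i) := by
  unfold gW
  rw [finprod_split _ {X - 1, X} (finite_mulSupport_wF X h),
    Finset.prod_pair (by omega)]
  have h1 : wF X l (X - 1) = wr (-X) (l (X - 1)) (l (X - 2)) := by
    simp only [wF]; rw [if_neg (by omega)]; congr 2 <;> ring
  have h2 : wF X l X = wr X (l X) (l (X + 1)) := by
    simp [wF]
  rw [h1, h2]; ring

lemma gW_split_left (X : ℤ) {l : ℤ → ℤ} (h : CofA l) :
    gW (X - 1) (dec l (X - 1)) = wf (l (X - 2)) (l (X - 1) - 1) *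
      (wr (X - 1) (l (X - 1) - 1) (l X) * wr X (l X) (l (X + 1))) *
      ∏ᶠ i, (if i ∈ ({X - 1, X} : Finset ℤ) then 1 else wF X l i) := by
  unfold gW
  rw [finprod_split _ {X - 1, X} (finite_mulSupport_wF (X - 1) (h.dec (X - 1))),
    Finset.prod_pair (by omega)]
  have h1 : wF (X - 1) (dec l (X - 1)) (X - 1) = wr (X - 1) (l (X - 1) - 1) (l X) := by
    simp only [wF]; rw [if_pos (by omega), dec_same, dec_ne _ (by omega)]; congr 2; ring
  have h2 : wF (X - 1) (dec l (X - 1)) X = wr X (l X) (l (X + 1)) := by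
    simp only [wF]; rw [if_pos (by omega), dec_ne _ (by omega), dec_ne _ (by omega)]
  have h3 : ∀ i, (if i ∈ ({X - 1, X} : Finset ℤ) then 1 else wF (X - 1) (dec l (X - 1)) i) =
      (if i ∈ ({X - 1, X} : Finset ℤ) then 1 else wF X l i) := by
    intro i
    split_ifs with hi
    · rfl
    · simp only [Finset.mem_insert, Finset.mem_singleton, not_or] at hi
      simp only [wF]
      by_cases hXi : X ≤ i
      · rw [if_pos (by omega), if_pos hXi, dec_ne _ (by omega), dec_ne _ (by omega)]
      · rw [if_neg (by omega), if_neg hXi, dec_ne _ (by omega), dec_ne _ (by omega)]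
  rw [h1, h2, dec_same, dec_ne _ (by omega)]
  simp_rw [h3]
  rw [show X - 1 - 1 = X - 2 by ring]; ring

lemma gW_split_right (X : ℤ) {l : ℤ → ℤ} (h : CofA l) :
    gW (X + 1) (dec l X) = wf (l (X + 1)) (l X - 1) *
      (wr (-(X + 1)) (l X - 1) (l (X - 1)) * wr (-X) (l (X - 1)) (l (X - 2))) *
      ∏ᶠ i, (if i ∈ ({X - 1, X} : Finset ℤ) then 1 else wF X l i) := by
  unfold gW
  rw [finprod_split _ {X - 1, X} (finite_mulSupport_wF (X + 1) (h.dec X)),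
    Finset.prod_pair (by omega)]
  have h1 : wF (X + 1) (dec l X) (X - 1) = wr (-X) (l (X - 1)) (l (X - 2)) := by
    simp only [wF]; rw [if_neg (by omega), dec_ne _ (by omega), dec_ne _ (by omega)]
    congr 2 <;> ring
  have h2 : wF (X + 1) (dec l X) X = wr (-(X + 1)) (l X - 1) (l (X - 1)) := by
    simp only [wF]; rw [if_neg (by omega), dec_same, dec_ne _ (by omega)]
  have h3 : ∀ i, (if i ∈ ({X - 1, X} : Finset ℤ) then 1 else wF (X + 1) (dec l X) i) =
      (if i ∈ ({X - 1, X} : Finset ℤ) then 1 else wF X l i) := by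
    intro i
    split_ifs with hi
    · rfl
    · simp only [Finset.mem_insert, Finset.mem_singleton, not_or] at hi
      simp only [wF]
      by_cases hXi : X ≤ i
      · rw [if_pos (by omega), if_pos hXi, dec_ne _ (by omega), dec_ne _ (by omega)]
      · rw [if_neg (by omega), if_neg hXi, dec_ne _ (by omega), dec_ne _ (by omega)]
  rw [h1, h2, show X + 1 - 1 = X by ring, dec_same, dec_ne _ (by omega), wf_symm]
  simp_rw [h3]
  ring

lemma gW_rec (X : ℤ) {l : ℤ → ℤ} (h : CofA l) (h0 : ¬ (X = 0 ∧ l (X - 1) = 0 ∧ l X = 0)) :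
    wt (l (X - 2)) (l (X - 1) - 1) * gW (X - 1) (dec l (X - 1)) +
      wt (l (X + 1)) (l X - 1) * gW (X + 1) (dec l X) = gW X l := by
  rw [gW_split_left X h, gW_split_right X h, gW_split X h,
    ← local_identity X (l (X - 2)) (l (X - 1)) (l X) (l (X + 1)) h0]
  ring

lemma gW_rec_zero (X : ℤ) {l : ℤ → ℤ} (h : CofA l) (h0 : X = 0 ∧ l (X - 1) = 0 ∧ l X = 0) :
    wt (l (X - 2)) (l (X - 1) - 1) * gW (X - 1) (dec l (X - 1)) +
      wt (l (X + 1)) (l X - 1) * gW (X + 1) (dec l X) = 0 := by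
  obtain ⟨rfl, h1, h2⟩ := h0
  rw [gW_split_left 0 h, gW_split_right 0 h, h1, h2]
  have h3 := local_zero (l (0 - 2)) (l (0 + 1))
  have h4 := h3.1
  have h5 := h3.2
  linear_combination (∏ᶠ i, (if i ∈ ({0 - 1, 0} : Finset ℤ) then 1 else wF 0 l i)) * (h4 + h5)

lemma gW_nonneg (X : ℤ) (l : ℤ → ℤ) : 0 ≤ gW X l := by
  refine mul_nonneg (wf_nonneg _ _) (finprod_nonneg ?_)
  intro i; unfold wF; split_ifs <;> exact wr_nonneg _ _ _

lemma wF_ne_zero {X : ℤ} {l : ℤ → ℤ} (h : CofA l) (hg : gW X l ≠ 0) (i : ℤ) : wF X l i ≠ 0 := by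
  have h1 := right_ne_zero_of_mul hg
  rw [finprod_split _ {i} (finite_mulSupport_wF X h)] at h1
  have h2 := left_ne_zero_of_mul h1
  simpa using h2

/-- the event only depends on the coins with index `< j` -/
def DepOn (j : ℕ) (S : Set (ℕ → Bool)) : Prop :=
  ∀ ω η : ℕ → Bool, (∀ i < j, ω i = η i) → ω ∈ S → η ∈ S

/-- extension of a finite word -/
def extW {j : ℕ} (v : Fin j → Bool) (i : ℕ) : Bool := if h : i < j then v ⟨i, h⟩ else false

open Classical in
lemma dep_eq {j : ℕ} {S : Set (ℕ → Bool)} (h : DepOn j S) :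
    S = ⋃ v ∈ (Finset.univ.filter (fun v : Fin j → Bool => extW v ∈ S)),
      {ω | ∀ i ∈ Finset.range j, ω i = extW v i} := by
  ext ω
  simp only [Finset.mem_filter, Finset.mem_univ, true_and, Set.mem_iUnion, Set.mem_ofPred_eq,
    Finset.mem_range, exists_prop]
  constructor
  · intro hω
    refine ⟨fun i => ω i, h _ _ ?_ hω, ?_⟩ <;>
    · intro i hi; simp [extW, hi]
  · rintro ⟨v, hv, hv2⟩
    exact h _ _ (fun i hi => (hv2 i hi).symm) hv

lemma meas_cyl (s : Finset ℕ) (b : ℕ → Bool) : MeasurableSet {ω : ℕ → Bool | ∀ j ∈ s, ω j = b j} := by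
  have : {ω : ℕ → Bool | ∀ j ∈ s, ω j = b j} = ⋂ j ∈ s, (fun ω => ω j) ⁻¹' {b j} := by
    ext ω; simp
  rw [this]
  exact Finset.measurableSet_biInter _ (fun j _ => measurable_pi_apply j (measurableSet_singleton _))

lemma dep_meas {j : ℕ} {S : Set (ℕ → Bool)} (h : DepOn j S) : MeasurableSet S := by
  classical
  rw [dep_eq h]
  exact Finset.measurableSet_biUnion _ (fun v _ => meas_cyl _ _)

lemma meas_coin (j : ℕ) (b : Bool) : MeasurableSet {ω : ℕ → Bool | ω j = b} :=
  measurableSet_eq_fun (measurable_pi_apply j) measurable_const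

lemma dep_half {P : Measure (ℕ → Bool)}
    (hP : ∀ (s : Finset ℕ) (b : ℕ → Bool),
      P {ω | ∀ j ∈ s, ω j = b j} = (1 / 2 : ENNReal) ^ s.card)
    {j : ℕ} {S : Set (ℕ → Bool)} (h : DepOn j S) (b : Bool) :
    P (S ∩ {ω | ω j = b}) = (1 / 2) * P S := by
  classical
  set T := Finset.univ.filter (fun v : Fin j → Bool => extW v ∈ S) with hT
  have hdis : ∀ v ∈ T, ∀ w ∈ T, v ≠ w → Disjoint {ω : ℕ → Bool | ∀ i ∈ Finset.range j, ω i = extW v i}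
      {ω | ∀ i ∈ Finset.range j, ω i = extW w i} := by
    intro v _ w _ hvw
    rw [Set.disjoint_left]
    intro ω h1 h2
    apply hvw
    ext i
    have h3 := h1 i (by simp)
    have h4 := h2 i (by simp)
    rw [h3] at h4
    simpa [extW] using h4
  have e1 : P S = ∑ v ∈ T, (1 / 2 : ENNReal) ^ j := by
    conv_lhs => rw [dep_eq h]
    rw [measure_biUnion_finset hdis (fun v _ => meas_cyl _ _)]
    refine Finset.sum_congr rfl (fun v _ => ?_)
    rw [hP]; simp
  have e2 : S ∩ {ω | ω j = b} = ⋃ v ∈ T, {ω | ∀ i ∈ Finset.range (j+1), ω i = Function.update (extW v) j b i} := by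
    conv_lhs => rw [dep_eq h]
    ext ω
    simp only [Set.mem_inter_iff, Set.mem_iUnion, Set.mem_ofPred_eq, exists_prop]
    constructor
    · rintro ⟨⟨v, hv, h1⟩, h2⟩
      refine ⟨v, hv, fun i hi => ?_⟩
      by_cases hij : i = j
      · subst hij; simpa using h2
      · rw [Function.update_of_ne hij]
        exact h1 i (by simp at hi ⊢; omega)
    · rintro ⟨v, hv, h1⟩
      refine ⟨⟨v, hv, fun i hi => ?_⟩, ?_⟩
      · have := h1 i (by simp at hi ⊢; omega)
        rwa [Function.update_of_ne (by simp at hi; omega)] at this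
      · simpa using h1 j (by simp)
  rw [e2, measure_biUnion_finset, e1, Finset.mul_sum]
  · refine Finset.sum_congr rfl (fun v _ => ?_)
    rw [hP]; simp [pow_succ, mul_comm]
  · intro v hv w hw hvw
    refine (hdis v hv w hw hvw).mono ?_ ?_ <;>
    · intro ω h1 i hi
      have := h1 i (by simp at hi ⊢; omega)
      rwa [Function.update_of_ne (by simp at hi; omega)] at this
  · exact fun v _ => meas_cyl _ _

lemma coins_le_succ (e : ℕ → ℤ) (n : ℕ) : (srw e n).coins ≤ (srw e (n + 1)).coins := by
  simp only [srw, srwStep]; split_ifs <;> omega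

lemma coins_le (e : ℕ → ℤ) (n : ℕ) : (srw e n).coins ≤ n := by
  induction n with
  | zero => simp [srw]
  | succ n ih => simp only [srw, srwStep]; split_ifs <;> omega

lemma srw_det (e e' : ℕ → ℤ) (n : ℕ) (h : ∀ j < (srw e n).coins, e j = e' j) :
    srw e' n = srw e n := by
  induction n with
  | zero => rfl
  | succ n ih =>
    have h1 := ih (fun j hj => h j (lt_of_lt_of_le hj (coins_le_succ e n)))
    show srwStep e' (srw e' n) = srwStep e (srw e n)
    rw [h1]
    by_cases heq : (srw e n).loc ((srw e n).pos - 1) = (srw e n).loc (srw e n).pos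
    · have h2 : e (srw e n).coins = e' (srw e n).coins := by
        apply h
        simp [srw, srwStep, heq]
      simp [srwStep, h2]
    · unfold srwStep
      have h3 : (srw e n).loc (srw e n).pos < (srw e n).loc ((srw e n).pos - 1) ∨
        (srw e n).loc ((srw e n).pos - 1) < (srw e n).loc (srw e n).pos := by omega
      rcases h3 with h3 | h3
      · simp [h3]
      · have h4 : ¬ (srw e n).loc (srw e n).pos < (srw e n).loc ((srw e n).pos - 1) := by omega
        simp [h3, h4]

/-- the event that the state after `n` steps is `(X, l)` -/
def Vis (n : ℕ) (X : ℤ) (l : ℤ → ℤ) : Set (ℕ → Bool) :=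
  {ω | (srw (coin ω) n).pos = X ∧ (srw (coin ω) n).loc = l}

lemma coin_congr {ω ω' : ℕ → Bool} {j : ℕ} (h : ω j = ω' j) : coin ω j = coin ω' j := by
  simp [coin, h]

lemma Vis_dep (n : ℕ) (X : ℤ) (l : ℤ → ℤ) : DepOn n (Vis n X l) := by
  intro ω ω' h hω
  have := srw_det (coin ω) (coin ω') n
    (fun j hj => coin_congr (h j (lt_of_lt_of_le hj (coins_le _ _))))
  simpa [Vis, this] using hω

lemma Vis_coins_dep (n j : ℕ) (X : ℤ) (l : ℤ → ℤ) :
    DepOn j (Vis n X l ∩ {ω | (srw (coin ω) n).coins = j}) := by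
  rintro ω ω' h ⟨hω, hc⟩
  simp only [Set.mem_ofPred_eq] at hc
  have := srw_det (coin ω) (coin ω') n
    (fun i hi => coin_congr (h i (by omega)))
  refine ⟨by simpa [Vis, this] using hω, by simpa [this] using hc⟩

lemma Vis_meas (n : ℕ) (X : ℤ) (l : ℤ → ℤ) : MeasurableSet (Vis n X l) := dep_meas (Vis_dep n X l)

lemma coin_used_dep (n : ℕ) (X : ℤ) (l : ℤ → ℤ) (b : Bool) :
    MeasurableSet (Vis n X l ∩ {ω | ω (srw (coin ω) n).coins = b}) := by
  apply dep_meas (j := n + 1)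
  rintro ω ω' h ⟨hω, hc⟩
  have := srw_det (coin ω) (coin ω') n
    (fun j hj => coin_congr (h j (lt_of_lt_of_le hj ((coins_le _ _).trans (by omega)))))
  refine ⟨by simpa [Vis, this] using hω, ?_⟩
  simp only [Set.mem_ofPred_eq] at hc ⊢
  rw [this, ← h _ (by have := coins_le (coin ω) n; omega), hc]

lemma Vis_half {P : Measure (ℕ → Bool)}
    (hP : ∀ (s : Finset ℕ) (b : ℕ → Bool),
      P {ω | ∀ j ∈ s, ω j = b j} = (1 / 2 : ENNReal) ^ s.card)
    (n : ℕ) (X : ℤ) (l : ℤ → ℤ) (b : Bool) :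
    P (Vis n X l ∩ {ω | ω (srw (coin ω) n).coins = b}) = (1 / 2) * P (Vis n X l) := by
  have hd : ∀ S : Set (ℕ → Bool), S = ⋃ j ∈ Finset.range (n + 1), (S ∩ {ω | (srw (coin ω) n).coins = j}) := by
    intro S
    ext ω
    have := coins_le (coin ω) n
    simp; intro _; omega
  have hdis : ∀ S : Set (ℕ → Bool), ∀ j ∈ Finset.range (n + 1), ∀ k ∈ Finset.range (n + 1), j ≠ k →
      Disjoint (S ∩ {ω | (srw (coin ω) n).coins = j}) (S ∩ {ω | (srw (coin ω) n).coins = k}) := by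
    intro S j _ k _ hjk
    rw [Set.disjoint_left]
    rintro ω ⟨_, h1⟩ ⟨_, h2⟩
    exact hjk (h1.symm.trans h2)
  have e2 : ∀ j, (Vis n X l ∩ {ω | ω (srw (coin ω) n).coins = b}) ∩ {ω | (srw (coin ω) n).coins = j}
      = (Vis n X l ∩ {ω | (srw (coin ω) n).coins = j}) ∩ {ω | ω j = b} := by
    intro j
    ext ω
    simp only [Set.mem_inter_iff, Set.mem_ofPred_eq]
    constructor
    · rintro ⟨⟨h1, h2⟩, rfl⟩; exact ⟨⟨h1, rfl⟩, h2⟩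
    · rintro ⟨⟨h1, rfl⟩, h2⟩; exact ⟨⟨h1, h2⟩, rfl⟩
  have hm := fun j => dep_meas (Vis_coins_dep n j X l)
  rw [hd (Vis n X l ∩ {ω | ω (srw (coin ω) n).coins = b}),
    measure_biUnion_finset (hdis _) (fun j _ => by rw [e2]; exact (hm j).inter (meas_coin j b))]
  conv_rhs => rw [hd (Vis n X l), measure_biUnion_finset (hdis _) (fun j _ => hm j), Finset.mul_sum]
  refine Finset.sum_congr rfl (fun j _ => ?_)
  rw [e2, dep_half hP (Vis_coins_dep n j X l)]

lemma step_iff (n : ℕ) (X : ℤ) (l : ℤ → ℤ) (ω : ℕ → Bool) :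
    ω ∈ Vis (n + 1) X l ↔
      (ω ∈ Vis n (X - 1) (dec l (X - 1)) ∧ (l (X - 1) - 1 < l (X - 2) ∨
        (l (X - 2) = l (X - 1) - 1 ∧ ω (srw (coin ω) n).coins = true))) ∨
      (ω ∈ Vis n (X + 1) (dec l X) ∧ (l X - 1 < l (X + 1) ∨
        (l (X + 1) = l X - 1 ∧ ω (srw (coin ω) n).coins = false))) := by
  simp only [Vis, Set.mem_ofPred_eq, srw]
  generalize srw (coin ω) n = s
  obtain ⟨Y, m, c⟩ := s
  simp only [srwStep]
  constructor
  · rintro ⟨h1, h2⟩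
    have key : ∀ i, l i = if i = min Y X then m i + 1 else m i := by
      intro i; rw [← h2, ← h1]
    have hmove : (X = Y + 1 ∧ (m Y < m (Y - 1) ∨ (m (Y - 1) = m Y ∧ ω c = true))) ∨
        (X = Y - 1 ∧ (m (Y - 1) < m Y ∨ (m Y = m (Y - 1) ∧ ω c = false))) := by
      simp only [coin] at h1
      split_ifs at h1 with h3 h4 h5
      · left; exact ⟨h1.symm, Or.inl h3⟩
      · right; exact ⟨h1.symm, Or.inl h4⟩
      · left; exact ⟨h1.symm, Or.inr ⟨by omega, h5⟩⟩
      · right; exact ⟨by omega, Or.inr ⟨by omega, by simpa using h5⟩⟩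
    rcases hmove with ⟨hX, hm⟩ | ⟨hX, hm⟩
    · left
      have hl : m = dec l (X - 1) := by
        funext i
        by_cases hi : i = X - 1
        · subst hi; rw [dec_same, key, if_pos (by omega)]; ring
        · rw [dec_ne _ hi, key, if_neg (by omega)]
      refine ⟨⟨by omega, hl⟩, ?_⟩
      rw [key (X - 1), key (X - 2), if_pos (by omega), if_neg (by omega)]
      have e1 : m (X - 1) = m Y := by congr 1; omega
      have e2 : m (X - 2) = m (Y - 1) := by congr 1; omega
      rw [e1, e2]
      rcases hm with hm | hm
      · left; omega
      · right; exact ⟨by omega, hm.2⟩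
    · right
      have hl : m = dec l X := by
        funext i
        by_cases hi : i = X
        · subst hi; rw [dec_same, key, if_pos (by omega)]; ring
        · rw [dec_ne _ hi, key, if_neg (by omega)]
      refine ⟨⟨by omega, hl⟩, ?_⟩
      rw [key X, key (X + 1), if_pos (by omega), if_neg (by omega)]
      have e1 : m X = m (Y - 1) := by congr 1
      have e2 : m (X + 1) = m Y := by congr 1; omega
      rw [e1, e2]
      rcases hm with hm | hm
      · left; omega
      · right; exact ⟨by omega, hm.2⟩
  · rintro (⟨⟨rfl, rfl⟩, hm⟩ | ⟨⟨rfl, rfl⟩, hm⟩)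
    · have e1 : dec l (X - 1) (X - 1 - 1) = l (X - 2) := by
        rw [dec_ne _ (by omega)]; congr 1; ring
      rw [e1, dec_same]
      have hn : (if l (X - 1) - 1 < l (X - 2) then X - 1 + 1
        else if l (X - 2) < l (X - 1) - 1 then X - 1 - 1 else X - 1 + coin ω c) = X := by
        rcases hm with hm | ⟨hm, hb⟩
        · rw [if_pos hm]; ring
        · rw [if_neg (by omega), if_neg (by omega)]; simp [coin, hb]
      rw [hn]
      refine ⟨rfl, ?_⟩
      funext i
      by_cases hi : i = X - 1
      · subst hi; rw [if_pos (by omega), dec_same]; ring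
      · rw [if_neg (by omega), dec_ne _ hi]
    · have e1 : dec l X (X + 1 - 1) = l X - 1 := by
        rw [show X + 1 - 1 = X by ring, dec_same]
      rw [e1, dec_ne _ (by omega : X + 1 ≠ X)]
      have hn : (if l (X + 1) < l X - 1 then X + 1 + 1
        else if l X - 1 < l (X + 1) then X + 1 - 1 else X + 1 + coin ω c) = X := by
        rcases hm with hm | ⟨hm, hb⟩
        · rw [if_neg (by omega), if_pos hm]; ring
        · rw [if_neg (by omega), if_neg (by omega)]; simp [coin, hb]
      rw [hn]
      refine ⟨rfl, ?_⟩
      funext i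
      by_cases hi : i = X
      · subst hi; rw [if_pos (by omega), dec_same]; ring
      · rw [if_neg (by omega), dec_ne _ hi]

lemma Vis_move {P : Measure (ℕ → Bool)}
    (hP : ∀ (s : Finset ℕ) (b : ℕ → Bool),
      P {ω | ∀ j ∈ s, ω j = b j} = (1 / 2 : ENNReal) ^ s.card)
    (n : ℕ) (X : ℤ) (l : ℤ → ℤ) (b : Bool) (u v : ℤ) :
    P.real {ω | ω ∈ Vis n X l ∧ (v < u ∨ (u = v ∧ ω (srw (coin ω) n).coins = b))}
      = wt u v * P.real (Vis n X l) := by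
  unfold wt
  split_ifs with h1 h2
  · simp [h1]
  · subst h2
    have := Vis_half hP n X l b
    simp only [lt_irrefl, false_or, true_and]
    change (P (Vis n X l ∩ {ω | ω (srw (coin ω) n).coins = b})).toReal = _
    rw [this]; simp [Measure.real]
  · simp [h1, h2]

lemma Vis_move_meas (n : ℕ) (X : ℤ) (l : ℤ → ℤ) (b : Bool) (u v : ℤ) :
    MeasurableSet {ω | ω ∈ Vis n X l ∧ (v < u ∨ (u = v ∧ ω (srw (coin ω) n).coins = b))} := by
  by_cases h1 : v < u
  · simpa [h1] using Vis_meas n X l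
  · by_cases h2 : u = v
    · have := coin_used_dep n X l b
      convert this using 1
      ext ω
      simp [h2]
    · simp [h1, h2]

lemma Vis_rec {P : Measure (ℕ → Bool)} [IsProbabilityMeasure P]
    (hP : ∀ (s : Finset ℕ) (b : ℕ → Bool),
      P {ω | ∀ j ∈ s, ω j = b j} = (1 / 2 : ENNReal) ^ s.card)
    (n : ℕ) (X : ℤ) (l : ℤ → ℤ) :
    P.real (Vis (n + 1) X l) =
      wt (l (X - 2)) (l (X - 1) - 1) * P.real (Vis n (X - 1) (dec l (X - 1))) +
      wt (l (X + 1)) (l X - 1) * P.real (Vis n (X + 1) (dec l X)) := by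
  rw [← Vis_move hP n _ _ true, ← Vis_move hP n _ _ false, ← measureReal_union]
  · congr 1
    ext ω
    rw [step_iff]; rfl
  · rw [Set.disjoint_left]
    rintro ω ⟨⟨h1, _⟩, _⟩ ⟨⟨h2, _⟩, _⟩
    omega
  · exact Vis_move_meas _ _ _ _ _ _

/-- number of steps encoded by a profile -/
noncomputable def tot (l : ℤ → ℤ) : ℤ := ∑ᶠ i, (l i - aInit i)

lemma CofA.supp {l : ℤ → ℤ} (h : CofA l) : (Function.support (fun i => l i - aInit i)).Finite := by
  refine h.subset ?_
  intro i hi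
  simp only [Function.mem_support] at hi
  simp only [Set.mem_ofPred_eq]; omega

lemma tot_dec {l : ℤ → ℤ} (h : CofA l) (i : ℤ) : tot (dec l i) = tot l - 1 := by
  have h1 := (h.dec i).supp
  have h2 : (Function.support (fun j => if j = i then (1:ℤ) else 0)).Finite :=
    (Set.finite_singleton i).subset (by intro j; simp)
  have h3 : ∑ᶠ j, (if j = i then (1:ℤ) else 0) = 1 := by
    rw [finsum_eq_single _ i]
    · simp
    · intro j hj; simp [hj]
  have h4 : tot l = tot (dec l i) + 1 := by
    unfold tot
    rw [← h3, ← finsum_add_distrib h1 h2]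
    congr 1; funext j
    by_cases hj : j = i
    · subst hj; rw [dec_same]; simp; ring
    · rw [dec_ne _ hj]; simp [hj]
  omega

lemma CofA_init : CofA aInit := by simp [CofA]

/-- pointwise lower bound of admissible profiles -/
lemma gW_lower {X : ℤ} {l : ℤ → ℤ} (h : CofA l) (hg : gW X l ≠ 0) (i : ℤ) : aInit i ≤ l i := by
  have h1 := wF_ne_zero h hg i
  unfold wF at h1
  rcases le_or_gt 0 i with hi | hi
  · rw [aInit_nonneg hi]
    split_ifs at h1 ⊢ with h3 h4 h4 <;> have := wr_ne h1 <;> rw [Int.even_iff] at * <;> omega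
  · rw [aInit_neg hi]
    split_ifs at h1 ⊢ with h3 h4 h4 <;> have := wr_ne h1 <;> rw [Int.even_iff] at * <;> omega

lemma eq_init_of_tot {l : ℤ → ℤ} (h : CofA l) (hl : ∀ i, aInit i ≤ l i) (ht : tot l = 0) :
    l = aInit := by
  funext i
  by_contra hne
  have h1 : 0 < l i - aInit i := by have := hl i; omega
  have := finsum_pos (f := fun i => l i - aInit i) (fun j => by have := hl j; simpa using this) ⟨i, h1⟩ h.supp
  unfold tot at ht
  omega

lemma init_pos {X : ℤ} (hg : gW X aInit ≠ 0) : X = 0 := by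
  have h1 := wf_ne (left_ne_zero_of_mul hg)
  rcases lt_trichotomy X 0 with hX | hX | hX
  · rw [aInit_neg hX, aInit_neg (by omega : X - 1 < 0)] at h1
    have hp : (Even X ∧ ¬ Even (X - 1)) ∨ (¬ Even X ∧ Even (X - 1)) := by
      simp only [Int.even_iff]; omega
    rcases hp with ⟨h2, h3⟩ | ⟨h2, h3⟩
    · rw [if_pos h2, if_neg h3] at h1; omega
    · rw [if_neg h2, if_pos h3] at h1; omega
  · exact hX
  · rw [aInit_nonneg (by omega : 0 ≤ X), aInit_nonneg (by omega : 0 ≤ X - 1)] at h1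
    have hp : (Even X ∧ ¬ Even (X - 1)) ∨ (¬ Even X ∧ Even (X - 1)) := by
      simp only [Int.even_iff]; omega
    rcases hp with ⟨h2, h3⟩ | ⟨h2, h3⟩
    · rw [if_pos h2, if_neg h3] at h1; omega
    · rw [if_neg h2, if_pos h3] at h1; omega

lemma gW_init : gW 0 aInit = 1 := by
  unfold gW
  have h1 : ∀ i, wF 0 aInit i = 1 := by
    intro i
    rcases le_or_gt 0 i with hi | hi
    · simp only [wF, hi, if_true]
      rw [aInit_nonneg hi, aInit_nonneg (by omega : 0 ≤ i + 1)]
      unfold wr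
      split_ifs <;> rw [Int.even_iff] at * <;> omega
    · have h1 : ¬ 0 ≤ i := by omega
      simp only [wF, h1, if_false]
      rw [aInit_neg hi, aInit_neg (by omega : i - 1 < 0)]
      unfold wr
      split_ifs <;> rw [Int.even_iff] at * <;> omega
  simp only [h1, finprod_one]
  have h2 : aInit (0 - 1) = 0 := by decide
  have h3 : aInit 0 = 0 := by decide
  rw [h2, h3]; simp [wf]

lemma gW_zero_case {l : ℤ → ℤ} (h : CofA l) (hg : gW 0 l ≠ 0) (h1 : l (0 - 1) = 0) (h2 : l 0 = 0) :
    l = aInit := by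
  have hr : ∀ n : ℕ, l n = aInit n := by
    intro n
    induction n with
    | zero => rw [Nat.cast_zero, h2]; decide
    | succ n ih =>
      have h3 := wF_ne_zero h hg n
      simp only [wF] at h3
      rw [if_pos (by omega), ih] at h3
      have h4 := wr_ne h3
      push_cast
      rw [aInit_nonneg (by omega)] at *
      split_ifs at * <;> rw [Int.even_iff] at * <;> omega
  have hl : ∀ n : ℕ, l (-1 - n) = aInit (-1 - n) := by
    intro n
    induction n with
    | zero => simp at h1; simp [h1]; decide
    | succ n ih =>
      have h3 := wF_ne_zero h hg (-1 - n)
      simp only [wF] at h3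
      rw [if_neg (by omega), ih] at h3
      have h4 := wr_ne h3
      push_cast
      rw [show (-1 - (n : ℤ) - 1) = -1 - (n + 1) by ring] at h4
      rw [aInit_neg (by omega)] at *
      split_ifs at * <;> rw [Int.even_iff] at * <;> omega
  funext i
  rcases le_or_gt 0 i with hi | hi
  · obtain ⟨n, rfl⟩ := Int.eq_ofNat_of_zero_le hi
    exact hr n
  · obtain ⟨n, hn⟩ := Int.eq_ofNat_of_zero_le (by omega : 0 ≤ -1 - i)
    have : i = -1 - n := by omega
    rw [this]; exact hl n

/-- the exact law of the walk -/
theorem Vis_law {P : Measure (ℕ → Bool)} [IsProbabilityMeasure P]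
    (hP : ∀ (s : Finset ℕ) (b : ℕ → Bool),
      P {ω | ∀ j ∈ s, ω j = b j} = (1 / 2 : ENNReal) ^ s.card)
    (n : ℕ) (X : ℤ) {l : ℤ → ℤ} (h : CofA l) :
    P.real (Vis n X l) = if tot l = n then gW X l else 0 := by
  induction n generalizing X l with
  | zero =>
    by_cases hi : X = 0 ∧ l = aInit
    · obtain ⟨rfl, rfl⟩ := hi
      have : Vis 0 0 aInit = Set.univ := by ext; simp [Vis, srw]
      rw [this, gW_init]; simp [tot]
    · have h1 : Vis 0 X l = ∅ := by
        ext ω; simp only [Vis, srw, Set.mem_ofPred_eq, Set.mem_empty_iff_false, iff_false]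
        rintro ⟨rfl, rfl⟩; exact hi ⟨rfl, rfl⟩
      rw [h1]
      split_ifs with ht
      · by_contra hg
        have hg : gW X l ≠ 0 := fun h => hg (by simp [h])
        have h2 := eq_init_of_tot h (gW_lower h hg) (by exact_mod_cast ht)
        subst h2
        exact hi ⟨init_pos hg, rfl⟩
      · simp
  | succ n ih =>
    rw [Vis_rec hP, ih _ (h.dec _), ih _ (h.dec _), tot_dec h, tot_dec h]
    by_cases ht : tot l = n + 1
    · have e1 : tot l - 1 = n := by omega
      rw [if_pos e1, if_pos e1, if_pos (by push_cast; exact ht)]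
      by_cases h0 : X = 0 ∧ l (X - 1) = 0 ∧ l X = 0
      · rw [gW_rec_zero X h h0]
        by_contra hg
        obtain ⟨rfl, h1, h2⟩ := h0
        have := gW_zero_case h (Ne.symm hg) h1 h2
        subst this
        simp [tot] at ht; omega
      · exact gW_rec X h h0
    · rw [if_neg (by omega), if_neg (by omega), if_neg (by push_cast; exact ht)]; ring

lemma srw_CofA (e : ℕ → ℤ) (n : ℕ) : CofA (srw e n).loc := by
  induction n with
  | zero => exact CofA_init
  | succ n ih =>
    refine (Set.Finite.union ih (Set.finite_singleton
      (min (srw e n).pos (srw e (n + 1)).pos))).subset ?_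
    intro j hj
    by_contra hc
    simp only [Set.mem_union, Set.mem_ofPred_eq, Set.mem_singleton_iff, not_or, not_not] at hc
    apply hj
    simp only [srw, srwStep] at hc ⊢
    rw [if_neg hc.2, hc.1]

/-- realised states have positive weight -/
theorem gW_real {P : Measure (ℕ → Bool)} [IsProbabilityMeasure P]
    (hP : ∀ (s : Finset ℕ) (b : ℕ → Bool),
      P {ω | ∀ j ∈ s, ω j = b j} = (1 / 2 : ENNReal) ^ s.card)
    (ω : ℕ → Bool) (n : ℕ) :
    gW (srw (coin ω) n).pos (srw (coin ω) n).loc ≠ 0 ∧ tot (srw (coin ω) n).loc = n := by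
  have h1 := Vis_law hP n (srw (coin ω) n).pos (srw_CofA (coin ω) n)
  have h2 : {ω' : ℕ → Bool | ∀ j ∈ Finset.range n, ω' j = ω j} ⊆
      Vis n (srw (coin ω) n).pos (srw (coin ω) n).loc := by
    intro ω' hω'
    exact Vis_dep n _ _ ω ω' (fun i hi => (hω' i (by simpa using hi)).symm) ⟨rfl, rfl⟩
  have h3 : 0 < P.real (Vis n (srw (coin ω) n).pos (srw (coin ω) n).loc) := by
    rw [measureReal_def, ENNReal.toReal_pos_iff]
    refine ⟨lt_of_lt_of_le ?_ (measure_mono h2), measure_lt_top _ _⟩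
    rw [hP]; exact ENNReal.pow_pos (by simp) _
  rw [h1] at h3
  split_ifs at h3 with h4
  · exact ⟨h3.ne', h4⟩
  · exact absurd h3 (lt_irrefl _)

/-- half sum of the profile -/
noncomputable def halfS (l : ℤ → ℤ) : ℤ := ∑ᶠ i, (l i + 1) / 2

lemma half_supp {l : ℤ → ℤ} (h : CofA l) : (Function.support (fun i => (l i + 1) / 2)).Finite := by
  refine h.subset ?_
  intro i hi h2
  apply hi
  show (l i + 1) / 2 = 0
  have h2 : l i = aInit i := h2
  rw [h2]
  have h3 : aInit i = 0 ∨ aInit i = -1 := by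
    unfold aInit; split_ifs <;> simp
  omega

lemma halfS_dec {l : ℤ → ℤ} (h : CofA l) (i : ℤ) :
    halfS l = halfS (dec l i) + ((l i + 1) / 2 - l i / 2) := by
  have h1 := half_supp (h.dec i)
  have h2 : (Function.support (fun j => if j = i then ((l i + 1) / 2 - l i / 2) else 0)).Finite :=
    (Set.finite_singleton i).subset (by
      intro j hj; by_contra hc; apply hj; simp only [Set.mem_singleton_iff] at hc; simp [hc])
  have h3 : ∑ᶠ j, (if j = i then ((l i + 1) / 2 - l i / 2) else 0) = (l i + 1) / 2 - l i / 2 := by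
    rw [finsum_eq_single _ i]
    · simp
    · intro j hj; simp [hj]
  unfold halfS
  rw [← h3, ← finsum_add_distrib h1 h2]
  congr 1; funext j
  by_cases hj : j = i
  · subst hj; rw [dec_same]; simp
  · rw [dec_ne _ hj]; simp [hj]

/-- number of coins encoded by a state -/
noncomputable def kap (X : ℤ) (l : ℤ → ℤ) : ℤ := halfS l + max (l (X - 1)) (l X) / 2

lemma halfS_init : halfS aInit = 0 := by
  unfold halfS
  have : ∀ i, (aInit i + 1) / 2 = 0 := by
    intro i
    have h3 : aInit i = 0 ∨ aInit i = -1 := by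
      unfold aInit; split_ifs <;> simp
    omega
  simp [this]


/-- the four neighbouring local times and the step -/
lemma step_data (ω : ℕ → Bool) (n : ℕ) :
    ((srw (coin ω) n).pos = (srw (coin ω) (n + 1)).pos - 1 ∧
      (srw (coin ω) n).loc = dec (srw (coin ω) (n + 1)).loc ((srw (coin ω) (n + 1)).pos - 1) ∧
      (srw (coin ω) n).loc (srw (coin ω) n).pos ≤ (srw (coin ω) n).loc ((srw (coin ω) n).pos - 1)) ∨
    ((srw (coin ω) n).pos = (srw (coin ω) (n + 1)).pos + 1 ∧
      (srw (coin ω) n).loc = dec (srw (coin ω) (n + 1)).loc ((srw (coin ω) (n + 1)).pos) ∧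
      (srw (coin ω) n).loc ((srw (coin ω) n).pos - 1) ≤ (srw (coin ω) n).loc (srw (coin ω) n).pos) := by
  have h := (step_iff n (srw (coin ω) (n + 1)).pos (srw (coin ω) (n + 1)).loc ω).1 ⟨rfl, rfl⟩
  generalize hX : (srw (coin ω) (n + 1)).pos = X at *
  generalize hl : (srw (coin ω) (n + 1)).loc = l at *
  rcases h with ⟨⟨h1, h2⟩, h3⟩ | ⟨⟨h1, h2⟩, h3⟩
  · left
    refine ⟨h1, h2, ?_⟩
    rw [h1, h2, dec_same, dec_ne _ (by omega), show X - 1 - 1 = X - 2 by ring]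
    omega
  · right
    refine ⟨h1, h2, ?_⟩
    rw [h1, h2, show X + 1 - 1 = X by ring, dec_same, dec_ne _ (by omega)]
    omega

/-- local constraints of a state of positive weight -/
lemma gW_local {X : ℤ} {l : ℤ → ℤ} (h : CofA l) (hg : gW X l ≠ 0) :
    ((l (X - 1) = l X ∧ 0 ≤ l X) ∨ (l (X - 1) = l X + 2 ∧ -1 ≤ l X) ∨
      (l X = l (X - 1) + 2 ∧ -1 ≤ l (X - 1))) ∧
    (l (X + 1) = l X + 1 ∨ l (X + 1) = l X - 1) ∧
    (l (X - 2) = l (X - 1) + 1 ∨ l (X - 2) = l (X - 1) - 1) := by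
  refine ⟨?_, ?_, ?_⟩
  · have := wf_ne (left_ne_zero_of_mul hg); omega
  · have := wF_ne_zero h hg X
    simp only [wF, le_refl, if_true] at this
    exact (wr_ne this).2.2.1
  · have := wF_ne_zero h hg (X - 1)
    simp only [wF] at this
    rw [if_neg (by omega), show X - 1 - 1 = X - 2 by ring] at this
    exact (wr_ne this).2.2.1

lemma coins_kap {P : Measure (ℕ → Bool)} [IsProbabilityMeasure P]
    (hP : ∀ (s : Finset ℕ) (b : ℕ → Bool),
      P {ω | ∀ j ∈ s, ω j = b j} = (1 / 2 : ENNReal) ^ s.card)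
    (ω : ℕ → Bool) (n : ℕ) :
    ((srw (coin ω) n).coins : ℤ) = kap (srw (coin ω) n).pos (srw (coin ω) n).loc := by
  induction n with
  | zero =>
    have h1 : aInit (-1) = 0 := by decide
    have h2 : aInit 0 = 0 := by decide
    simp [srw, kap, halfS_init, h1, h2]
  | succ n ih =>
    have hd := step_data ω n
    have hl := gW_local (srw_CofA _ n) (gW_real hP ω n).1
    have hc : (srw (coin ω) (n + 1)).coins = if (srw (coin ω) n).loc ((srw (coin ω) n).pos - 1)
      = (srw (coin ω) n).loc (srw (coin ω) n).pos then (srw (coin ω) n).coins + 1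
      else (srw (coin ω) n).coins := rfl
    have hC := srw_CofA (coin ω) (n + 1)
    rw [hc]
    clear hc
    generalize (srw (coin ω) (n + 1)).pos = X at *
    generalize (srw (coin ω) (n + 1)).loc = l at *
    generalize (srw (coin ω) n).pos = Y at *
    generalize (srw (coin ω) n).loc = m at *
    generalize (srw (coin ω) n).coins = c at *
    unfold kap at *
    rcases hd with ⟨h1, h2, h3⟩ | ⟨h1, h2, h3⟩
    · have e1 : m Y = l (X - 1) - 1 := by rw [h1, h2, dec_same]
      have e2 : m (Y + 1) = l X := by
        rw [h1, h2, dec_ne _ (by omega)]; congr 1; ring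
      rw [halfS_dec hC (X - 1), ← h2]
      obtain ⟨hl1, hl2, hl3⟩ := hl
      split_ifs with hif <;> push_cast <;> rw [ih] <;> omega
    · have e1 : m (Y - 1) = l X - 1 := by
        rw [h1, h2, show X + 1 - 1 = X by ring, dec_same]
      have e2 : m (Y - 2) = l (X - 1) := by
        rw [h1, h2, dec_ne _ (by omega)]; congr 1; ring
      rw [halfS_dec hC X, ← h2]
      obtain ⟨hl1, hl2, hl3⟩ := hl
      split_ifs with hif <;> push_cast <;> rw [ih] <;> omega

lemma eq_iff (e : ℕ → ℤ) (n : ℕ) : IsEqTime e n ↔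
    (srw e n).loc ((srw e n).pos - 1) = (srw e n).loc (srw e n).pos := Iff.rfl

lemma exists_eqTime_right {P : Measure (ℕ → Bool)} [IsProbabilityMeasure P]
    (hP : ∀ (s : Finset ℕ) (b : ℕ → Bool),
      P {ω | ∀ j ∈ s, ω j = b j} = (1 / 2 : ENNReal) ^ s.card)
    (ω : ℕ → Bool) (t : ℕ) : ∀ n : ℕ,
    (srw (coin ω) n).loc ((srw (coin ω) n).pos - 1) = (srw (coin ω) n).loc (srw (coin ω) n).pos + 2 →
    (srw (coin ω) n).loc (srw (coin ω) n).pos + 1 ≤ t → ∃ m, n ≤ m ∧ IsEqTime (coin ω) m := by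
  induction t with
  | zero =>
    intro n h1 h2
    have hd := step_data ω n
    have hl := gW_local (srw_CofA _ n) (gW_real hP ω n).1
    have hl' := gW_local (srw_CofA _ (n + 1)) (gW_real hP ω (n + 1)).1
    refine ⟨n + 1, by omega, ?_⟩
    rw [eq_iff]
    generalize (srw (coin ω) (n + 1)).pos = X at *
    generalize (srw (coin ω) (n + 1)).loc = l at *
    generalize (srw (coin ω) n).pos = Y at *
    generalize (srw (coin ω) n).loc = m at *
    rcases hd with ⟨h4, h5, h3⟩ | ⟨h4, h5, h3⟩
    · have e1 : m Y = l (X - 1) - 1 := by rw [h4, h5, dec_same]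
      have e2 : m (Y + 1) = l X := by
        rw [h4, h5, dec_ne _ (by omega)]; congr 1; ring
      omega
    · omega
  | succ t ih =>
    intro n h1 h2
    have hd := step_data ω n
    have hl := gW_local (srw_CofA _ n) (gW_real hP ω n).1
    by_cases hq : IsEqTime (coin ω) (n + 1)
    · exact ⟨n + 1, by omega, hq⟩
    · have h6 := ih (n + 1)
      rw [eq_iff] at hq
      have h7 : (∃ m, n + 1 ≤ m ∧ IsEqTime (coin ω) m) → ∃ m, n ≤ m ∧ IsEqTime (coin ω) m := by
        rintro ⟨m, hm, hm2⟩; exact ⟨m, by omega, hm2⟩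
      apply h7
      clear h7
      generalize (srw (coin ω) (n + 1)).pos = X at *
      generalize (srw (coin ω) (n + 1)).loc = l at *
      generalize (srw (coin ω) n).pos = Y at *
      generalize (srw (coin ω) n).loc = m at *
      rcases hd with ⟨h4, h5, h3⟩ | ⟨h4, h5, h3⟩
      · have e1 : m Y = l (X - 1) - 1 := by rw [h4, h5, dec_same]
        have e2 : m (Y + 1) = l X := by
          rw [h4, h5, dec_ne _ (by omega)]; congr 1; ring
        push_cast at h2
        refine h6 ?_ ?_ <;> clear h6 <;> omega
      · omega

lemma exists_eqTime_left {P : Measure (ℕ → Bool)} [IsProbabilityMeasure P]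
    (hP : ∀ (s : Finset ℕ) (b : ℕ → Bool),
      P {ω | ∀ j ∈ s, ω j = b j} = (1 / 2 : ENNReal) ^ s.card)
    (ω : ℕ → Bool) (t : ℕ) : ∀ n : ℕ,
    (srw (coin ω) n).loc (srw (coin ω) n).pos = (srw (coin ω) n).loc ((srw (coin ω) n).pos - 1) + 2 →
    (srw (coin ω) n).loc ((srw (coin ω) n).pos - 1) + 1 ≤ t → ∃ m, n ≤ m ∧ IsEqTime (coin ω) m := by
  induction t with
  | zero =>
    intro n h1 h2
    have hd := step_data ω n
    have hl := gW_local (srw_CofA _ n) (gW_real hP ω n).1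
    have hl' := gW_local (srw_CofA _ (n + 1)) (gW_real hP ω (n + 1)).1
    refine ⟨n + 1, by omega, ?_⟩
    rw [eq_iff]
    generalize (srw (coin ω) (n + 1)).pos = X at *
    generalize (srw (coin ω) (n + 1)).loc = l at *
    generalize (srw (coin ω) n).pos = Y at *
    generalize (srw (coin ω) n).loc = m at *
    rcases hd with ⟨h4, h5, h3⟩ | ⟨h4, h5, h3⟩
    · omega
    · have e1 : m (Y - 1) = l X - 1 := by
        rw [h4, h5, show X + 1 - 1 = X by ring, dec_same]
      have e2 : m (Y - 2) = l (X - 1) := by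
        rw [h4, h5, dec_ne _ (by omega)]; congr 1; ring
      omega
  | succ t ih =>
    intro n h1 h2
    have hd := step_data ω n
    have hl := gW_local (srw_CofA _ n) (gW_real hP ω n).1
    by_cases hq : IsEqTime (coin ω) (n + 1)
    · exact ⟨n + 1, by omega, hq⟩
    · have h6 := ih (n + 1)
      rw [eq_iff] at hq
      have h7 : (∃ m, n + 1 ≤ m ∧ IsEqTime (coin ω) m) → ∃ m, n ≤ m ∧ IsEqTime (coin ω) m := by
        rintro ⟨m, hm, hm2⟩; exact ⟨m, by omega, hm2⟩
      apply h7
      clear h7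
      generalize (srw (coin ω) (n + 1)).pos = X at *
      generalize (srw (coin ω) (n + 1)).loc = l at *
      generalize (srw (coin ω) n).pos = Y at *
      generalize (srw (coin ω) n).loc = m at *
      rcases hd with ⟨h4, h5, h3⟩ | ⟨h4, h5, h3⟩
      · omega
      · have e1 : m (Y - 1) = l X - 1 := by
          rw [h4, h5, show X + 1 - 1 = X by ring, dec_same]
        have e2 : m (Y - 2) = l (X - 1) := by
          rw [h4, h5, dec_ne _ (by omega)]; congr 1; ring
        push_cast at h2
        refine h6 ?_ ?_ <;> clear h6 <;> omega

lemma eq_infinite {P : Measure (ℕ → Bool)} [IsProbabilityMeasure P]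
    (hP : ∀ (s : Finset ℕ) (b : ℕ → Bool),
      P {ω | ∀ j ∈ s, ω j = b j} = (1 / 2 : ENNReal) ^ s.card)
    (ω : ℕ → Bool) : (Set.ofPred (IsEqTime (coin ω))).Infinite := by
  rw [Set.infinite_iff_exists_gt]
  intro a
  have h : ∃ m, a + 1 ≤ m ∧ IsEqTime (coin ω) m := by
    have hl := gW_local (srw_CofA _ (a + 1)) (gW_real hP ω (a + 1)).1
    rcases hl.1 with h1 | h1 | h1
    · exact ⟨a + 1, le_refl _, h1.1⟩
    · exact exists_eqTime_right hP ω _ (a + 1) h1.1 (Int.self_le_toNat _)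
    · exact exists_eqTime_left hP ω _ (a + 1) h1.1 (Int.self_le_toNat _)
  obtain ⟨m, h1, h2⟩ := h
  exact ⟨m, h2, by omega⟩

open Classical in
lemma coins_count (e : ℕ → ℤ) (n : ℕ) : (srw e n).coins = Nat.count (IsEqTime e) n := by
  induction n with
  | zero => simp [srw]
  | succ n ih =>
    rw [Nat.count_succ, ← ih]
    simp only [eq_iff]
    simp only [srw, srwStep]
    split_ifs <;> rfl

lemma timeN_eq {P : Measure (ℕ → Bool)} [IsProbabilityMeasure P]
    (hP : ∀ (s : Finset ℕ) (b : ℕ → Bool),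
      P {ω | ∀ j ∈ s, ω j = b j} = (1 / 2 : ENNReal) ^ s.card)
    (ω : ℕ → Bool) (k : ℕ) : IsEqTime (coin ω) (timeN (coin ω) k) :=
  Nat.nth_mem_of_infinite (eq_infinite hP ω) k

lemma timeN_coins {P : Measure (ℕ → Bool)} [IsProbabilityMeasure P]
    (hP : ∀ (s : Finset ℕ) (b : ℕ → Bool),
      P {ω | ∀ j ∈ s, ω j = b j} = (1 / 2 : ENNReal) ^ s.card)
    (ω : ℕ → Bool) (k : ℕ) : (srw (coin ω) (timeN (coin ω) k)).coins = k := by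
  classical
  rw [coins_count]
  exact Nat.count_nth_of_infinite (eq_infinite hP ω) k

lemma timeN_of_eq (e : ℕ → ℤ) (n : ℕ) (h : IsEqTime e n) : timeN e (srw e n).coins = n := by
  classical
  rw [coins_count]
  exact Nat.nth_count h


/-- the modified profile agrees with the initial one outside a finite set -/
def CofT (g : ℤ → ℤ) : Prop := {y | g y ≠ aTilde y}.Finite

/-- edge profile of a modified profile -/
def liftP (x : ℤ) (g : ℤ → ℤ) (i : ℤ) : ℤ := if i < x then g (i + 1) else g i

lemma aInit_eq_right {i : ℤ} (h : 0 ≤ i) : aInit i = aTilde i := by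
  rw [aInit_nonneg h]; rfl

lemma aInit_eq_left {i : ℤ} (h : i < 0) : aInit i = aTilde (i + 1) := by
  rw [aInit_neg h]; unfold aTilde
  split_ifs with h1 h2 h2 <;> first | rfl | (exfalso; simp only [Int.even_iff] at *; omega)

lemma lift_CofA {x : ℤ} {g : ℤ → ℤ} (h : CofT g) : CofA (liftP x g) := by
  have hf : ((Set.Icc (-|x| - 1) |x|) ∪ {i | g i ≠ aTilde i} ∪
    ((fun i => i - 1) '' {i | g i ≠ aTilde i})).Finite :=
    ((Set.finite_Icc _ _).union h).union (h.image _)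
  refine hf.subset ?_
  intro i hi
  by_contra hc
  simp only [Set.mem_union, not_or, Set.mem_image, Set.mem_ofPred_eq, not_exists, not_and,
    Set.mem_Icc] at hc
  obtain ⟨⟨h1, h2⟩, h3⟩ := hc
  have hX := abs_le.1 (le_refl |x|)
  apply hi
  unfold liftP
  rcases le_or_gt 0 i with h0 | h0
  · rw [if_neg (by omega), aInit_eq_right h0]; tauto
  · rw [if_pos (by omega), aInit_eq_left h0]
    by_contra hh; exact h3 _ hh (by ring)

lemma modLoc_CofT (e : ℕ → ℤ) (n : ℕ) : CofT (modLoc e n) := by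
  have h := srw_CofA e n
  have hf : ((Set.Icc (-|Xwalk e n| - 1) (|Xwalk e n| + 1)) ∪ {i | (srw e n).loc i ≠ aInit i} ∪
    ((fun i => i + 1) '' {i | (srw e n).loc i ≠ aInit i})).Finite :=
    ((Set.finite_Icc _ _).union h).union (h.image _)
  refine hf.subset ?_
  intro i hi
  by_contra hc
  simp only [Set.mem_union, not_or, Set.mem_image, Set.mem_ofPred_eq, not_exists, not_and,
    Set.mem_Icc] at hc
  obtain ⟨⟨h1, h2⟩, h3⟩ := hc
  have hX := abs_le.1 (le_refl |Xwalk e n|)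
  apply hi
  unfold modLoc ellEdge
  rcases le_or_gt 0 i with h0 | h0
  · rw [if_neg (by omega), ← aInit_eq_right h0]; tauto
  · have := aInit_eq_left (i := i - 1) (by omega)
    rw [show i - 1 + 1 = i by ring] at this
    rw [if_pos (by omega), ← this]
    by_contra hh; exact h3 _ hh (by ring)

lemma lift_modLoc (e : ℕ → ℤ) (n : ℕ) (h : IsEqTime e n) :
    liftP (Xwalk e n) (modLoc e n) = (srw e n).loc := by
  funext i
  unfold liftP modLoc ellEdge
  by_cases h1 : i < Xwalk e n
  · rw [if_pos h1, if_pos (by omega)]; congr 1; ring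
  · rw [if_neg h1]
    split_ifs with h2
    · have : i = Xwalk e n := by omega
      rw [this]; exact h
    · rfl

lemma modLoc_lift (e : ℕ → ℤ) (n : ℕ) (x : ℤ) (g : ℤ → ℤ) (hx : (srw e n).pos = x)
    (h : (srw e n).loc = liftP x g) : modLoc e n = g ∧ IsEqTime e n := by
  constructor
  · funext y
    unfold modLoc ellEdge Xwalk
    rw [h, hx]
    unfold liftP
    by_cases h1 : y ≤ x
    · rw [if_pos h1, if_pos (by omega)]; congr 1; ring
    · rw [if_neg h1, if_neg (by omega)]
  · rw [eq_iff, h, hx]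
    unfold liftP
    rw [if_pos (by omega), if_neg (by omega)]; congr 1; ring

/-- the event that the `k`-th equality state is `(x, g)` -/
def EqVis (k : ℕ) (x : ℤ) (g : ℤ → ℤ) : Set (ℕ → Bool) :=
  {ω | Xwalk (coin ω) (timeN (coin ω) k) = x ∧ modLoc (coin ω) (timeN (coin ω) k) = g}

open Classical in
/-- weight of an equality state -/
noncomputable def GW (x : ℤ) (g : ℤ → ℤ) : ℝ := if CofT g then gW x (liftP x g) else 0

/-- number of coins of an equality state -/
noncomputable def kp (x : ℤ) (g : ℤ → ℤ) : ℤ := kap x (liftP x g)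

lemma GW_nonneg (x : ℤ) (g : ℤ → ℤ) : 0 ≤ GW x g := by
  unfold GW; split_ifs; exacts [gW_nonneg _ _, le_refl _]


lemma EqVis_eq {P : Measure (ℕ → Bool)} [IsProbabilityMeasure P]
    (hP : ∀ (s : Finset ℕ) (b : ℕ → Bool),
      P {ω | ∀ j ∈ s, ω j = b j} = (1 / 2 : ENNReal) ^ s.card)
    (k : ℕ) (x : ℤ) (g : ℤ → ℤ) (ω : ℕ → Bool) : ω ∈ EqVis k x g ↔
    (CofT g ∧ kp x g = k ∧ ω ∈ Vis (tot (liftP x g)).toNat x (liftP x g)) := by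
  constructor
  · rintro ⟨h1, h2⟩
    have h3 := lift_modLoc (coin ω) _ (timeN_eq hP ω k)
    have h4 := modLoc_CofT (coin ω) (timeN (coin ω) k)
    have h5 := coins_kap hP ω (timeN (coin ω) k)
    rw [timeN_coins hP] at h5
    have h6 := (gW_real hP ω (timeN (coin ω) k)).2
    rw [h1, h2] at h3
    rw [h2] at h4
    refine ⟨h4, ?_, ?_⟩
    · rw [h5, ← h3]; unfold kp; rw [← h1]; rfl
    · rw [h3, h6]
      exact ⟨h1, rfl⟩
  · rintro ⟨h1, h2, h3, h4⟩
    have h5 := modLoc_lift _ _ _ _ h3 h4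
    have h6 := timeN_of_eq _ _ h5.2
    have h7 := coins_kap hP ω (tot (liftP x g)).toNat
    rw [h3, h4] at h7
    have h8 : (srw (coin ω) (tot (liftP x g)).toNat).coins = k := by
      unfold kp at h2; rw [h2] at h7; exact_mod_cast h7
    rw [h8] at h6
    unfold EqVis
    simp only [Set.mem_ofPred_eq]
    rw [h6]
    exact ⟨h3, h5.1⟩

lemma EqVis_meas {P : Measure (ℕ → Bool)} [IsProbabilityMeasure P]
    (hP : ∀ (s : Finset ℕ) (b : ℕ → Bool),
      P {ω | ∀ j ∈ s, ω j = b j} = (1 / 2 : ENNReal) ^ s.card)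
    (k : ℕ) (x : ℤ) (g : ℤ → ℤ) : MeasurableSet (EqVis k x g) := by
  by_cases h : CofT g ∧ kp x g = k
  · have : EqVis k x g = Vis (tot (liftP x g)).toNat x (liftP x g) := by
      ext ω; rw [EqVis_eq hP]; tauto
    rw [this]; exact Vis_meas _ _ _
  · have : EqVis k x g = ∅ := by
      ext ω; rw [EqVis_eq hP]; simp only [Set.mem_empty_iff_false]; tauto
    rw [this]; exact MeasurableSet.empty

theorem EqVis_law {P : Measure (ℕ → Bool)} [IsProbabilityMeasure P]
    (hP : ∀ (s : Finset ℕ) (b : ℕ → Bool),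
      P {ω | ∀ j ∈ s, ω j = b j} = (1 / 2 : ENNReal) ^ s.card)
    (k : ℕ) (x : ℤ) (g : ℤ → ℤ) :
    P.real (EqVis k x g) = if kp x g = k then GW x g else 0 := by
  by_cases h : CofT g
  · simp only [GW, h, if_true]
    by_cases hk : kp x g = k
    · have : EqVis k x g = Vis (tot (liftP x g)).toNat x (liftP x g) := by
        ext ω; rw [EqVis_eq hP]; tauto
      rw [this, if_pos hk, Vis_law hP _ _ (lift_CofA h)]
      split_ifs with h2
      · rfl
      · by_contra hg
        have hl := gW_lower (lift_CofA h) (Ne.symm hg)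
        apply h2
        rw [Int.toNat_of_nonneg]
        exact finsum_nonneg (fun i => by have := hl i; omega)
    · have : EqVis k x g = ∅ := by
        ext ω; rw [EqVis_eq hP]; simp only [Set.mem_empty_iff_false]; tauto
      rw [this, if_neg hk]; simp
  · have : EqVis k x g = ∅ := by
      ext ω; rw [EqVis_eq hP]; simp only [Set.mem_empty_iff_false]; tauto
    rw [this]; simp [GW, h]

lemma EqVis_ne {P : Measure (ℕ → Bool)} [IsProbabilityMeasure P]
    (hP : ∀ (s : Finset ℕ) (b : ℕ → Bool),
      P {ω | ∀ j ∈ s, ω j = b j} = (1 / 2 : ENNReal) ^ s.card)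
    (k : ℕ) (ω : ℕ → Bool) {x : ℤ} {g : ℤ → ℤ} (h : ω ∈ EqVis k x g) :
    GW x g ≠ 0 ∧ kp x g = k := by
  have h1 := (EqVis_eq hP k x g ω).1 h
  refine ⟨?_, h1.2.1⟩
  have h2 := (gW_real hP ω (tot (liftP x g)).toNat).1
  rw [h1.2.2.1, h1.2.2.2] at h2
  simp only [GW, h1.1, if_true]
  exact h2


/-- bond weights of an equality state -/
noncomputable def bd (x : ℤ) (g : ℤ → ℤ) (i : ℤ) : ℝ :=
  if x ≤ i then wr i (g i) (g (i + 1)) else wr (-(i + 1)) (g (i + 1)) (g i)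

lemma wF_liftP (x : ℤ) (g : ℤ → ℤ) (i : ℤ) : wF x (liftP x g) i = bd x g i := by
  unfold wF bd liftP
  split_ifs <;> first | rfl | (exfalso; omega) | skip
  rw [show i - 1 + 1 = i by ring]

lemma liftP_left (x : ℤ) (g : ℤ → ℤ) : liftP x g (x - 1) = g x := by
  unfold liftP; rw [if_pos (by omega), show x - 1 + 1 = x by ring]

lemma liftP_right (x : ℤ) (g : ℤ → ℤ) : liftP x g x = g x := by
  unfold liftP; rw [if_neg (by omega)]

lemma GW_eq {x : ℤ} {g : ℤ → ℤ} (h : CofT g) :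
    GW x g = (if 0 ≤ g x then 1 else 0) * ∏ᶠ i, bd x g i := by
  simp only [GW, h, if_true, gW, liftP_left, liftP_right, wF_liftP]
  congr 1
  simp [wf]

lemma bd_supp {x : ℤ} {g : ℤ → ℤ} (h : CofT g) : (Function.mulSupport (bd x g)).Finite := by
  have := finite_mulSupport_wF x (lift_CofA (x := x) h)
  have e : wF x (liftP x g) = bd x g := funext (wF_liftP x g)
  rwa [e] at this

lemma GW_cof {x : ℤ} {g : ℤ → ℤ} (h : GW x g ≠ 0) : CofT g := by
  by_contra hc; exact h (by simp [GW, hc])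

lemma GW_ne_h {x : ℤ} {g : ℤ → ℤ} (h : GW x g ≠ 0) : 0 ≤ g x := by
  by_contra hc
  apply h
  rw [GW_eq (GW_cof h), if_neg hc]; ring

lemma GW_ne_bd {x : ℤ} {g : ℤ → ℤ} (h : GW x g ≠ 0) (i : ℤ) : bd x g i ≠ 0 := by
  intro hc
  apply h
  rw [GW_eq (GW_cof h), finprod_split _ {i} (bd_supp (GW_cof h))]
  simp [hc]

lemma GW_VR {x : ℤ} {g : ℤ → ℤ} (h : GW x g ≠ 0) (i : ℤ) (hi : x ≤ i) :
    Even (g i - i) ∧ -1 ≤ g i ∧ (g (i + 1) = g i + 1 ∨ g (i + 1) = g i - 1) ∧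
    (g i = 0 → 0 ≤ i → g (i + 1) = -1) ∧ (g i = 0 → i < 0 → g (i + 1) = 1) ∧
    (g i = -1 → 0 < i ∧ g (i + 1) = 0) := by
  have h1 := GW_ne_bd h i
  simp only [bd, hi, if_true] at h1
  exact wr_ne h1

lemma GW_VL {x : ℤ} {g : ℤ → ℤ} (h : GW x g ≠ 0) (i : ℤ) (hi : i ≤ x) :
    Even (g i + i) ∧ -1 ≤ g i ∧ (g (i - 1) = g i + 1 ∨ g (i - 1) = g i - 1) ∧
    (g i = 0 → i ≤ 0 → g (i - 1) = -1) ∧ (g i = 0 → 0 < i → g (i - 1) = 1) ∧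
    (g i = -1 → i < 0 ∧ g (i - 1) = 0) := by
  have h1 := GW_ne_bd h (i - 1)
  simp only [bd] at h1
  rw [if_neg (by omega), show i - 1 + 1 = i by ring] at h1
  have h2 := wr_ne h1
  rw [show g i - -i = g i + i by ring] at h2
  refine ⟨h2.1, h2.2.1, h2.2.2.1, fun a b => h2.2.2.2.1 a (by omega),
    fun a b => h2.2.2.2.2.1 a (by omega), fun a => ?_⟩
  have := h2.2.2.2.2.2 a
  omega

lemma GW_ge {x : ℤ} {g : ℤ → ℤ} (h : GW x g ≠ 0) (i : ℤ) : -1 ≤ g i := by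
  rcases le_total x i with h1 | h1
  · exact (GW_VR h i h1).2.1
  · exact (GW_VL h i h1).2.1

/-- comparison of the weights at neighbouring sites -/
lemma GW_step (x : ℤ) {g : ℤ → ℤ} (h : CofT g) : ∃ R : ℝ,
    GW x g = (if 0 ≤ g x then 1 else 0) * (wr x (g x) (g (x + 1)) * R) ∧
    GW (x + 1) g = (if 0 ≤ g (x + 1) then 1 else 0) * (wr (-(x + 1)) (g (x + 1)) (g x) * R) := by
  refine ⟨∏ᶠ i, (if i ∈ ({x} : Finset ℤ) then 1 else bd x g i), ?_, ?_⟩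
  · rw [GW_eq h, finprod_split _ {x} (bd_supp h)]
    simp [bd]
  · rw [GW_eq h, finprod_split _ {x} (bd_supp h)]
    have h1 : ∀ i, (if i ∈ ({x} : Finset ℤ) then 1 else bd (x + 1) g i) =
        (if i ∈ ({x} : Finset ℤ) then 1 else bd x g i) := by
      intro i
      split_ifs with hi
      · rfl
      · simp only [Finset.mem_singleton] at hi
        unfold bd
        split_ifs <;> first | rfl | (exfalso; omega)
    simp_rw [h1]
    simp [bd]

lemma CofT.large {g : ℤ → ℤ} (h : CofT g) : ∃ N : ℤ, 0 ≤ N ∧ ∀ i, N < |i| → g i = aTilde i := by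
  obtain ⟨u, hu⟩ := h.bddAbove
  obtain ⟨v, hv⟩ := h.bddBelow
  refine ⟨max |u| |v|, le_max_of_le_left (abs_nonneg _), fun i hi => ?_⟩
  by_contra hc
  have h1 := hu hc
  have h2 := hv hc
  have h3 := abs_le.1 (le_refl |u|)
  have h4 := abs_le.1 (le_refl |v|)
  rcases abs_cases i with h5 | h5 <;> omega

lemma aTilde_le (i : ℤ) : aTilde i ≤ 0 := by unfold aTilde; split_ifs <;> omega

lemma aTilde_cases (i : ℤ) : (i % 2 = 0 ∧ aTilde i = 0) ∨ (i % 2 = 1 ∧ aTilde i = -1) := by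
  unfold aTilde; split_ifs with h <;> simp only [Int.even_iff] at h <;> omega

lemma exists_b {x : ℤ} {g : ℤ → ℤ} (h : GW x g ≠ 0) (hx : 1 ≤ g x) :
    ∃ b, x < b ∧ g b = 0 ∧ ∀ y, x ≤ y → y < b → 1 ≤ g y := by
  obtain ⟨N, hN0, hN⟩ := (GW_cof h).large
  have hex : ∃ b, x < b ∧ g b ≤ 0 := by
    refine ⟨max (N + 1) (x + 1), by omega, ?_⟩
    rw [hN _ (by rw [abs_of_nonneg (by omega)]; omega)]
    exact aTilde_le _
  obtain ⟨b, ⟨hb1, hb2⟩, hb3⟩ := Int.exists_least_of_bdd (P := fun b => x < b ∧ g b ≤ 0)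
    ⟨x, fun z hz => hz.1.le⟩ hex
  have h1 : ∀ y, x ≤ y → y < b → 1 ≤ g y := by
    intro y hy1 hy2
    by_contra hc
    rcases hy1.eq_or_lt with rfl | hlt
    · exact hc hx
    · have := hb3 y ⟨hlt, by omega⟩; omega
  refine ⟨b, hb1, ?_, h1⟩
  have h2 := h1 (b - 1) (by omega) (by omega)
  have h3 := (GW_VR h (b - 1) (by omega)).2.2.1
  rw [show b - 1 + 1 = b by ring] at h3
  omega

lemma exists_a {x : ℤ} {g : ℤ → ℤ} (h : GW x g ≠ 0) (hx : 1 ≤ g x) :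
    ∃ a, a < x ∧ g a = 0 ∧ ∀ y, a < y → y ≤ x → 1 ≤ g y := by
  obtain ⟨N, hN0, hN⟩ := (GW_cof h).large
  have hex : ∃ b, b < x ∧ g b ≤ 0 := by
    refine ⟨min (-(N + 1)) (x - 1), by omega, ?_⟩
    rw [hN _ (by rw [abs_of_nonpos (by omega)]; omega)]
    exact aTilde_le _
  obtain ⟨b, ⟨hb1, hb2⟩, hb3⟩ := Int.exists_greatest_of_bdd (P := fun b => b < x ∧ g b ≤ 0)
    ⟨x, fun z hz => hz.1.le⟩ hex
  have h1 : ∀ y, b < y → y ≤ x → 1 ≤ g y := by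
    intro y hy1 hy2
    by_contra hc
    rcases hy2.eq_or_lt with rfl | hlt
    · exact hc hx
    · have := hb3 y ⟨hlt, by omega⟩; omega
  refine ⟨b, hb1, ?_, h1⟩
  have h2 := h1 (b + 1) (by omega) (by omega)
  have h3 := (GW_VL h (b + 1) (by omega)).2.2.1
  rw [show b + 1 - 1 = b by ring] at h3
  omega

/-- a state at height zero at the origin is the initial one -/
lemma GW_origin {g : ℤ → ℤ} (h : GW 0 g ≠ 0) (h0 : g 0 = 0) : g = aTilde := by
  have hc := GW_cof h
  have h1 := h
  simp only [GW, hc, if_true] at h1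
  have h2 := gW_zero_case (lift_CofA hc) h1 (by rw [liftP_left, h0]) (by rw [liftP_right, h0])
  funext y
  rcases le_or_gt 0 y with hy | hy
  · have := congrFun h2 y
    rw [aInit_eq_right hy] at this
    rw [← this, liftP, if_neg (by omega)]
  · have := congrFun h2 (y - 1)
    rw [aInit_eq_left (by omega), show y - 1 + 1 = y by ring] at this
    rw [← this, liftP, if_pos (by omega), show y - 1 + 1 = y by ring]

/-- moving to a site of positive height -/
lemma GW_pos_site {x : ℤ} {g : ℤ → ℤ} (h : GW x g ≠ 0) (hg : g ≠ aTilde) :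
    ∃ x', GW x' g ≠ 0 ∧ 1 ≤ g x' := by
  rcases (GW_ne_h h).eq_or_lt with h0 | h0
  swap
  · exact ⟨x, h, h0⟩
  have hcof := GW_cof h
  rcases lt_trichotomy x 0 with hx | hx | hx
  · have h1 := (GW_VR h x le_rfl).2.2.2.2.1 h0.symm hx
    refine ⟨x + 1, ?_, by omega⟩
    obtain ⟨R, hR1, hR2⟩ := GW_step x hcof
    have hR : R ≠ 0 := by rintro rfl; apply h; rw [hR1]; ring
    have hev := (GW_VR h x le_rfl).1
    rw [hR2, h1, ← h0, wr_pos (by norm_num) (by rw [Int.even_iff] at *; omega) (by omega)]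
    simpa using hR
  · subst hx; exact absurd (GW_origin h h0.symm) hg
  · have h1 := (GW_VL h x le_rfl).2.2.2.2.1 h0.symm hx
    refine ⟨x - 1, ?_, by omega⟩
    obtain ⟨R, hR1, hR2⟩ := GW_step (x - 1) hcof
    rw [show x - 1 + 1 = x by ring] at hR1 hR2
    have hR : R ≠ 0 := by rintro rfl; apply h; rw [hR2]; ring
    have hev := (GW_VL h x le_rfl).1
    rw [hR1, h1, ← h0, wr_pos (by norm_num) (by rw [Int.even_iff] at *; omega) (by omega)]
    simpa using hR

lemma GW_const {x a b : ℤ} {g : ℤ → ℤ} (h : GW x g ≠ 0) (hax : a < x) (hxb : x < b)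
    (hpos : ∀ y, a < y → y < b → 1 ≤ g y) (y : ℤ) (hy1 : a < y) (hy2 : y < b) :
    GW y g = GW x g := by
  have hcof := GW_cof h
  have hev : ∀ i, Even (g i - i) := by
    intro i
    rcases le_total x i with h1 | h1
    · exact (GW_VR h i h1).1
    · have := (GW_VL h i h1).1; rw [Int.even_iff] at *; omega
  have hd : ∀ i, g (i + 1) = g i + 1 ∨ g (i + 1) = g i - 1 := by
    intro i
    rcases le_or_gt x i with h1 | h1
    · exact (GW_VR h i h1).2.2.1
    · have := (GW_VL h (i + 1) (by omega)).2.2.1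
      rw [show i + 1 - 1 = i by ring] at this; omega
  have hstep : ∀ i, a < i → i + 1 < b → GW (i + 1) g = GW i g := by
    intro i h1 h2
    obtain ⟨R, hR1, hR2⟩ := GW_step i hcof
    have p1 := hpos i h1 (by omega)
    have p2 := hpos (i + 1) (by omega) h2
    have e1 := hev (i + 1)
    rw [hR1, hR2, wr_pos p1 (hev i) (hd i),
      wr_pos p2 (by rw [Int.even_iff] at *; omega) (by have := hd i; omega),
      if_pos (by omega), if_pos (by omega)]
  have hind : ∀ (n : ℕ) (i : ℤ), a < i → i + n < b → GW (i + n) g = GW i g := by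
    intro n
    induction n with
    | zero => intro i _ _; simp
    | succ n ih =>
      intro i h1 h2
      push_cast at h2 ⊢
      rw [← add_assoc, hstep (i + n) (by omega) (by omega), ih i h1 (by omega)]
  rcases le_total x y with h1 | h1
  · obtain ⟨n, hn⟩ := Int.eq_ofNat_of_zero_le (by omega : 0 ≤ y - x)
    have : y = x + n := by omega
    rw [this]; exact hind n x hax (by omega)
  · obtain ⟨n, hn⟩ := Int.eq_ofNat_of_zero_le (by omega : 0 ≤ x - y)
    have : x = y + n := by omega
    rw [this]; exact (hind n y hy1 (by omega)).symm

lemma ncard_ne_zero_of {s : Set ℤ} {u v y : ℤ} (hs : s ⊆ Set.Icc u v) (hy : y ∈ s) : s.ncard ≠ 0 := by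
  have hf : s.Finite := (Set.finite_Icc u v).subset hs
  rw [Ne, Set.ncard_eq_zero hf]
  exact Set.Nonempty.ne_empty ⟨y, hy⟩

/-- structure of a profile with positive weight -/
theorem GW_structure {x0 : ℤ} {g : ℤ → ℤ} (h0 : GW x0 g ≠ 0) (hg : g ≠ aTilde) :
    ∃ (a b x : ℤ) (C : ℝ), a < x ∧ x < b ∧ 0 < C ∧ g a = 0 ∧ g b = 0 ∧
      (∀ y, a < y → y < b → 1 ≤ g y) ∧ (∀ y, a < y → y < b → GW y g = C) ∧
      (GW b g = if 0 < b then 2 * C else 0) ∧ (GW a g = if a < 0 then 2 * C else 0) ∧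
      (∀ y, y < a ∨ b < y → GW y g = 0) ∧
      interI g = {y | a ≤ y ∧ y ≤ b ∧ (y = a → a ≤ 0) ∧ (y = b → 0 ≤ b)} := by
  obtain ⟨x, h, hx⟩ := GW_pos_site h0 hg
  obtain ⟨b, hxb, hgb, hb⟩ := exists_b h hx
  obtain ⟨a, hax, hga, ha⟩ := exists_a h hx
  have hpos : ∀ y, a < y → y < b → 1 ≤ g y := by
    intro y h1 h2
    rcases le_total x y with h3 | h3
    · exact hb y h3 h2
    · exact ha y h1 h3
  have hconst := GW_const h hax hxb hpos
  have hcof := GW_cof h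
  have hb1 : g (b - 1) = 1 := by
    have := (GW_VR h (b - 1) (by omega)).2.2.1
    rw [show b - 1 + 1 = b by ring] at this
    have := hpos (b - 1) (by omega) (by omega)
    omega
  have ha1 : g (a + 1) = 1 := by
    have := (GW_VL h (a + 1) (by omega)).2.2.1
    rw [show a + 1 - 1 = a by ring] at this
    have := hpos (a + 1) (by omega) (by omega)
    omega
  have eb := (GW_VR h b (by omega)).1
  have ea := (GW_VL h a (by omega)).1
  have hCpos : 0 < GW x g := lt_of_le_of_ne (GW_nonneg _ _) h.symm
  refine ⟨a, b, x, GW x g, hax, hxb, hCpos, hga, hgb, hpos, hconst, ?_, ?_, ?_, ?_⟩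
  · obtain ⟨R, hR1, hR2⟩ := GW_step (b - 1) hcof
    rw [show b - 1 + 1 = b by ring] at hR1 hR2
    rw [hconst (b - 1) (by omega) (by omega), hb1, hgb,
      wr_pos (by norm_num) (by rw [Int.even_iff] at *; omega) (by omega)] at hR1
    rw [hR2, hgb, hb1, hR1]
    unfold wr
    split_ifs <;> first | (exfalso; rw [Int.even_iff] at *; omega) | (exfalso; omega) | ring1 | norm_num
  · obtain ⟨R, hR1, hR2⟩ := GW_step a hcof
    rw [hconst (a + 1) (by omega) (by omega), ha1, hga,
      wr_pos (by norm_num) (by rw [Int.even_iff] at *; omega) (by omega)] at hR2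
    rw [hR1, hga, ha1, hR2]
    unfold wr
    split_ifs <;> first | (exfalso; rw [Int.even_iff] at *; omega) | (exfalso; omega) | ring1 | norm_num
  · rintro y (hy | hy)
    · by_contra hc
      rcases le_or_gt a 0 with h1 | h1
      · have h2 := (GW_VL h a (by omega)).2.2.2.1 hga h1
        have h3 := (GW_VR hc (a - 1) (by omega)).2.2.2.2.2 h2
        omega
      · have h3 := (GW_VR hc a (by omega)).2.2.2.1 hga (by omega)
        omega
    · by_contra hc
      rcases le_or_gt 0 b with h1 | h1
      · have h2 := (GW_VR h b (by omega)).2.2.2.1 hgb h1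
        have h3 := (GW_VL hc (b + 1) (by omega)).2.2.2.2.2 h2
        omega
      · have h3 := (GW_VL hc b (by omega)).2.2.2.1 hgb (by omega)
        omega
  · -- the interval
    have hmp : 0 ≤ b → mPlus g = b := by
      intro hb0
      have : IsLeast {y : ℤ | 0 ≤ y ∧ g y = -1} (b + 1) := by
        refine ⟨⟨by omega, (GW_VR h b (by omega)).2.2.2.1 hgb hb0⟩, ?_⟩
        rintro y ⟨hy0, hy⟩
        by_contra hc
        rcases le_or_gt x y with h1 | h1
        · rcases (by omega : y = b ∨ y < b) with rfl | h2
          · omega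
          · have := hb y h1 h2; omega
        · have := (GW_VL h y (by omega)).2.2.2.2.2 hy; omega
      unfold mPlus; rw [this.csInf_eq]; ring
    have hmm : a ≤ 0 → mMinus g = a := by
      intro ha0
      have : IsGreatest {y : ℤ | y ≤ 0 ∧ g y = -1} (a - 1) := by
        refine ⟨⟨by omega, (GW_VL h a (by omega)).2.2.2.1 hga ha0⟩, ?_⟩
        rintro y ⟨hy0, hy⟩
        by_contra hc
        rcases le_or_gt y x with h1 | h1
        · rcases (by omega : y = a ∨ a < y) with rfl | h2
          · omega
          · have := ha y h2 h1; omega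
        · have := (GW_VR h y (by omega)).2.2.2.2.2 hy; omega
      unfold mMinus; rw [this.csSup_eq]; ring
    obtain ⟨N, hN0, hN⟩ := hcof.large
    rcases lt_or_ge b 0 with hb0 | hb0
    · -- left case
      have hnp : {y : ℤ | 0 ≤ y ∧ g y = -1}.Nonempty := by
        refine ⟨2 * N + 1, by omega, ?_⟩
        rw [hN _ (by rw [abs_of_nonneg (by omega)]; omega)]
        have := aTilde_cases (2 * N + 1); omega
      have hbdd : BddBelow {y : ℤ | 0 ≤ y ∧ g y = -1} := ⟨0, fun y hy => hy.1⟩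
      have hM : 0 ≤ mPlus g := by
        have h1 : (1 : ℤ) ≤ sInf {y : ℤ | 0 ≤ y ∧ g y = -1} := by
          apply le_csInf hnp
          rintro y ⟨hy0, hy⟩
          have := (GW_VR h y (by omega)).2.2.2.2.2 hy; omega
        unfold mPlus; omega
      have hlt : ∀ y, 0 ≤ y → y < mPlus g → g y ≠ 0 := by
        intro y h1 h2 h3
        have h4 := (GW_VR h y (by omega)).2.2.2.1 h3 h1
        have h5 : sInf {y : ℤ | 0 ≤ y ∧ g y = -1} ≤ y + 1 := csInf_le hbdd ⟨by omega, h4⟩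
        unfold mPlus at h2; omega
      have ma := hmm (by omega)
      have hnz : nZeros g ≠ 0 := by
        unfold nZeros
        apply ncard_ne_zero_of (u := mMinus g) (v := mPlus g) (y := b)
        · rintro y ⟨h1, h2, _⟩; exact ⟨h1.le, h2.le⟩
        · exact ⟨by omega, by omega, hgb⟩
      have hop : ¬ (0 < oPlus g) := by
        have : oPlus g ≤ -1 := by
          have hne : ({y | y < mPlus g ∧ g y = 0} : Set ℤ).Nonempty := ⟨b, by omega, hgb⟩
          apply csSup_le hne
          rintro y ⟨h1, h2⟩
          by_contra hc
          exact hlt y (by omega) h1 h2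
        omega
      have hom : oMinus g = b := by
        have : IsLeast {y : ℤ | mMinus g < y ∧ g y = 0} b := by
          refine ⟨⟨by omega, hgb⟩, ?_⟩
          rintro y ⟨h1, h2⟩
          by_contra hc
          have := hpos y (by omega) (by omega)
          omega
        exact this.csInf_eq
      unfold interI
      rw [if_neg hg, if_neg hnz, if_neg hop, hom, ma]
      ext y; simp only [Set.mem_Ico, Set.mem_ofPred_eq]; omega
    rcases lt_or_ge 0 a with ha0 | ha0
    · have hnp : {y : ℤ | y ≤ 0 ∧ g y = -1}.Nonempty := by
        refine ⟨-(2 * N + 1), by omega, ?_⟩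
        rw [hN _ (by rw [abs_of_nonpos (by omega)]; omega)]
        have := aTilde_cases (-(2 * N + 1)); omega
      have hM : mMinus g ≤ 0 := by
        have h1 : sSup {y : ℤ | y ≤ 0 ∧ g y = -1} ≤ -1 := by
          apply csSup_le hnp
          rintro y ⟨hy0, hy⟩
          have := (GW_VL h y (by omega)).2.2.2.2.2 hy; omega
        unfold mMinus; omega
      have mb := hmp (by omega)
      have hnz : nZeros g ≠ 0 := by
        unfold nZeros
        apply ncard_ne_zero_of (u := mMinus g) (v := mPlus g) (y := a)
        · rintro y ⟨h1, h2, _⟩; exact ⟨h1.le, h2.le⟩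
        · exact ⟨by omega, by omega, hga⟩
      have hop : oPlus g = a := by
        have : IsGreatest {y : ℤ | y < mPlus g ∧ g y = 0} a := by
          refine ⟨⟨by omega, hga⟩, ?_⟩
          rintro y ⟨h1, h2⟩
          by_contra hc
          have := hpos y (by omega) (by omega)
          omega
        exact this.csSup_eq
      unfold interI
      rw [if_neg hg, if_neg hnz, if_pos (by omega), hop, mb]
      ext y; simp only [Set.mem_Ioc, Set.mem_ofPred_eq]; omega
    · have ma := hmm (by omega)
      have mb := hmp (by omega)
      have hnz : nZeros g = 0 := by
        unfold nZeros
        rw [ma, mb]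
        have : {y : ℤ | a < y ∧ y < b ∧ g y = 0} = ∅ := by
          ext y
          simp only [Set.mem_ofPred_eq, Set.mem_empty_iff_false, iff_false]
          rintro ⟨h1, h2, h3⟩
          have := hpos y h1 h2
          omega
        rw [this]; simp
      unfold interI
      rw [if_neg hg, if_pos hnz, ma, mb]
      ext y; simp only [Set.mem_Icc, Set.mem_ofPred_eq]; omega

/-- half sum of a modified profile -/
noncomputable def Sg (g : ℤ → ℤ) : ℤ := ∑ᶠ y, (g y + 1) / 2

lemma Sg_supp {g : ℤ → ℤ} (h : CofT g) : (Function.support (fun y => (g y + 1) / 2)).Finite := by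
  refine h.subset ?_
  intro i hi h2
  apply hi
  show (g i + 1) / 2 = 0
  have h2 : g i = aTilde i := h2
  rw [h2]
  have := aTilde_cases i
  omega

lemma kp_eq {g : ℤ → ℤ} (h : CofT g) (x : ℤ) : kp x g = Sg g + g x := by
  have hs := Sg_supp h
  set F : ℤ → ℤ := fun y => (g y + 1) / 2 with hF
  have s1 : (Function.support (fun y => if y ≤ x then F y else 0)).Finite :=
    hs.subset (by intro y hy hc; apply hy; show (if y ≤ x then F y else 0) = 0; split_ifs; exacts [hc, rfl])
  have s2 : (Function.support (fun y => if x ≤ y then F y else 0)).Finite :=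
    hs.subset (by intro y hy hc; apply hy; show (if x ≤ y then F y else 0) = 0; split_ifs; exacts [hc, rfl])
  have s3 : (Function.support (fun y => if y = x then F x else 0)).Finite :=
    (Set.finite_singleton x).subset (by
      intro j hj; by_contra hc; apply hj; simp only [Set.mem_singleton_iff] at hc; simp [hc])
  have e3 : ∑ᶠ y, (if y = x then F x else 0) = F x := by
    rw [finsum_eq_single _ x]
    · simp
    · intro j hj; simp [hj]
  have e1 : halfS (liftP x g) = Sg g + F x := by
    have h1 : ∑ᶠ i, (if i + 1 ≤ x then F (i + 1) else 0) = ∑ᶠ y, (if y ≤ x then F y else 0) :=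
      finsum_comp_equiv (Equiv.addRight (1 : ℤ)) (f := fun y => if y ≤ x then F y else 0)
    have s1' : (Function.support (fun y => if y + 1 ≤ x then F (y + 1) else 0)).Finite := by
      refine (s1.preimage (f := fun y : ℤ => y + 1) ?_).subset ?_
      · intro a _ b _ hab; simpa using hab
      · intro y hy; exact hy
    have h2 : halfS (liftP x g) = ∑ᶠ i, ((if i + 1 ≤ x then F (i + 1) else 0) + (if x ≤ i then F i else 0)) := by
      unfold halfS
      congr 1; funext i
      unfold liftP
      split_ifs <;> first | (exfalso; omega) | simp [hF]
    rw [h2, finsum_add_distrib s1' s2, h1, ← finsum_add_distrib s1 s2]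
    unfold Sg
    rw [← e3, ← finsum_add_distrib hs s3]
    congr 1; funext y
    split_ifs <;> first | (exfalso; omega) | simp [hF] | skip
    all_goals
      have : y = x := by omega
      simp [this]
  unfold kp kap
  rw [e1, liftP_left, liftP_right, max_self]
  simp only [hF]
  omega

lemma Sg_ge {x : ℤ} {g : ℤ → ℤ} (h : GW x g ≠ 0) (T : Finset ℤ) :
    ∑ y ∈ T, (g y + 1) / 2 ≤ Sg g := by
  have hs := Sg_supp (GW_cof h)
  unfold Sg
  rw [finsum_eq_sum_of_support_subset (s := hs.toFinset ∪ T) _ (by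
    intro y hy; simp only [Finset.coe_union, Set.mem_union, Set.Finite.coe_toFinset]; left; exact hy)]
  refine Finset.sum_le_sum_of_subset_of_nonneg Finset.subset_union_right ?_
  intro y _ _
  have := GW_ge h y
  omega

lemma kp_pos {x : ℤ} {g : ℤ → ℤ} (h : GW x g ≠ 0) (hg : g ≠ aTilde) : 1 ≤ kp x g := by
  obtain ⟨y, hy, hy1⟩ := GW_pos_site h hg
  rw [kp_eq (GW_cof h)]
  have h1 := Sg_ge h {y}
  simp only [Finset.sum_singleton] at h1
  have := GW_ne_h h
  omega

lemma Sg_tilde : Sg aTilde = 0 := by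
  unfold Sg
  have : ∀ y, (aTilde y + 1) / 2 = 0 := by
    intro y; have := aTilde_cases y; omega
  simp [this]

lemma kp_tilde {x : ℤ} (h : GW x aTilde ≠ 0) : kp x aTilde = 0 := by
  rw [kp_eq (GW_cof h), Sg_tilde]
  have := GW_ne_h h
  have := aTilde_le x
  omega

/-- the height is at most of the order of the square root of the number of coins -/
lemma height_le {x : ℤ} {g : ℤ → ℤ} (h : GW x g ≠ 0) : g x ^ 2 ≤ 4 * kp x g := by
  have h0 := GW_ne_h h
  obtain ⟨n, hn⟩ := Int.eq_ofNat_of_zero_le h0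
  have h1 : ∀ j : ℕ, g x - j ≤ g (x + j) := by
    intro j
    induction j with
    | zero => simp
    | succ j ih =>
      have := (GW_VR h (x + j) (by omega)).2.2.1
      push_cast
      rw [← add_assoc]
      omega
  have h2 := Sg_ge h ((Finset.range n).image (fun j : ℕ => x + (j : ℤ)))
  rw [Finset.sum_image (by intro a _ b _ hab; simpa using hab)] at h2
  have h3 : ∑ j ∈ Finset.range n, ((n : ℤ) - j) ≤ 2 * ∑ j ∈ Finset.range n, (g (x + j) + 1) / 2 := by
    rw [Finset.mul_sum]
    refine Finset.sum_le_sum (fun j _ => ?_)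
    have := h1 j
    omega
  have h4 : ∀ m : ℕ, (m : ℤ) * (m + 1) = 2 * ∑ j ∈ Finset.range m, ((m : ℤ) - j) := by
    intro m
    induction m with
    | zero => simp
    | succ m ih =>
      rw [Finset.sum_range_succ]
      have : ∑ j ∈ Finset.range m, (((m + 1 : ℕ) : ℤ) - j) = ∑ j ∈ Finset.range m, ((m : ℤ) - j) + m := by
        have e : ∀ j ∈ Finset.range m, (((m + 1 : ℕ) : ℤ) - (j : ℤ)) = ((m : ℤ) - j) + 1 := by
          intro j _; push_cast; ring
        rw [Finset.sum_congr rfl e, Finset.sum_add_distrib]; simp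
      rw [this]; push_cast; linarith
  have h5 := h4 n
  rw [kp_eq (GW_cof h), hn]
  nlinarith

/-- reflection -/
lemma CofT_neg {g : ℤ → ℤ} (h : CofT g) : CofT (fun y => g (-y)) := by
  refine (h.image (fun y => -y)).subset ?_
  intro y hy
  refine ⟨-y, ?_, by ring⟩
  intro hc
  apply hy
  show g (-y) = aTilde y
  rw [hc]; simp [aTilde]

lemma CofT_neg_iff {g : ℤ → ℤ} : CofT (fun y => g (-y)) ↔ CofT g := by
  refine ⟨fun h => ?_, CofT_neg⟩
  have := CofT_neg h
  simpa using this

lemma GW_neg (x : ℤ) (g : ℤ → ℤ) : GW (-x) (fun y => g (-y)) = GW x g := by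
  by_cases h : CofT g
  · rw [GW_eq h, GW_eq (CofT_neg h), neg_neg]
    congr 1
    rw [← finprod_comp_equiv ((Equiv.neg ℤ).trans (Equiv.subRight (1 : ℤ))) (f := bd x g)]
    congr 1; funext i
    simp only [Equiv.trans_apply, Equiv.neg_apply, Equiv.subRight_apply]
    unfold bd
    by_cases hi : -x ≤ i
    · rw [if_pos hi, if_neg (by omega)]
      congr 2 <;> ring_nf
    · rw [if_neg hi, if_pos (by omega)]
      congr 2 <;> ring_nf
  · have : ¬ CofT (fun y => g (-y)) := by rwa [CofT_neg_iff]
    simp [GW, h, this]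

lemma Sg_neg (g : ℤ → ℤ) : Sg (fun y => g (-y)) = Sg g := by
  unfold Sg
  exact finsum_comp_equiv (Equiv.neg ℤ) (f := fun y => (g y + 1) / 2)

/-- probability mass of the pair `(x, γ)` at the geometric time with parameter `1 - z` -/
noncomputable def mu (z : ℝ) (x : ℤ) (g : ℤ → ℤ) : ℝ :=
  if 1 ≤ kp x g then (1 - z) * z ^ ((kp x g).toNat - 1) * GW x g else 0

lemma mu_nonneg {z : ℝ} (h0 : 0 ≤ z) (h1 : z ≤ 1) (x : ℤ) (g : ℤ → ℤ) : 0 ≤ mu z x g := by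
  unfold mu
  split_ifs
  · have := GW_nonneg x g
    have : 0 ≤ 1 - z := by linarith
    positivity
  · exact le_rfl

lemma mu_ne {z : ℝ} {x : ℤ} {g : ℤ → ℤ} (h : mu z x g ≠ 0) : GW x g ≠ 0 ∧ g ≠ aTilde := by
  have h1 : GW x g ≠ 0 := by
    intro hc; apply h; unfold mu; rw [hc]; simp
  refine ⟨h1, ?_⟩
  rintro rfl
  apply h
  unfold mu
  rw [kp_tilde h1]; simp

lemma mu_neg (z : ℝ) (x : ℤ) (g : ℤ → ℤ) : mu z (-x) (fun y => g (-y)) = mu z x g := by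
  by_cases h : CofT g
  · unfold mu
    rw [kp_eq h, kp_eq (CofT_neg h), Sg_neg, GW_neg, neg_neg]
  · have h2 : ¬ CofT (fun y => g (-y)) := by rwa [CofT_neg_iff]
    have e1 : GW x g = 0 := by simp [GW, h]
    have e2 : GW (-x) (fun y => g (-y)) = 0 := by simp [GW, h2]
    unfold mu
    rw [e1, e2]; simp

lemma wr_le_one (y a b : ℤ) : wr y a b ≤ 1 := by
  unfold wr; split_ifs <;> norm_num

/-- expected discounted survival of a reflected path -/
noncomputable def Vv (z : ℝ) : ℕ → ℤ → ℝ
  | 0, _ => 1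
  | n + 1, h => z ^ ((h + 1) / 2).toNat *
      (if h ≤ 0 then Vv z n 1 else (Vv z n (h + 1) + Vv z n (h - 1)) / 2)

lemma Vv_nonneg {z : ℝ} (hz : 0 ≤ z) (n : ℕ) : ∀ h, 0 ≤ Vv z n h := by
  induction n with
  | zero => intro h; simp [Vv]
  | succ n ih =>
    intro h
    have h1 := ih 1
    have h2 := ih (h + 1)
    have h3 := ih (h - 1)
    unfold Vv
    split_ifs <;> positivity

/-- discounted one-step weight -/
noncomputable def dw (z : ℝ) (y a b : ℤ) : ℝ :=
  z ^ (if 0 < y then ((a + 1) / 2).toNat else 0) * wr (-y) a b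

/-- discounted weight of `m` steps to the left of `x` -/
noncomputable def Ww (z : ℝ) : ℕ → ℤ → (ℤ → ℤ) → ℝ
  | 0, _, _ => 1
  | m + 1, x, g => dw z x (g x) (g (x - 1)) * Ww z m (x - 1) g

lemma dw_nonneg {z : ℝ} (hz : 0 ≤ z) (y a b : ℤ) : 0 ≤ dw z y a b := by
  unfold dw
  have := wr_nonneg (-y) a b
  positivity

lemma Ww_nonneg {z : ℝ} (hz : 0 ≤ z) (m : ℕ) : ∀ x g, 0 ≤ Ww z m x g := by
  induction m with
  | zero => intro x g; simp [Ww]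
  | succ m ih => intro x g; exact mul_nonneg (dw_nonneg hz _ _ _) (ih _ _)

lemma dw_step {z : ℝ} (hz : 0 ≤ z) (x h : ℤ) :
    dw z x h (h + 1) * Vv z (x - 1).toNat (h + 1) + dw z x h (h - 1) * Vv z (x - 1).toNat (h - 1)
      ≤ Vv z x.toNat h := by
  rcases le_or_gt x 0 with hx | hx
  · rw [Int.toNat_eq_zero.mpr hx, Int.toNat_eq_zero.mpr (by omega)]
    simp only [Vv, mul_one]
    unfold dw
    rw [if_neg (by omega)]
    simp only [pow_zero, one_mul]
    unfold wr
    split_ifs <;> first | (exfalso; omega) | norm_num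
  · obtain ⟨n, hn⟩ : ∃ n : ℕ, x = n + 1 := ⟨(x - 1).toNat, by omega⟩
    have e1 : x.toNat = n + 1 := by omega
    have e2 : (x - 1).toNat = n := by omega
    rw [e1, e2]
    have v1 := Vv_nonneg hz n 1
    have v2 := Vv_nonneg hz n (h + 1)
    have v3 := Vv_nonneg hz n (h - 1)
    unfold dw
    rw [if_pos hx]
    have key : wr (-x) h (h + 1) * Vv z n (h + 1) + wr (-x) h (h - 1) * Vv z n (h - 1) ≤
        (if h ≤ 0 then Vv z n 1 else (Vv z n (h + 1) + Vv z n (h - 1)) / 2) := by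
      rcases lt_trichotomy h 0 with h0 | h0 | h0
      · rw [if_pos (by omega)]
        have a1 : wr (-x) h (h + 1) = 0 := by
          by_contra hc; have := wr_ne hc; omega
        have a2 : wr (-x) h (h - 1) = 0 := by
          by_contra hc; have := wr_ne hc; omega
        rw [a1, a2]; simpa using v1
      · rw [if_pos (by omega)]
        have a2 : wr (-x) h (h - 1) = 0 := by
          by_contra hc; have := wr_ne hc; omega
        have a1 := wr_le_one (-x) h (h + 1)
        rw [a2, h0]; rw [h0] at a1
        simp only [zero_add, zero_mul, add_zero] at a1 ⊢
        nlinarith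
      · rw [if_neg (by omega)]
        have a1 : wr (-x) h (h + 1) ≤ 1 / 2 := by
          unfold wr; split_ifs <;> first | (exfalso; omega) | norm_num
        have a2 : wr (-x) h (h - 1) ≤ 1 / 2 := by
          unfold wr; split_ifs <;> first | (exfalso; omega) | norm_num
        nlinarith
    simp only [Vv]
    have hp : 0 ≤ z ^ ((h + 1) / 2).toNat := by positivity
    nlinarith [mul_le_mul_of_nonneg_left key hp]

lemma Ww_sum {z : ℝ} (hz : 0 ≤ z) (m : ℕ) : ∀ (x h : ℤ) (T : Finset (ℤ → ℤ)), x ≤ m →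
    (∀ g ∈ T, g x = h) →
    (∀ g ∈ T, ∀ g' ∈ T, ∀ y, (x ≤ y ∨ y < x - m) → g y = g' y) →
    ∑ g ∈ T, Ww z m x g ≤ Vv z x.toNat h := by
  induction m with
  | zero =>
    intro x h T hx _ h2
    rw [Int.toNat_eq_zero.mpr (by simpa using hx)]
    simp only [Ww, Vv, Finset.sum_const, nsmul_eq_mul, mul_one]
    have : T.card ≤ 1 := by
      rw [Finset.card_le_one]
      intro a ha b hb
      funext y
      exact h2 a ha b hb y (by push_cast; omega)
    exact_mod_cast this
  | succ m ih =>
    intro x h T hx h1 h2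
    have e : ∀ g ∈ T, Ww z (m + 1) x g =
        (if g (x - 1) = h + 1 then dw z x h (h + 1) * Ww z m (x - 1) g else 0) +
        (if g (x - 1) = h - 1 then dw z x h (h - 1) * Ww z m (x - 1) g else 0) := by
      intro g hg
      simp only [Ww]
      rw [h1 g hg]
      by_cases c1 : g (x - 1) = h + 1
      · rw [if_pos c1, if_neg (by omega), c1, add_zero]
      · by_cases c2 : g (x - 1) = h - 1
        · rw [if_neg c1, if_pos c2, c2, zero_add]
        · rw [if_neg c1, if_neg c2]
          have : dw z x h (g (x - 1)) = 0 := by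
            unfold dw
            have : wr (-x) h (g (x - 1)) = 0 := by
              by_contra hc; have := wr_ne hc; omega
            rw [this, mul_zero]
          rw [this]; simp
    rw [Finset.sum_congr rfl e, Finset.sum_add_distrib, ← Finset.sum_filter, ← Finset.sum_filter,
      ← Finset.mul_sum, ← Finset.mul_sum]
    refine le_trans ?_ (dw_step hz x h)
    refine add_le_add (mul_le_mul_of_nonneg_left ?_ (dw_nonneg hz _ _ _))
      (mul_le_mul_of_nonneg_left ?_ (dw_nonneg hz _ _ _))
    · refine ih (x - 1) (h + 1) _ (by push_cast at hx; omega) ?_ ?_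
      · intro g hg; exact (Finset.mem_filter.mp hg).2
      · intro g hg g' hg' y hy
        rw [Finset.mem_filter] at hg hg'
        by_cases hy1 : y = x - 1
        · rw [hy1, hg.2, hg'.2]
        · exact h2 g hg.1 g' hg'.1 y (by push_cast; omega)
    · refine ih (x - 1) (h - 1) _ (by push_cast at hx; omega) ?_ ?_
      · intro g hg; exact (Finset.mem_filter.mp hg).2
      · intro g hg g' hg' y hy
        rw [Finset.mem_filter] at hg hg'
        by_cases hy1 : y = x - 1
        · rw [hy1, hg.2, hg'.2]
        · exact h2 g hg.1 g' hg'.1 y (by push_cast; omega)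

/-- the supersolution -/
noncomputable def Us (D : ℝ) (L : ℤ) (h : ℤ) : ℝ :=
  D + (if h ≤ L then 2 * (L : ℝ) ^ 2 - (h : ℝ) ^ 2 else if h ≤ 2 * L then (2 * (L : ℝ) - h) ^ 2 else 0)

lemma Us_super {z : ℝ} (hz : 0 < z) (hz1 : z < 1) (M : ℕ) (hM : 1 ≤ M) (h : ℤ) (h0 : 0 ≤ h) :
    1 + z ^ ((h + 1) / 2).toNat *
      (if h ≤ 0 then Us (2 / (1 - z ^ M)) (2 * M) 1
        else (Us (2 / (1 - z ^ M)) (2 * M) (h + 1) + Us (2 / (1 - z ^ M)) (2 * M) (h - 1)) / 2)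
      ≤ Us (2 / (1 - z ^ M)) (2 * M) h := by
  have hq : z ^ M < 1 := pow_lt_one₀ hz.le hz1 (by omega)
  have hq0 : 0 < z ^ M := by positivity
  set q := z ^ M with hqd
  set D := 2 / (1 - q) with hD
  have hD0 : D * (1 - q) = 2 := by rw [hD]; field_simp [show (1 - q) ≠ 0 by linarith]
  have hDpos : 0 < D := div_pos two_pos (by linarith)
  set L : ℤ := 2 * M with hL
  have hL2 : 2 ≤ L := by omega
  have hLr : (2 : ℝ) ≤ L := by exact_mod_cast hL2
  have hp1 : z ^ ((h + 1) / 2).toNat ≤ 1 := pow_le_one₀ hz.le hz1.le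
  have hp0 : 0 < z ^ ((h + 1) / 2).toNat := by positivity
  have h0r : (0 : ℝ) ≤ h := by exact_mod_cast h0
  rcases lt_or_ge h L with hl | hl
  · have hlr : (h : ℝ) + 1 ≤ L := by exact_mod_cast hl
    by_cases hz0 : h ≤ 0
    · have : h = 0 := by omega
      subst this
      rw [if_pos le_rfl]
      unfold Us
      rw [if_pos (by omega), if_pos (by omega)]
      norm_num
      linarith
    · rw [if_neg hz0]
      have e : (Us D L (h + 1) + Us D L (h - 1)) / 2 = Us D L h - 1 := by
        unfold Us
        rw [if_pos (by omega), if_pos (by omega), if_pos (by omega)]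
        push_cast; ring
      rw [e]
      have : 1 ≤ Us D L h := by
        unfold Us
        rw [if_pos (by omega)]
        nlinarith
      nlinarith
  · have hlr : (L : ℝ) ≤ h := by exact_mod_cast hl
    rw [if_neg (by omega)]
    have hpq : z ^ ((h + 1) / 2).toNat ≤ q := by
      rw [hqd]
      exact pow_le_pow_of_le_one hz.le hz1.le (by omega)
    have hU : D ≤ Us D L h := by
      unfold Us
      split_ifs with c1 c2
      · have : h = L := by omega
        rw [this]; nlinarith
      · nlinarith [sq_nonneg (2 * (L : ℝ) - h)]
      · linarith
    have hA : (Us D L (h + 1) + Us D L (h - 1)) / 2 ≤ Us D L h + 1 := by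
      rcases eq_or_lt_of_le hl with hl1 | hl1
      · unfold Us
        rw [if_neg (by omega), if_pos (by omega), if_pos (by omega), if_pos (by omega), ← hl1]
        push_cast; nlinarith
      · rcases lt_trichotomy h (2 * L) with hl2 | hl2 | hl2
        · by_cases hc : h - 1 ≤ L
          · have e : h = L + 1 := by omega
            unfold Us
            rw [if_neg (by omega), if_pos (by omega), if_pos (by omega), if_neg (by omega), if_pos (by omega), e]
            push_cast; nlinarith
          · unfold Us
            rw [if_neg (by omega), if_pos (by omega), if_neg (by omega), if_pos (by omega), if_neg (by omega), if_pos (by omega)]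
            push_cast; nlinarith
        · unfold Us
          rw [if_neg (by omega), if_neg (by omega), if_neg (by omega), if_pos (by omega),
            if_neg (by omega), if_pos (by omega), hl2]
          push_cast; nlinarith
        · have e1 : Us D L (h + 1) = D := by
            unfold Us; rw [if_neg (by omega), if_neg (by omega), add_zero]
          have e2 : Us D L h = D := by
            unfold Us; rw [if_neg (by omega), if_neg (by omega), add_zero]
          have e3 : Us D L (h - 1) = D := by
            unfold Us; rw [if_neg (by omega)]
            by_cases hc : h - 1 ≤ 2 * L
            · rw [if_pos hc]
              have : h = 2 * L + 1 := by omega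
              rw [this]; push_cast; ring
            · rw [if_neg hc, add_zero]
          rw [e1, e2, e3]; linarith
    have hA2 : z ^ ((h + 1) / 2).toNat * ((Us D L (h + 1) + Us D L (h - 1)) / 2)
        ≤ q * (Us D L h + 1) := by
      refine (mul_le_mul_of_nonneg_left hA hp0.le).trans ?_
      exact mul_le_mul_of_nonneg_right hpq (by linarith)
    nlinarith

lemma Vv_sum {z : ℝ} (hz : 0 < z) (hz1 : z < 1) (M : ℕ) (hM : 1 ≤ M) (N : ℕ) :
    ∀ h : ℤ, 0 ≤ h → ∑ n ∈ Finset.range N, Vv z n h ≤ Us (2 / (1 - z ^ M)) (2 * M) h := by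
  induction N with
  | zero =>
    intro h _
    have hq : z ^ M < 1 := pow_lt_one₀ hz.le hz1 (by omega)
    have : 0 ≤ 2 / (1 - z ^ M) := div_nonneg two_pos.le (by linarith)
    simp only [Finset.range_zero, Finset.sum_empty]
    unfold Us
    split_ifs with c1 c2
    · rename_i h0
      have hh : (h : ℝ) ≤ ((2 * M : ℤ) : ℝ) := by exact_mod_cast c1
      have h0r : (0 : ℝ) ≤ h := by exact_mod_cast h0
      nlinarith
    · positivity
    · linarith
  | succ N ih =>
    intro h h0
    rw [Finset.sum_range_succ']
    refine le_trans ?_ (Us_super hz hz1 M hM h h0)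
    simp only [Vv]
    rw [← Finset.mul_sum, add_comm]
    have hp0 : 0 < z ^ ((h + 1) / 2).toNat := by positivity
    refine add_le_add le_rfl (mul_le_mul_of_nonneg_left ?_ hp0.le)
    split_ifs with hc
    · exact ih 1 (by norm_num)
    · rw [← Finset.sum_div, Finset.sum_add_distrib]
      have := ih (h + 1) (by omega)
      have := ih (h - 1) (by omega)
      linarith

lemma Ww_prod (z : ℝ) (m : ℕ) : ∀ (x : ℤ) (g : ℤ → ℤ), Ww z m x g =
    ∏ i ∈ Finset.range m, dw z (x - i) (g (x - i)) (g (x - i - 1)) := by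
  induction m with
  | zero => intro x g; simp [Ww]
  | succ m ih =>
    intro x g
    rw [Finset.prod_range_succ', Ww, ih, mul_comm]
    congr 1
    · refine Finset.prod_congr rfl (fun i _ => ?_)
      have : x - 1 - (i : ℤ) = x - ((i + 1 : ℕ) : ℤ) := by push_cast; ring
      rw [this]
    · simp

lemma GW_le_prod {x : ℤ} {g : ℤ → ℤ} (h : CofT g) (m : ℕ) :
    GW x g ≤ ∏ i ∈ Finset.range m, wr (-(x - i)) (g (x - i)) (g (x - i - 1)) := by
  have hb : ∀ i, 0 ≤ bd x g i ∧ bd x g i ≤ 1 := by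
    intro i; unfold bd; split_ifs
    · exact ⟨wr_nonneg _ _ _, wr_le_one _ _ _⟩
    · exact ⟨wr_nonneg _ _ _, wr_le_one _ _ _⟩
  rw [GW_eq h, finprod_split _ ((Finset.range m).image (fun i : ℕ => x - (i : ℤ) - 1)) (bd_supp h)]
  rw [Finset.prod_image (by intro a _ b _ hab; simpa using hab)]
  have e : ∏ i ∈ Finset.range m, bd x g (x - (i : ℤ) - 1) =
      ∏ i ∈ Finset.range m, wr (-(x - i)) (g (x - i)) (g (x - i - 1)) := by
    refine Finset.prod_congr rfl (fun i _ => ?_)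
    unfold bd
    rw [if_neg (by omega)]
    congr 2 <;> ring_nf
  rw [e]
  have h1 : ∀ R : ℝ, R = ∏ᶠ i, (if i ∈ ((Finset.range m).image (fun i : ℕ => x - (i : ℤ) - 1)) then 1 else bd x g i) →
      0 ≤ R ∧ R ≤ 1 := by
    intro R hR
    rw [hR]
    refine finprod_induction (p := fun r : ℝ => 0 ≤ r ∧ r ≤ 1) ⟨zero_le_one, le_rfl⟩ ?_ ?_
    · intro a b ha hb; exact ⟨mul_nonneg ha.1 hb.1, mul_le_one₀ ha.2 hb.1 hb.2⟩
    · intro i; split_ifs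
      · exact ⟨zero_le_one, le_rfl⟩
      · exact hb i
  obtain ⟨r0, r1⟩ := h1 _ rfl
  have p0 : 0 ≤ ∏ i ∈ Finset.range m, wr (-(x - i)) (g (x - i)) (g (x - i - 1)) :=
    Finset.prod_nonneg (fun i _ => wr_nonneg _ _ _)
  have := mul_le_of_le_one_right p0 r1
  split_ifs
  · rwa [one_mul]
  · rw [zero_mul]; exact p0

lemma mu_le_Ww {z : ℝ} (hz : 0 < z) (hz1 : z < 1) {x : ℤ} {g : ℤ → ℤ} (h : GW x g ≠ 0)
    (h0 : g x = 0) (m : ℕ) : mu z x g ≤ (1 - z) / z * Ww z m x g := by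
  have hw := Ww_nonneg hz.le m x g
  unfold mu
  split_ifs with hk
  swap
  · have : 0 ≤ (1 - z) / z := div_nonneg (by linarith) hz.le
    positivity
  have hc := GW_cof h
  have hk2 : kp x g = Sg g := by rw [kp_eq hc, h0, add_zero]
  rw [hk2] at hk ⊢
  have e1 : z ^ ((Sg g).toNat - 1) = z ^ (Sg g).toNat / z := by
    rw [eq_div_iff hz.ne', ← pow_succ]; congr 1; omega
  rw [e1, Ww_prod]
  unfold dw
  rw [Finset.prod_mul_distrib, Finset.prod_pow_eq_pow_sum]
  have h1 := GW_le_prod (x := x) hc m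
  have h2 : z ^ (Sg g).toNat ≤ z ^ (∑ i ∈ Finset.range m, (if 0 < x - (i : ℤ) then ((g (x - i) + 1) / 2).toNat else 0)) := by
    refine pow_le_pow_of_le_one hz.le hz1.le ?_
    have h3 := Sg_ge h ((Finset.range m).image (fun i : ℕ => x - (i : ℤ)))
    rw [Finset.sum_image (by intro a _ b _ hab; simpa using hab)] at h3
    have h4 : ((∑ i ∈ Finset.range m, (if 0 < x - (i : ℤ) then ((g (x - i) + 1) / 2).toNat else 0) : ℕ) : ℤ)
        ≤ ∑ i ∈ Finset.range m, (g (x - (i : ℤ)) + 1) / 2 := by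
      rw [Nat.cast_sum]
      refine Finset.sum_le_sum (fun i _ => ?_)
      have := GW_ge h (x - i)
      split_ifs <;> push_cast <;> omega
    omega
  have h5 := GW_nonneg x g
  have h6 := mul_le_mul h2 h1 h5 (by positivity)
  have h7 : 0 ≤ (1 - z) / z := div_nonneg (by linarith) hz.le
  calc (1 - z) * (z ^ (Sg g).toNat / z) * GW x g = (1 - z) / z * (z ^ (Sg g).toNat * GW x g) := by ring
    _ ≤ _ := mul_le_mul_of_nonneg_left h6 h7

lemma right_agree {x : ℤ} (hx : 0 < x) {g g' : ℤ → ℤ} (h : GW x g ≠ 0) (h' : GW x g' ≠ 0)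
    (h0 : g x = 0) (h0' : g' x = 0) (y : ℤ) (hy : x ≤ y) : g y = g' y := by
  have key : ∀ j : ℕ, g (x + j) = g' (x + j) ∧ (g (x + j) = 0 ∨ g (x + j) = -1) := by
    intro j
    induction j with
    | zero => simp [h0, h0']
    | succ j ih =>
      have a1 := GW_VR h (x + j) (by omega)
      have a2 := GW_VR h' (x + j) (by omega)
      push_cast
      rw [← add_assoc]
      omega
  have := (key (y - x).toNat).1
  rwa [show x + ((y - x).toNat : ℤ) = y by omega] at this

lemma zero_est_site {z : ℝ} (hz : 0 < z) (hz1 : z < 1) {x : ℤ} (hx : 0 < x) (T : Finset (ℤ → ℤ))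
    (hT : ∀ g ∈ T, GW x g ≠ 0 ∧ g x = 0) :
    ∑ g ∈ T, mu z x g ≤ (1 - z) / z * Vv z x.toNat 0 := by
  have hN : ∃ N : ℕ, ∀ g ∈ T, ∀ i : ℤ, (N : ℤ) < |i| → g i = aTilde i := by
    classical
    clear hx
    induction T using Finset.induction_on with
    | empty => exact ⟨0, by simp⟩
    | insert g T hg ih =>
      obtain ⟨N, hN⟩ := ih (fun g hg => hT g (Finset.mem_insert_of_mem hg))
      obtain ⟨K, hK0, hK⟩ := (GW_cof (hT g (Finset.mem_insert_self g T)).1).large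
      refine ⟨max N K.toNat, fun g' hg' i hi => ?_⟩
      rcases Finset.mem_insert.mp hg' with rfl | h1
      · exact hK i (by omega)
      · exact hN g' h1 i (by omega)
  obtain ⟨N, hN⟩ := hN
  set m : ℕ := N + x.toNat with hm
  have h1 : ∑ g ∈ T, mu z x g ≤ ∑ g ∈ T, (1 - z) / z * Ww z m x g :=
    Finset.sum_le_sum (fun g hg => mu_le_Ww hz hz1 (hT g hg).1 (hT g hg).2 m)
  refine h1.trans ?_
  rw [← Finset.mul_sum]
  refine mul_le_mul_of_nonneg_left ?_ (div_nonneg (by linarith) hz.le)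
  refine Ww_sum hz.le m x 0 T (by push_cast [hm]; omega) (fun g hg => (hT g hg).2) ?_
  intro g hg g' hg' y hy
  rcases hy with hy | hy
  · exact right_agree hx (hT g hg).1 (hT g' hg').1 (hT g hg).2 (hT g' hg').2 y hy
  · have : (N : ℤ) < |y| := by
      rw [lt_abs]; right; push_cast [hm] at hy; omega
    rw [hN g hg y this, hN g' hg' y this]

lemma zero_est_pos {z : ℝ} (hz : 0 < z) (hz1 : z < 1) (M : ℕ) (hM : 1 ≤ M)
    (F : Finset (ℤ × (ℤ → ℤ))) (hF : ∀ p ∈ F, 0 < p.1 ∧ GW p.1 p.2 ≠ 0 ∧ p.2 p.1 = 0) :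
    ∑ p ∈ F, mu z p.1 p.2 ≤ (1 - z) / z * (2 / (1 - z ^ M) + 8 * (M : ℝ) ^ 2) := by
  classical
  have hnn : 0 ≤ (1 - z) / z := div_nonneg (by linarith) hz.le
  rw [← Finset.sum_fiberwise_of_maps_to (g := Prod.fst) (t := F.image Prod.fst)
    (fun p hp => Finset.mem_image_of_mem _ hp)]
  have h1 : ∀ x ∈ F.image Prod.fst, ∑ p ∈ F with p.1 = x, mu z p.1 p.2 ≤ (1 - z) / z * Vv z x.toNat 0 := by
    intro x hx
    obtain ⟨p0, hp0, hpx⟩ := Finset.mem_image.mp hx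
    have e : ∑ p ∈ F with p.1 = x, mu z p.1 p.2 =
        ∑ g ∈ (F.filter (fun p => p.1 = x)).image Prod.snd, mu z x g := by
      rw [Finset.sum_image]
      · refine Finset.sum_congr rfl (fun p hp => ?_)
        rw [(Finset.mem_filter.mp hp).2]
      · intro p hp q hq hpq
        have hp := (Finset.mem_filter.mp hp).2
        have hq := (Finset.mem_filter.mp hq).2
        exact Prod.ext (hp.trans hq.symm) hpq
    rw [e]
    refine zero_est_site hz hz1 (hpx ▸ (hF p0 hp0).1) _ ?_
    intro g hg
    obtain ⟨p, hp, rfl⟩ := Finset.mem_image.mp hg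
    obtain ⟨hp1, hp2⟩ := Finset.mem_filter.mp hp
    rw [← hp2]
    exact (hF p hp1).2
  refine (Finset.sum_le_sum h1).trans ?_
  rw [← Finset.mul_sum]
  refine mul_le_mul_of_nonneg_left ?_ hnn
  have hinj : Set.InjOn Int.toNat (F.image Prod.fst : Finset ℤ) := by
    intro a ha b hb hab
    obtain ⟨p, hp, rfl⟩ := Finset.mem_image.mp ha
    obtain ⟨q, hq, rfl⟩ := Finset.mem_image.mp hb
    have := (hF p hp).1
    have := (hF q hq).1
    omega
  rw [← Finset.sum_image (f := fun n => Vv z n 0) hinj]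
  obtain ⟨N, hN⟩ := Finset.exists_nat_subset_range ((F.image Prod.fst).image Int.toNat)
  refine (Finset.sum_le_sum_of_subset_of_nonneg hN (fun n _ _ => Vv_nonneg hz.le n 0)).trans ?_
  refine (Vv_sum hz hz1 M hM N 0 le_rfl).trans ?_
  unfold Us
  rw [if_pos (by omega)]
  push_cast
  apply le_of_eq; ring

/-- the mass of the pairs at height zero is small -/
lemma zero_est {z : ℝ} (hz : 0 < z) (hz1 : z < 1) (M : ℕ) (hM : 1 ≤ M)
    (F : Finset (ℤ × (ℤ → ℤ))) :
    ∑ p ∈ F, (if p.2 p.1 = 0 then mu z p.1 p.2 else 0) ≤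
      2 * ((1 - z) / z * (2 / (1 - z ^ M) + 8 * (M : ℝ) ^ 2)) := by
  classical
  have hsub : ∀ p : ℤ × (ℤ → ℤ), (if p.2 p.1 = 0 then mu z p.1 p.2 else 0) =
      (if (0 < p.1 ∧ GW p.1 p.2 ≠ 0 ∧ p.2 p.1 = 0) then mu z p.1 p.2 else 0) +
      (if (p.1 < 0 ∧ GW p.1 p.2 ≠ 0 ∧ p.2 p.1 = 0) then mu z p.1 p.2 else 0) := by
    rintro ⟨x, g⟩
    simp only
    by_cases h0 : g x = 0
    swap
    · simp [h0]
    by_cases hm : mu z x g = 0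
    · simp [hm]
    have hg := mu_ne hm
    rcases lt_trichotomy x 0 with hx | hx | hx
    · simp [h0, hg.1, hx, not_lt.mpr hx.le]
    · exfalso; subst hx; exact hg.2 (GW_origin hg.1 h0)
    · simp [h0, hg.1, hx, not_lt.mpr hx.le]
  rw [Finset.sum_congr rfl (fun p _ => hsub p), Finset.sum_add_distrib, ← Finset.sum_filter,
    ← Finset.sum_filter, two_mul]
  refine add_le_add ?_ ?_
  · exact zero_est_pos hz hz1 M hM _ (fun p hp => (Finset.mem_filter.mp hp).2)
  · have hinj : Set.InjOn (fun p : ℤ × (ℤ → ℤ) => ((-p.1, fun y => p.2 (-y)) : ℤ × (ℤ → ℤ)))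
        (F.filter (fun p => p.1 < 0 ∧ GW p.1 p.2 ≠ 0 ∧ p.2 p.1 = 0) : Finset _) := by
      rintro ⟨x, g⟩ _ ⟨x', g'⟩ _ hh
      simp only [Prod.mk.injEq, neg_inj] at hh
      refine Prod.ext hh.1 (funext fun y => ?_)
      have := congrFun hh.2 (-y)
      simpa using this
    have e : ∑ p ∈ F with (p.1 < 0 ∧ GW p.1 p.2 ≠ 0 ∧ p.2 p.1 = 0), mu z p.1 p.2 =
        ∑ p ∈ (F.filter (fun p => p.1 < 0 ∧ GW p.1 p.2 ≠ 0 ∧ p.2 p.1 = 0)).image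
          (fun p : ℤ × (ℤ → ℤ) => ((-p.1, fun y => p.2 (-y)) : ℤ × (ℤ → ℤ))), mu z p.1 p.2 := by
      rw [Finset.sum_image hinj]
      exact Finset.sum_congr rfl (fun p _ => (mu_neg z p.1 p.2).symm)
    rw [e]
    refine zero_est_pos hz hz1 M hM _ ?_
    intro p hp
    obtain ⟨q, hq, rfl⟩ := Finset.mem_image.mp hp
    obtain ⟨h1, h2, h3⟩ := (Finset.mem_filter.mp hq).2
    refine ⟨by simpa using h1, ?_, ?_⟩
    · rw [GW_neg]; exact h2
    · simpa using h3

lemma Sg_pos {x : ℤ} {g : ℤ → ℤ} (h : GW x g ≠ 0) (hg : g ≠ aTilde) : 1 ≤ Sg g := by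
  obtain ⟨y, hy, hy1⟩ := GW_pos_site h hg
  have h1 := Sg_ge h {y}
  simp only [Finset.sum_singleton] at h1
  omega

set_option maxHeartbeats 400000 in
/-- comparison of the law of the position given the profile with the uniform law -/
lemma per_gamma {z : ℝ} (hz : 0 < z) (hz1 : z < 1) {x0 : ℤ} {g : ℤ → ℤ} (h0 : GW x0 g ≠ 0)
    (hg : g ≠ aTilde) : ∃ a b : ℤ, a ≤ b ∧ interI g = Set.Icc a b ∧
      (∀ x, GW x g ≠ 0 → x ∈ Finset.Icc a b) ∧
      ∀ S : Finset ℤ, S ⊆ Finset.Icc a b →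
        ∑ x ∈ S, mu z x g ≤ (S.card : ℝ) / ((Finset.Icc a b).card : ℝ) * ∑ x ∈ Finset.Icc a b, mu z x g
          + ∑ x ∈ Finset.Icc a b, (if g x = 0 then mu z x g else 0)
          + ∑ x ∈ Finset.Icc a b, mu z x g * ((z⁻¹) ^ (g x).toNat - 1) := by
  classical
  have hS1 := Sg_pos h0 hg
  have hcof := GW_cof h0
  obtain ⟨a, b, x, C, hax, hxb, hC, ga, gb, gpos, Gin, Gb, Ga, Gout, hI⟩ := GW_structure h0 hg
  set a' : ℤ := if a ≤ 0 then a else a + 1 with ha'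
  set b' : ℤ := if 0 ≤ b then b else b - 1 with hb'
  have hmem : ∀ y, (a' ≤ y ∧ y ≤ b') ↔ (a ≤ y ∧ y ≤ b ∧ (y = a → a ≤ 0) ∧ (y = b → 0 ≤ b)) := by
    intro y; rw [ha', hb']; split_ifs <;> omega
  have hnn : ∀ y, 0 ≤ mu z y g := fun y => mu_nonneg hz.le hz1.le y g
  set B : ℝ := (1 - z) * z ^ ((Sg g).toNat - 1) * C with hB
  have hB0 : 0 ≤ B := by
    have : 0 ≤ 1 - z := by linarith
    rw [hB]; positivity
  have hmu : ∀ y, 0 ≤ g y → mu z y g * (z⁻¹) ^ (g y).toNat = B * (GW y g / C) := by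
    intro y hy
    unfold mu
    have hk : kp y g = Sg g + g y := kp_eq hcof y
    rw [if_pos (by omega), hB]
    have e : z ^ ((kp y g).toNat - 1) = z ^ ((Sg g).toNat - 1) * z ^ (g y).toNat := by
      rw [← pow_add]; congr 1; omega
    rw [e, inv_pow]
    have : z ^ (g y).toNat ≠ 0 := by positivity
    field_simp
  refine ⟨a', b', ?_, ?_, ?_, ?_⟩
  · rw [ha', hb']; split_ifs <;> omega
  · rw [hI]; ext y; exact (hmem y).symm
  · intro y hy
    rw [Finset.mem_Icc, hmem]
    have h1 : ¬ (y < a ∨ b < y) := fun hc => hy (Gout y hc)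
    refine ⟨by omega, by omega, ?_, ?_⟩
    · rintro rfl; by_contra hc; apply hy; rw [Ga, if_neg (by omega)]
    · rintro rfl; by_contra hc; apply hy; rw [Gb, if_neg (by omega)]
  intro S hS
  set I := Finset.Icc a' b' with hIdef
  have g0 : ∀ y ∈ I, 0 ≤ g y := by
    intro y hy
    rw [hIdef, Finset.mem_Icc, hmem] at hy
    rcases eq_or_lt_of_le hy.1 with h | h
    · rw [← h, ga]
    · rcases eq_or_lt_of_le hy.2.1 with h2 | h2
      · rw [h2, gb]
      · linarith [gpos y h h2]
  have hxI : x ∈ I := by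
    rw [hIdef, Finset.mem_Icc, hmem]; omega
  have hcard : 0 < (I.card : ℝ) := by
    exact_mod_cast Finset.card_pos.mpr ⟨x, hxI⟩
  -- total mass
  have hcount : (I.card : ℝ) ≤ ∑ y ∈ I, GW y g / C := by
    have h1 : 0 ≤ ∑ y ∈ I, (GW y g / C - 1) := by
      have e1 : I = (Finset.Icc a b).filter (fun y => a' ≤ y ∧ y ≤ b') := by
        ext y
        rw [hIdef, Finset.mem_filter, Finset.mem_Icc, Finset.mem_Icc, hmem]
        omega
      have e2 : Finset.Icc a b = insert a (insert b (Finset.Ioo a b)) := by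
        ext y; simp only [Finset.mem_Icc, Finset.mem_insert, Finset.mem_Ioo]; omega
      rw [e1, Finset.sum_filter, e2, Finset.sum_insert (by simp; omega), Finset.sum_insert (by simp)]
      have e3 : ∑ y ∈ Finset.Ioo a b, (if a' ≤ y ∧ y ≤ b' then GW y g / C - 1 else 0) = 0 := by
        refine Finset.sum_eq_zero (fun y hy => ?_)
        rw [Finset.mem_Ioo] at hy
        rw [Gin y hy.1 hy.2, div_self hC.ne', sub_self]; simp
      rw [e3, Ga, Gb]
      simp only [hmem]
      have e4 : 2 * C / C = 2 := by field_simp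
      split_ifs <;> first | (exfalso; omega) | (rw [e4]; norm_num) | norm_num
    rw [Finset.sum_sub_distrib] at h1
    simp only [Finset.sum_const, nsmul_eq_mul, mul_one] at h1
    linarith
  have hBI : B * I.card ≤ ∑ y ∈ I, mu z y g + ∑ y ∈ I, mu z y g * ((z⁻¹) ^ (g y).toNat - 1) := by
    rw [← Finset.sum_add_distrib]
    have : ∀ y ∈ I, mu z y g + mu z y g * ((z⁻¹) ^ (g y).toNat - 1) = B * (GW y g / C) := by
      intro y hy; rw [← hmu y (g0 y hy)]; ring
    rw [Finset.sum_congr rfl this, ← Finset.mul_sum]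
    exact mul_le_mul_of_nonneg_left hcount hB0
  have hzinv : 1 ≤ z⁻¹ := (one_le_inv₀ hz).mpr hz1.le
  have hJ : 0 ≤ ∑ y ∈ I, mu z y g * ((z⁻¹) ^ (g y).toNat - 1) := by
    refine Finset.sum_nonneg (fun y _ => mul_nonneg (hnn y) ?_)
    have := one_le_pow₀ hzinv (n := (g y).toNat)
    linarith
  have hSle : ∑ y ∈ S, mu z y g ≤ S.card * B + ∑ y ∈ I, (if g y = 0 then mu z y g else 0) := by
    have h1 : ∀ y ∈ S, mu z y g ≤ B + (if g y = 0 then mu z y g else 0) := by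
      intro y hy
      have hyI := hS hy
      have hgy := g0 y hyI
      split_ifs with hc
      · linarith
      · rw [hIdef, Finset.mem_Icc, hmem] at hyI
        have ya : y ≠ a := by rintro rfl; exact hc ga
        have yb : y ≠ b := by rintro rfl; exact hc gb
        have h2 := hmu y hgy
        rw [Gin y (by omega) (by omega), div_self hC.ne', mul_one] at h2
        rw [add_zero, ← h2]
        exact le_mul_of_one_le_right (hnn y) (one_le_pow₀ hzinv)
    refine (Finset.sum_le_sum h1).trans ?_
    rw [Finset.sum_add_distrib]
    simp only [Finset.sum_const, nsmul_eq_mul]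
    refine add_le_add le_rfl (Finset.sum_le_sum_of_subset_of_nonneg hS ?_)
    intro y _ _
    split_ifs
    · exact hnn y
    · exact le_rfl
  have hr1 : (S.card : ℝ) / I.card ≤ 1 := by
    rw [div_le_one hcard]; exact_mod_cast Finset.card_le_card hS
  have hr0 : 0 ≤ (S.card : ℝ) / I.card := div_nonneg (Nat.cast_nonneg _) hcard.le
  have hfin : (S.card : ℝ) * B ≤ (S.card : ℝ) / I.card * ∑ y ∈ I, mu z y g +
      ∑ y ∈ I, mu z y g * ((z⁻¹) ^ (g y).toNat - 1) := by
    have h1 := mul_le_mul_of_nonneg_left hBI hr0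
    have h2 : (S.card : ℝ) / I.card * (B * I.card) = S.card * B := by
      rw [mul_comm B, ← mul_assoc, div_mul_cancel₀ _ hcard.ne']
    rw [h2, mul_add] at h1
    have h3 := mul_le_of_le_one_left hJ hr1
    linarith
  linarith

lemma EqVis_sum {P : Measure (ℕ → Bool)} [IsProbabilityMeasure P]
    (hP : ∀ (s : Finset ℕ) (b : ℕ → Bool), P {ω | ∀ j ∈ s, ω j = b j} = (1 / 2 : ENNReal) ^ s.card)
    (k : ℕ) (F : Finset (ℤ × (ℤ → ℤ))) : ∑ p ∈ F, P.real (EqVis k p.1 p.2) ≤ 1 := by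
  rw [← measureReal_biUnion_finset]
  · exact measureReal_le_one
  · intro p _ q _ hpq
    refine Set.disjoint_left.mpr (fun ω h1 h2 => hpq ?_)
    exact Prod.ext (h1.1.symm.trans h2.1) (h1.2.symm.trans h2.2)
  · intro p _
    exact EqVis_meas hP k p.1 p.2

lemma geo_bound {z ρ : ℝ} (hz : 0 < z) (hz1 : z < 1) (hρ : 0 < ρ) (k h : ℕ) (hk : 1 ≤ k)
    (hh : h ^ 2 ≤ 4 * k) :
    (1 - z) * z ^ (k - 1) * ((z⁻¹) ^ h - 1) ≤
      (1 - z) ^ 2 * (z⁻¹) ^ 3 * (ρ * (k * (√z) ^ k) + (1 / ρ) * (√z) ^ k) := by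
  have hr0 : 0 < √z := Real.sqrt_pos.mpr hz
  have hr1 : √z < 1 := by rw [Real.sqrt_lt' one_pos]; simpa using hz1
  have hrz : √z ^ 2 = z := Real.sq_sqrt hz.le
  set r := √z with hr
  have hhr : (h : ℝ) ^ 2 ≤ 4 * k := by exact_mod_cast hh
  have h1 : (h : ℝ) ≤ ρ * k + 1 / ρ := by
    have e : (ρ * k + 1 / ρ) ^ 2 = (ρ * k - 1 / ρ) ^ 2 + 4 * k := by field_simp; ring
    have h0 : 0 ≤ ρ * k + 1 / ρ := by positivity
    refine le_of_sq_le_sq ?_ h0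
    rw [e]; nlinarith [sq_nonneg (ρ * k - 1 / ρ)]
  have h2 : 2 * h ≤ k + 4 := by
    by_contra hc
    push Not at hc
    nlinarith [sq_nonneg ((k : ℤ) - 4)]
  have h3 : 1 - z ^ h ≤ h * (1 - z) := by
    have := one_add_mul_le_pow (a := z - 1) (by linarith) h
    have e : 1 + (z - 1) = z := by ring
    rw [e] at this
    linarith
  have h4 : (z⁻¹) ^ h - 1 ≤ (z⁻¹) ^ h * (h * (1 - z)) := by
    have e : (z⁻¹) ^ h - 1 = (z⁻¹) ^ h * (1 - z ^ h) := by
      rw [inv_pow]; have : z ^ h ≠ 0 := by positivity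
      field_simp
    rw [e]
    exact mul_le_mul_of_nonneg_left h3 (by positivity)
  have h5 : z ^ (k - 1) * (z⁻¹) ^ h ≤ (z⁻¹) ^ 3 * r ^ k := by
    have e1 : z ^ k = z ^ (k - 1) * z := by rw [← pow_succ]; congr 1; omega
    have e2 : z ^ k * z ^ 2 ≤ r ^ k * z ^ h := by
      rw [← hrz, ← pow_mul, ← pow_mul, ← pow_mul, ← pow_add, ← pow_add]
      exact pow_le_pow_of_le_one hr0.le hr1.le (by omega)
    rw [inv_pow, inv_pow, ← div_eq_mul_inv, ← div_eq_inv_mul, div_le_div_iff₀ (by positivity) (by positivity)]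
    calc z ^ (k - 1) * z ^ 3 = z ^ k * z ^ 2 := by rw [e1]; ring
      _ ≤ _ := e2
  have hd : 0 ≤ 1 - z := by linarith
  calc (1 - z) * z ^ (k - 1) * ((z⁻¹) ^ h - 1)
      ≤ (1 - z) * z ^ (k - 1) * ((z⁻¹) ^ h * (h * (1 - z))) :=
        mul_le_mul_of_nonneg_left h4 (by positivity)
    _ = (1 - z) ^ 2 * h * (z ^ (k - 1) * (z⁻¹) ^ h) := by ring
    _ ≤ (1 - z) ^ 2 * h * ((z⁻¹) ^ 3 * r ^ k) := mul_le_mul_of_nonneg_left h5 (by positivity)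
    _ = (1 - z) ^ 2 * ((z⁻¹) ^ 3 * r ^ k) * h := by ring
    _ ≤ (1 - z) ^ 2 * ((z⁻¹) ^ 3 * r ^ k) * (ρ * k + 1 / ρ) :=
        mul_le_mul_of_nonneg_left h1 (by positivity)
    _ = _ := by ring

lemma geo_sum {z ρ : ℝ} (hz : 0 < z) (hz1 : z < 1) (hρ : 0 < ρ) (T : Finset ℕ) :
    ∑ k ∈ T, (1 - z) ^ 2 * (z⁻¹) ^ 3 * (ρ * (k * (√z) ^ k) + (1 / ρ) * (√z) ^ k)
      ≤ (z⁻¹) ^ 3 * (4 * ρ + 2 * (1 - z) / ρ) := by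
  have hr0 : 0 < √z := Real.sqrt_pos.mpr hz
  have hr1 : √z < 1 := by rw [Real.sqrt_lt' one_pos]; simpa using hz1
  have hrz : √z ^ 2 = z := Real.sq_sqrt hz.le
  set r := √z with hr
  have hn : ‖r‖ < 1 := by rw [Real.norm_eq_abs, abs_of_pos hr0]; exact hr1
  have s1 : ∑ k ∈ T, (k : ℝ) * r ^ k ≤ r / (1 - r) ^ 2 := by
    rw [← tsum_coe_mul_geometric_of_norm_lt_one hn]
    refine Summable.sum_le_tsum T (fun k _ => by positivity) ?_
    exact (hasSum_coe_mul_geometric_of_norm_lt_one hn).summable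
  have s2 : ∑ k ∈ T, r ^ k ≤ (1 - r)⁻¹ := by
    rw [← tsum_geometric_of_lt_one hr0.le hr1]
    exact Summable.sum_le_tsum T (fun k _ => by positivity) (summable_geometric_of_lt_one hr0.le hr1)
  rw [← Finset.mul_sum, Finset.sum_add_distrib, ← Finset.mul_sum, ← Finset.mul_sum]
  have hd : 0 < 1 - z := by linarith
  have hdr : 0 < 1 - r := by linarith
  have hz2 : 1 - z = (1 - r) * (1 + r) := by rw [← hrz]; ring
  have t1 : (1 - z) ^ 2 * (r / (1 - r) ^ 2) ≤ 4 := by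
    rw [hz2]
    have : ((1 - r) * (1 + r)) ^ 2 * (r / (1 - r) ^ 2) = (1 + r) ^ 2 * r := by
      field_simp
    rw [this]; nlinarith
  have t2 : (1 - z) * (1 - r)⁻¹ ≤ 2 := by
    rw [hz2]
    have : (1 - r) * (1 + r) * (1 - r)⁻¹ = 1 + r := by field_simp
    rw [this]; linarith
  have u1 : (1 - z) ^ 2 * ∑ k ∈ T, (k : ℝ) * r ^ k ≤ 4 :=
    (mul_le_mul_of_nonneg_left s1 (by positivity)).trans t1
  have u2 : (1 - z) * ∑ k ∈ T, r ^ k ≤ 2 :=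
    (mul_le_mul_of_nonneg_left s2 hd.le).trans t2
  have hz3 : 0 ≤ (z⁻¹) ^ 3 := by positivity
  calc (1 - z) ^ 2 * (z⁻¹) ^ 3 * (ρ * ∑ k ∈ T, (k : ℝ) * r ^ k + 1 / ρ * ∑ k ∈ T, r ^ k)
      = (z⁻¹) ^ 3 * (ρ * ((1 - z) ^ 2 * ∑ k ∈ T, (k : ℝ) * r ^ k)
        + (1 - z) / ρ * ((1 - z) * ∑ k ∈ T, r ^ k)) := by ring
    _ ≤ (z⁻¹) ^ 3 * (ρ * 4 + (1 - z) / ρ * 2) := by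
        refine mul_le_mul_of_nonneg_left (add_le_add ?_ ?_) hz3
        · exact mul_le_mul_of_nonneg_left u1 hρ.le
        · exact mul_le_mul_of_nonneg_left u2 (by positivity)
    _ = _ := by ring

lemma small_est {P : Measure (ℕ → Bool)} [IsProbabilityMeasure P]
    (hP : ∀ (s : Finset ℕ) (b : ℕ → Bool), P {ω | ∀ j ∈ s, ω j = b j} = (1 / 2 : ENNReal) ^ s.card)
    {z ρ : ℝ} (hz : 0 < z) (hz1 : z < 1) (hρ : 0 < ρ) (F : Finset (ℤ × (ℤ → ℤ))) :
    ∑ p ∈ F, mu z p.1 p.2 * ((z⁻¹) ^ (p.2 p.1).toNat - 1) ≤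
      (z⁻¹) ^ 3 * (4 * ρ + 2 * (1 - z) / ρ) := by
  classical
  obtain ⟨K, hK⟩ : ∃ K : ℤ × (ℤ → ℤ) → ℕ, ∀ p, K p = (kp p.1 p.2).toNat := ⟨_, fun _ => rfl⟩
  refine le_trans ?_ (geo_sum hz hz1 hρ (F.image K))
  rw [← Finset.sum_fiberwise_of_maps_to (g := K)
    (t := F.image K) (fun p hp => Finset.mem_image_of_mem _ hp)]
  refine Finset.sum_le_sum (fun k _ => ?_)
  set c := (1 - z) ^ 2 * (z⁻¹) ^ 3 * (ρ * (k * (√z) ^ k) + (1 / ρ) * (√z) ^ k) with hc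
  have hc0 : 0 ≤ c := by positivity
  have h1 : ∀ p ∈ F.filter (fun p => K p = k),
      mu z p.1 p.2 * ((z⁻¹) ^ (p.2 p.1).toNat - 1) ≤ c * P.real (EqVis k p.1 p.2) := by
    intro p hp
    obtain ⟨_, hpk⟩ := Finset.mem_filter.mp hp
    rw [hK] at hpk
    by_cases hm : mu z p.1 p.2 = 0
    · rw [hm, zero_mul]; exact mul_nonneg hc0 measureReal_nonneg
    obtain ⟨hG, hne⟩ := mu_ne hm
    have hk1 := kp_pos hG hne
    have hkk : kp p.1 p.2 = k := by omega
    rw [EqVis_law hP, if_pos hkk]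
    unfold mu
    rw [if_pos hk1, hpk]
    have hle := height_le hG
    have h0 := GW_ne_h hG
    have := geo_bound hz hz1 hρ k (p.2 p.1).toNat (by omega) (by
      zify
      rw [Int.toNat_of_nonneg h0, ← hkk]; exact hle)
    calc (1 - z) * z ^ (k - 1) * GW p.1 p.2 * ((z⁻¹) ^ (p.2 p.1).toNat - 1)
        = ((1 - z) * z ^ (k - 1) * ((z⁻¹) ^ (p.2 p.1).toNat - 1)) * GW p.1 p.2 := by ring
      _ ≤ _ := mul_le_mul_of_nonneg_right this (GW_nonneg _ _)
  refine (Finset.sum_le_sum h1).trans ?_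
  rw [← Finset.mul_sum]
  exact mul_le_of_le_one_right hc0 (EqVis_sum hP k _)

lemma CofT_countable : {g : ℤ → ℤ | CofT g}.Countable := by
  refine (Set.countable_range (fun (f : ℤ →₀ ℤ) (i : ℤ) => f i + aTilde i)).mono ?_
  intro g hg
  have hf : (Function.support (fun i => g i - aTilde i)).Finite := by
    refine Set.Finite.subset hg ?_
    intro i hi hc
    have hc : g i = aTilde i := hc
    exact hi (by simp [hc])
  refine ⟨Finsupp.ofSupportFinite _ hf, ?_⟩
  funext i
  simp [Finsupp.ofSupportFinite_coe]

/-- the pairs that can be visited -/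
def pairC : Set (ℤ × (ℤ → ℤ)) := {p | CofT p.2}

lemma pairC_countable : pairC.Countable := by
  have : pairC = (Set.univ : Set ℤ) ×ˢ {g : ℤ → ℤ | CofT g} := by
    ext p; simp [pairC]
  rw [this]
  exact Set.countable_univ.prod CofT_countable

/-- event: the pair is `p` and the uniform variable lies in `B` -/
def Ev (p : ℤ × (ℤ → ℤ)) (B : Set ℝ) : Set ((ℕ → Bool) × ℕ × ℝ) :=
  {ω | xRV ω = p.1 ∧ gammaRV ω = p.2 ∧ ω.2.2 ∈ B}

lemma Ev_eq {P : Measure (ℕ → Bool)} [IsProbabilityMeasure P]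
    (hP : ∀ (s : Finset ℕ) (b : ℕ → Bool), P {ω | ∀ j ∈ s, ω j = b j} = (1 / 2 : ENNReal) ^ s.card)
    (p : ℤ × (ℤ → ℤ)) (B : Set ℝ) :
    Ev p B = EqVis (kp p.1 p.2).toNat p.1 p.2 ×ˢ (({(kp p.1 p.2).toNat} : Set ℕ) ×ˢ B) := by
  ext ω
  obtain ⟨ω, k, u⟩ := ω
  simp only [Ev, Set.mem_ofPred_eq, Set.mem_prod, Set.mem_singleton_iff]
  constructor
  · rintro ⟨h1, h2, h3⟩
    have h4 : ω ∈ EqVis k p.1 p.2 := ⟨h1, h2⟩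
    have h5 := (EqVis_ne hP k ω h4).2
    have h6 : (kp p.1 p.2).toNat = k := by omega
    exact ⟨h6 ▸ h4, h6.symm, h3⟩
  · rintro ⟨h1, h2, h3⟩
    rw [← h2] at h1
    exact ⟨h1.1, h1.2, h3⟩

lemma Ev_meas {P : Measure (ℕ → Bool)} [IsProbabilityMeasure P]
    (hP : ∀ (s : Finset ℕ) (b : ℕ → Bool), P {ω | ∀ j ∈ s, ω j = b j} = (1 / 2 : ENNReal) ^ s.card)
    (p : ℤ × (ℤ → ℤ)) {B : Set ℝ} (hB : MeasurableSet B) : MeasurableSet (Ev p B) := by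
  rw [Ev_eq hP]
  exact (EqVis_meas hP _ _ _).prod ((measurableSet_singleton _).prod hB)

lemma Ev_law {P : Measure (ℕ → Bool)} [IsProbabilityMeasure P]
    (hP : ∀ (s : Finset ℕ) (b : ℕ → Bool), P {ω | ∀ j ∈ s, ω j = b j} = (1 / 2 : ENNReal) ^ s.card)
    {z : ℝ} (hz : 0 < z) (hz1 : z < 1) {ν : Measure ℕ} [IsProbabilityMeasure ν] (h0 : ν {0} = 0)
    (hk : ∀ k : ℕ, 1 ≤ k → ν {k} = ENNReal.ofReal ((1 - z) * z ^ (k - 1)))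
    (lam : Measure ℝ) [IsProbabilityMeasure lam] (p : ℤ × (ℤ → ℤ)) (B : Set ℝ) :
    (P.prod (ν.prod lam)) (Ev p B) = lam B * ENNReal.ofReal (mu z p.1 p.2) := by
  rw [Ev_eq hP, Measure.prod_prod, Measure.prod_prod]
  have h1 := EqVis_law hP (kp p.1 p.2).toNat p.1 p.2
  have h2 : P (EqVis (kp p.1 p.2).toNat p.1 p.2) =
      ENNReal.ofReal (P.real (EqVis (kp p.1 p.2).toNat p.1 p.2)) := by
    rw [ofReal_measureReal]
  rw [h2, h1]
  unfold mu
  by_cases hc : 1 ≤ kp p.1 p.2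
  · rw [if_pos (by omega), if_pos hc, hk _ (by omega), mul_comm, mul_comm (ENNReal.ofReal _) (lam B),
      mul_assoc, ← ENNReal.ofReal_mul]
    have : 0 ≤ 1 - z := by linarith
    positivity
  · rw [if_neg hc]
    have : (kp p.1 p.2).toNat = 0 := by omega
    rw [this, h0]; simp

/-- the uniform choice in the interval attached to `g` -/
noncomputable def uSel (g : ℤ → ℤ) (u : ℝ) : ℤ :=
  sInf (interI g) + ⌈u * ((interI g).ncard : ℝ)⌉ - 1

lemma uSel_meas (g : ℤ → ℤ) (S : Set ℤ) : MeasurableSet {u | uSel g u ∈ S} := by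
  have : Measurable (fun u : ℝ => ⌈u * ((interI g).ncard : ℝ)⌉) :=
    Int.measurable_ceil.comp (measurable_id.mul_const _)
  have e : {u | uSel g u ∈ S} = (fun u : ℝ => ⌈u * ((interI g).ncard : ℝ)⌉) ⁻¹'
      {j | sInf (interI g) + j - 1 ∈ S} := rfl
  rw [e]
  exact this (MeasurableSet.of_discrete)

lemma event_x (E : Set (ℤ × (ℤ → ℤ))) : (fun ω => (xRV ω, gammaRV ω)) ⁻¹' E =
    ⋃ p ∈ pairC, Ev p {_u | p ∈ E} := by
  ext ω
  simp only [Set.mem_preimage, Set.mem_iUnion, exists_prop]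
  constructor
  · intro h
    exact ⟨(xRV ω, gammaRV ω), modLoc_CofT _ _, rfl, rfl, h⟩
  · rintro ⟨p, _, h1, h2, h3⟩
    have : (xRV ω, gammaRV ω) = p := Prod.ext h1 h2
    rw [this]; exact h3

lemma event_u (E : Set (ℤ × (ℤ → ℤ))) : (fun ω => (uRV ω, gammaRV ω)) ⁻¹' E =
    ⋃ p ∈ pairC, Ev p {u | uSel p.2 u ∈ {x | (x, p.2) ∈ E}} := by
  ext ω
  simp only [Set.mem_preimage, Set.mem_iUnion, exists_prop]
  constructor
  · intro h
    exact ⟨(xRV ω, gammaRV ω), modLoc_CofT _ _, rfl, rfl, h⟩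
  · rintro ⟨p, _, h1, h2, h3⟩
    have h3 : (uSel p.2 ω.2.2, p.2) ∈ E := h3
    rw [← h2] at h3
    exact h3

lemma event_law {P : Measure (ℕ → Bool)} [IsProbabilityMeasure P]
    (hP : ∀ (s : Finset ℕ) (b : ℕ → Bool), P {ω | ∀ j ∈ s, ω j = b j} = (1 / 2 : ENNReal) ^ s.card)
    {z : ℝ} (hz : 0 < z) (hz1 : z < 1) {ν : Measure ℕ} [IsProbabilityMeasure ν] (h0 : ν {0} = 0)
    (hk : ∀ k : ℕ, 1 ≤ k → ν {k} = ENNReal.ofReal ((1 - z) * z ^ (k - 1)))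
    (lam : Measure ℝ) [IsProbabilityMeasure lam] (B : ℤ × (ℤ → ℤ) → Set ℝ)
    (hB : ∀ p, MeasurableSet (B p)) :
    (P.prod (ν.prod lam)) (⋃ p ∈ pairC, Ev p (B p)) =
      ∑' g : ℤ → ℤ, ∑' x : ℤ, lam (B (x, g)) * ENNReal.ofReal (mu z x g) := by
  rw [measure_biUnion pairC_countable]
  · simp only [Ev_law hP hz hz1 h0 hk lam]
    rw [tsum_subtype pairC (fun p => lam (B p) * ENNReal.ofReal (mu z p.1 p.2))]
    have e : pairC.indicator (fun p => lam (B p) * ENNReal.ofReal (mu z p.1 p.2)) =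
        fun p => lam (B p) * ENNReal.ofReal (mu z p.1 p.2) := by
      rw [Set.indicator_eq_self]
      intro p hp
      have : mu z p.1 p.2 ≠ 0 := by
        intro hc; apply hp; simp [hc]
      exact GW_cof (mu_ne this).1
    rw [e, ENNReal.tsum_prod', ENNReal.tsum_comm]
  · intro p _ q _ hpq
    refine Set.disjoint_left.mpr (fun ω h1 h2 => hpq ?_)
    exact Prod.ext (h1.1.symm.trans h2.1) (h1.2.1.symm.trans h2.2.1)
  · intro p _
    exact Ev_meas hP p (hB p)

lemma event_meas {P : Measure (ℕ → Bool)} [IsProbabilityMeasure P]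
    (hP : ∀ (s : Finset ℕ) (b : ℕ → Bool), P {ω | ∀ j ∈ s, ω j = b j} = (1 / 2 : ENNReal) ^ s.card)
    (B : ℤ × (ℤ → ℤ) → Set ℝ)
    (hB : ∀ p, MeasurableSet (B p)) : MeasurableSet (⋃ p ∈ pairC, Ev p (B p)) :=
  MeasurableSet.biUnion pairC_countable (fun p _ => Ev_meas hP p (hB p))

lemma uSel_law {g : ℤ → ℤ} {a b : ℤ} (hab : a ≤ b) (hI : interI g = Set.Icc a b) (E : Set ℤ)
    (S : Finset ℤ) (hS : S ⊆ Finset.Icc a b) (hSE : ∀ x ∈ S, x ∈ E) :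
    ENNReal.ofReal ((S.card : ℝ) / ((Finset.Icc a b).card : ℝ)) ≤
      (volume.restrict (Set.Icc (0 : ℝ) 1)) {u | uSel g u ∈ E} := by
  have hcard : ((interI g).ncard : ℝ) = ((Finset.Icc a b).card : ℝ) := by
    rw [hI, ← Finset.coe_Icc, Set.ncard_coe_finset]
  have hn : ((Finset.Icc a b).card : ℝ) = (b : ℝ) - a + 1 := by
    rw [Int.card_Icc]
    have : (((b + 1 - a).toNat : ℤ) : ℝ) = ((b + 1 - a : ℤ) : ℝ) := by
      rw [Int.toNat_of_nonneg (by omega)]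
    rw [Int.cast_natCast] at this
    rw [this]; push_cast; ring
  set n : ℝ := ((Finset.Icc a b).card : ℝ) with hnd
  have habr : (a : ℝ) ≤ b := by exact_mod_cast hab
  have hn0 : 0 < n := by rw [hn]; linarith
  have hsel : ∀ u, uSel g u = a + ⌈u * n⌉ - 1 := by
    intro u
    unfold uSel
    rw [hcard, hI, csInf_Icc hab]
  set J : ℤ → Set ℝ := fun x => Set.Ioc (((x : ℝ) - a) / n) (((x : ℝ) - a + 1) / n) with hJ
  have hmem : ∀ x u, u ∈ J x → uSel g u = x := by
    intro x u hu
    rw [hsel]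
    have h1 := (div_lt_iff₀ hn0).mp hu.1
    have h2 := (le_div_iff₀ hn0).mp hu.2
    have : ⌈u * n⌉ = x - a + 1 := by
      rw [Int.ceil_eq_iff]; push_cast
      constructor <;> linarith
    rw [this]; ring
  have hsub : (⋃ x ∈ S, J x) ⊆ {u | uSel g u ∈ E} ∩ Set.Icc (0 : ℝ) 1 := by
    intro u hu
    simp only [Set.mem_iUnion, exists_prop] at hu
    obtain ⟨x, hx, hu⟩ := hu
    refine ⟨?_, ?_, ?_⟩
    · show uSel g u ∈ E
      rw [hmem x u hu]; exact hSE x hx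
    · have hxi := Finset.mem_Icc.mp (hS hx)
      have : (a : ℝ) ≤ x := by exact_mod_cast hxi.1
      exact (div_nonneg (by linarith) hn0.le).trans hu.1.le
    · have hxi := Finset.mem_Icc.mp (hS hx)
      have : (x : ℝ) ≤ b := by exact_mod_cast hxi.2
      refine hu.2.trans ?_
      rw [div_le_one hn0, hn]; linarith
  rw [Measure.restrict_apply (uSel_meas g E)]
  refine le_trans (le_of_eq ?_) (measure_mono hsub)
  rw [measure_biUnion_finset]
  · have : ∀ x ∈ S, volume (J x) = ENNReal.ofReal (1 / n) := by
      intro x _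
      rw [hJ]
      simp only [Real.volume_Ioc]
      congr 1; ring
    rw [Finset.sum_congr rfl this, Finset.sum_const, nsmul_eq_mul, div_eq_mul_one_div,
      ENNReal.ofReal_mul (Nat.cast_nonneg _), ENNReal.ofReal_natCast]
  · intro x _ y _ hxy
    refine Set.disjoint_left.mpr (fun u h1 h2 => hxy ?_)
    rw [← hmem x u h1, ← hmem y u h2]
  · intro x _; exact measurableSet_Ioc

/-- error from the sites of height zero -/
noncomputable def err1 (z : ℝ) (M : ℕ) : ℝ := 2 * ((1 - z) / z * (2 / (1 - z ^ M) + 8 * (M : ℝ) ^ 2))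

/-- error from the discount factor -/
noncomputable def err2 (z ρ : ℝ) : ℝ := (z⁻¹) ^ 3 * (4 * ρ + 2 * (1 - z) / ρ)

lemma err1_nonneg {z : ℝ} (hz : 0 < z) (hz1 : z < 1) (M : ℕ) (hM : 1 ≤ M) : 0 ≤ err1 z M := by
  have := zero_est hz hz1 M hM ∅
  simpa [err1] using this

lemma err2_nonneg {z ρ : ℝ} (hz : 0 < z) (hz1 : z < 1) (hρ : 0 < ρ) : 0 ≤ err2 z ρ := by
  unfold err2
  have : 0 ≤ 1 - z := by linarith
  positivity

lemma tsum_err1 {z : ℝ} (hz : 0 < z) (hz1 : z < 1) (M : ℕ) (hM : 1 ≤ M) :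
    ∑' g : ℤ → ℤ, ∑' x : ℤ, ENNReal.ofReal (if g x = 0 then mu z x g else 0) ≤
      ENNReal.ofReal (err1 z M) := by
  rw [ENNReal.tsum_comm, ← ENNReal.tsum_prod
    (f := fun (x : ℤ) (g : ℤ → ℤ) => ENNReal.ofReal (if g x = 0 then mu z x g else 0)),
    ENNReal.tsum_eq_iSup_sum]
  refine iSup_le (fun F => ?_)
  rw [← ENNReal.ofReal_sum_of_nonneg]
  · exact ENNReal.ofReal_le_ofReal (zero_est hz hz1 M hM F)
  · intro p _
    split_ifs
    · exact mu_nonneg hz.le hz1.le _ _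
    · exact le_rfl

lemma disc_nonneg {z : ℝ} (hz : 0 < z) (hz1 : z < 1) (x : ℤ) (g : ℤ → ℤ) :
    0 ≤ mu z x g * ((z⁻¹) ^ (g x).toNat - 1) := by
  refine mul_nonneg (mu_nonneg hz.le hz1.le _ _) ?_
  have := one_le_pow₀ ((one_le_inv₀ hz).mpr hz1.le) (n := (g x).toNat)
  linarith

lemma tsum_err2 {P : Measure (ℕ → Bool)} [IsProbabilityMeasure P]
    (hP : ∀ (s : Finset ℕ) (b : ℕ → Bool), P {ω | ∀ j ∈ s, ω j = b j} = (1 / 2 : ENNReal) ^ s.card)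
    {z ρ : ℝ} (hz : 0 < z) (hz1 : z < 1) (hρ : 0 < ρ) :
    ∑' g : ℤ → ℤ, ∑' x : ℤ, ENNReal.ofReal (mu z x g * ((z⁻¹) ^ (g x).toNat - 1)) ≤
      ENNReal.ofReal (err2 z ρ) := by
  rw [ENNReal.tsum_comm, ← ENNReal.tsum_prod
    (f := fun (x : ℤ) (g : ℤ → ℤ) => ENNReal.ofReal (mu z x g * ((z⁻¹) ^ (g x).toNat - 1))),
    ENNReal.tsum_eq_iSup_sum]
  refine iSup_le (fun F => ?_)
  rw [← ENNReal.ofReal_sum_of_nonneg]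
  · exact ENNReal.ofReal_le_ofReal (small_est hP hz hz1 hρ F)
  · intro p _
    exact disc_nonneg hz hz1 _ _

/-- comparison for a fixed profile -/
lemma fixed_gamma {z : ℝ} (hz : 0 < z) (hz1 : z < 1) (g : ℤ → ℤ) (E : Set ℤ) :
    ∑' x : ℤ, (volume.restrict (Set.Icc (0 : ℝ) 1)) {_u | x ∈ E} * ENNReal.ofReal (mu z x g) ≤
      ∑' x : ℤ, (volume.restrict (Set.Icc (0 : ℝ) 1)) {u | uSel g u ∈ E} * ENNReal.ofReal (mu z x g)
      + ∑' x : ℤ, ENNReal.ofReal (if g x = 0 then mu z x g else 0)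
      + ∑' x : ℤ, ENNReal.ofReal (mu z x g * ((z⁻¹) ^ (g x).toNat - 1)) := by
  classical
  by_cases hex : ∃ x0, mu z x0 g ≠ 0
  swap
  · push Not at hex
    simp [hex]
  obtain ⟨x0, hx0⟩ := hex
  obtain ⟨hG, hg⟩ := mu_ne hx0
  obtain ⟨a, b, hab, hI, hin, hmain⟩ := per_gamma hz hz1 hG hg
  have hout : ∀ x ∉ Finset.Icc a b, mu z x g = 0 := by
    intro x hx
    by_contra hc
    exact hx (hin x (mu_ne hc).1)
  have hnn : ∀ x, 0 ≤ mu z x g := fun x => mu_nonneg hz.le hz1.le x g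
  set S := (Finset.Icc a b).filter (fun x => x ∈ E) with hS
  have hm := hmain S (Finset.filter_subset _ _)
  have e1 : ∑' x : ℤ, (volume.restrict (Set.Icc (0 : ℝ) 1)) {_u | x ∈ E} * ENNReal.ofReal (mu z x g)
      ≤ ENNReal.ofReal (∑ x ∈ S, mu z x g) := by
    rw [tsum_eq_sum (s := Finset.Icc a b) (fun x hx => by rw [hout x hx]; simp),
      ENNReal.ofReal_sum_of_nonneg (fun x _ => hnn x), hS, Finset.sum_filter]
    refine Finset.sum_le_sum (fun x _ => ?_)
    by_cases hx : x ∈ E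
    · simp [hx]
    · simp [hx]
  have e2 : ∑' x : ℤ, (volume.restrict (Set.Icc (0 : ℝ) 1)) {u | uSel g u ∈ E} * ENNReal.ofReal (mu z x g)
      = (volume.restrict (Set.Icc (0 : ℝ) 1)) {u | uSel g u ∈ E} *
        ENNReal.ofReal (∑ x ∈ Finset.Icc a b, mu z x g) := by
    rw [ENNReal.tsum_mul_left, tsum_eq_sum (s := Finset.Icc a b) (fun x hx => by rw [hout x hx]; simp),
      ENNReal.ofReal_sum_of_nonneg (fun x _ => hnn x)]
  have e3 : ∑' x : ℤ, ENNReal.ofReal (if g x = 0 then mu z x g else 0) =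
      ENNReal.ofReal (∑ x ∈ Finset.Icc a b, (if g x = 0 then mu z x g else 0)) := by
    rw [tsum_eq_sum (s := Finset.Icc a b) (fun x hx => by rw [hout x hx]; simp),
      ENNReal.ofReal_sum_of_nonneg]
    intro x _
    split_ifs
    · exact hnn x
    · exact le_rfl
  have e4 : ∑' x : ℤ, ENNReal.ofReal (mu z x g * ((z⁻¹) ^ (g x).toNat - 1)) =
      ENNReal.ofReal (∑ x ∈ Finset.Icc a b, mu z x g * ((z⁻¹) ^ (g x).toNat - 1)) := by
    rw [tsum_eq_sum (s := Finset.Icc a b) (fun x hx => by rw [hout x hx]; simp),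
      ENNReal.ofReal_sum_of_nonneg]
    intro x _
    exact disc_nonneg hz hz1 x g
  have hsel := uSel_law hab hI E S (Finset.filter_subset _ _) (fun x hx => (Finset.mem_filter.mp hx).2)
  have n1 : 0 ≤ ∑ x ∈ Finset.Icc a b, mu z x g := Finset.sum_nonneg (fun x _ => hnn x)
  have n2 : 0 ≤ ∑ x ∈ Finset.Icc a b, (if g x = 0 then mu z x g else 0) := by
    refine Finset.sum_nonneg (fun x _ => ?_)
    split_ifs
    · exact hnn x
    · exact le_rfl
  have n3 : 0 ≤ ∑ x ∈ Finset.Icc a b, mu z x g * ((z⁻¹) ^ (g x).toNat - 1) :=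
    Finset.sum_nonneg (fun x _ => disc_nonneg hz hz1 x g)
  have n4 : 0 ≤ (S.card : ℝ) / ((Finset.Icc a b).card : ℝ) :=
    div_nonneg (Nat.cast_nonneg _) (Nat.cast_nonneg _)
  rw [e2, e3, e4]
  refine e1.trans ((ENNReal.ofReal_le_ofReal hm).trans ?_)
  rw [ENNReal.ofReal_add (add_nonneg (mul_nonneg n4 n1) n2) n3,
    ENNReal.ofReal_add (mul_nonneg n4 n1) n2, ENNReal.ofReal_mul n4]
  gcongr

/-- one-sided comparison of the two laws -/
lemma one_sided {P : Measure (ℕ → Bool)} [IsProbabilityMeasure P]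
    (hP : ∀ (s : Finset ℕ) (b : ℕ → Bool), P {ω | ∀ j ∈ s, ω j = b j} = (1 / 2 : ENNReal) ^ s.card)
    {z ρ : ℝ} (hz : 0 < z) (hz1 : z < 1) (hρ : 0 < ρ) (M : ℕ) (hM : 1 ≤ M)
    {ν : Measure ℕ} [IsProbabilityMeasure ν] (h0 : ν {0} = 0)
    (hk : ∀ k : ℕ, 1 ≤ k → ν {k} = ENNReal.ofReal ((1 - z) * z ^ (k - 1)))
    [IsProbabilityMeasure (volume.restrict (Set.Icc (0 : ℝ) 1))]
    (E : Set (ℤ × (ℤ → ℤ))) :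
    (P.prod (ν.prod (volume.restrict (Set.Icc (0 : ℝ) 1)))) ((fun ω => (xRV ω, gammaRV ω)) ⁻¹' E) ≤
    (P.prod (ν.prod (volume.restrict (Set.Icc (0 : ℝ) 1)))) ((fun ω => (uRV ω, gammaRV ω)) ⁻¹' E)
      + ENNReal.ofReal (err1 z M + err2 z ρ) := by
  rw [event_x, event_u, event_law hP hz hz1 h0 hk _ _ (fun p => MeasurableSet.const _),
    event_law hP hz hz1 h0 hk _ _ (fun p => uSel_meas p.2 _),
    ENNReal.ofReal_add (err1_nonneg hz hz1 M hM) (err2_nonneg hz hz1 hρ), ← add_assoc]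
  refine le_trans (ENNReal.tsum_le_tsum (fun g => fixed_gamma hz hz1 g {x | (x, g) ∈ E})) ?_
  rw [ENNReal.tsum_add, ENNReal.tsum_add]
  exact add_le_add (add_le_add le_rfl (tsum_err1 hz hz1 M hM)) (tsum_err2 hP hz hz1 hρ)

lemma unif_prob : IsProbabilityMeasure (volume.restrict (Set.Icc (0 : ℝ) 1)) := by
  refine ⟨?_⟩
  simp

lemma tv_bound {P : Measure (ℕ → Bool)} [IsProbabilityMeasure P]
    (hP : ∀ (s : Finset ℕ) (b : ℕ → Bool), P {ω | ∀ j ∈ s, ω j = b j} = (1 / 2 : ENNReal) ^ s.card)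
    {z ρ : ℝ} (hz : 0 < z) (hz1 : z < 1) (hρ : 0 < ρ) (M : ℕ) (hM : 1 ≤ M)
    {ν : Measure ℕ} [IsProbabilityMeasure ν] (h0 : ν {0} = 0)
    (hk : ∀ k : ℕ, 1 ≤ k → ν {k} = ENNReal.ofReal ((1 - z) * z ^ (k - 1))) :
    tvDist ((P.prod (ν.prod (volume.restrict (Set.Icc (0 : ℝ) 1)))).map (fun ω => (uRV ω, gammaRV ω)))
      ((P.prod (ν.prod (volume.restrict (Set.Icc (0 : ℝ) 1)))).map (fun ω => (xRV ω, gammaRV ω)))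
      ≤ err1 z M + err2 z ρ := by
  have := unif_prob
  have mx : Measurable (fun ω : (ℕ → Bool) × ℕ × ℝ => (xRV ω, gammaRV ω)) := by
    intro E _
    rw [event_x]
    exact event_meas hP _ (fun p => MeasurableSet.const _)
  have mu' : Measurable (fun ω : (ℕ → Bool) × ℕ × ℝ => (uRV ω, gammaRV ω)) := by
    intro E _
    rw [event_u]
    exact event_meas hP _ (fun p => uSel_meas p.2 _)
  have hs := fun E => one_sided hP hz hz1 hρ M hM h0 hk E
  have herr : 0 ≤ err1 z M + err2 z ρ := add_nonneg (err1_nonneg hz hz1 M hM) (err2_nonneg hz hz1 hρ)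
  generalize err1 z M + err2 z ρ = err at hs herr ⊢
  generalize hQ : P.prod (ν.prod (volume.restrict (Set.Icc (0 : ℝ) 1))) = Q at hs ⊢
  have : IsProbabilityMeasure Q := by rw [← hQ]; infer_instance
  have : Nonempty {E : Set (ℤ × (ℤ → ℤ)) // MeasurableSet E} := ⟨⟨∅, MeasurableSet.empty⟩⟩
  have hr : ∀ E, Q.real ((fun ω => (xRV ω, gammaRV ω)) ⁻¹' E) ≤
      Q.real ((fun ω => (uRV ω, gammaRV ω)) ⁻¹' E) + err := by
    intro E
    have h1 := ENNReal.toReal_mono (by finiteness) (hs E)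
    rwa [ENNReal.toReal_add (by finiteness) (by finiteness), ENNReal.toReal_ofReal herr] at h1
  unfold tvDist
  refine ciSup_le (fun E => ?_)
  obtain ⟨E, hE⟩ := E
  rw [Measure.map_apply mu' hE, Measure.map_apply mx hE]
  have h1 := hr E
  have h2 := hr Eᶜ
  rw [Set.preimage_compl, Set.preimage_compl, probReal_compl_eq_one_sub (mx hE),
    probReal_compl_eq_one_sub (mu' hE)] at h2
  change |Q.real _ - Q.real _| ≤ err
  rw [abs_le]
  constructor <;> linarith

lemma err1_le {z : ℝ} (hz : 0 < z) (hz1 : z < 1) (M : ℕ) (hM : 1 ≤ M) :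
    err1 z M ≤ 4 / (M * z ^ (M + 1)) + 16 * (1 - z) * (M : ℝ) ^ 2 / z := by
  have hMr : (0 : ℝ) < M := by exact_mod_cast hM
  have hd : 0 < 1 - z := by linarith
  have h1 : (1 - z) * (M * z ^ M) ≤ 1 - z ^ M := by
    rw [← mul_neg_geom_sum z M]
    refine mul_le_mul_of_nonneg_left ?_ hd.le
    have : ∑ _i ∈ Finset.range M, z ^ M ≤ ∑ i ∈ Finset.range M, z ^ i :=
      Finset.sum_le_sum (fun i hi => pow_le_pow_of_le_one hz.le hz1.le (Finset.mem_range.mp hi).le)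
    simpa using this
  have h2 : 2 / (1 - z ^ M) ≤ 2 / ((1 - z) * (M * z ^ M)) :=
    div_le_div_of_nonneg_left two_pos.le (by positivity) h1
  unfold err1
  have h3 : 0 ≤ (1 - z) / z := by positivity
  calc 2 * ((1 - z) / z * (2 / (1 - z ^ M) + 8 * (M : ℝ) ^ 2))
      ≤ 2 * ((1 - z) / z * (2 / ((1 - z) * (M * z ^ M)) + 8 * (M : ℝ) ^ 2)) := by
        gcongr
    _ = _ := by
        have := hd.ne'
        rw [pow_succ]
        field_simp
        ring

lemma err_tendsto {ρ : ℝ} (hρ : 0 < ρ) (M : ℕ) (hM : 1 ≤ M) :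
    Tendsto (fun A : ℝ => 4 / (M * (1 - 2 / A) ^ (M + 1)) +
      16 * (1 - (1 - 2 / A)) * (M : ℝ) ^ 2 / (1 - 2 / A) + err2 (1 - 2 / A) ρ) atTop
      (nhds (4 / M + 4 * ρ)) := by
  have hMr : (M : ℝ) ≠ 0 := by
    have : (0 : ℝ) < M := by exact_mod_cast hM
    exact this.ne'
  have hz : Tendsto (fun A : ℝ => 1 - 2 / A) atTop (nhds 1) := by
    have : Tendsto (fun A : ℝ => 2 / A) atTop (nhds 0) := tendsto_const_nhds.div_atTop tendsto_id
    simpa using (tendsto_const_nhds (x := (1 : ℝ))).sub this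
  have hc : ContinuousAt (fun z : ℝ => 4 / (M * z ^ (M + 1)) +
      16 * (1 - z) * (M : ℝ) ^ 2 / z + err2 z ρ) 1 := by
    unfold err2
    fun_prop (disch := simp [hMr, hρ.ne'])
  have := hc.tendsto.comp hz
  simpa [Function.comp_def, err2] using this

/-- as `A → ∞`, the total variation distance between the law of
`(u_A, γ_A)` and the law of `(x_A, γ_A)` tends to `0`.  Here the coins are
i.i.d. uniform on `{-1,+1}`, `q_A` is geometric with
`P(q_A = k) = (2/A)(1-2/A)^{k-1}` for `k ≥ 1`, and `U` is uniform on `[0,1]`,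
all independent. -/
theorem statement11 (Pcoin : Measure (ℕ → Bool)) [IsProbabilityMeasure Pcoin]
    (hP : ∀ (s : Finset ℕ) (b : ℕ → Bool),
      Pcoin {ω | ∀ j ∈ s, ω j = b j} = (1 / 2 : ENNReal) ^ s.card)
    (geom : ℝ → Measure ℕ)
    (hgeomP : ∀ A : ℝ, 2 < A → IsProbabilityMeasure (geom A))
    (hgeom0 : ∀ A : ℝ, 2 < A → geom A {0} = 0)
    (hgeomk : ∀ A : ℝ, 2 < A → ∀ k : ℕ, 1 ≤ k →
      geom A {k} = ENNReal.ofReal ((2 / A) * (1 - 2 / A) ^ (k - 1))) :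
    Filter.Tendsto
      (fun A : ℝ =>
        tvDist
          ((Pcoin.prod ((geom A).prod (volume.restrict (Set.Icc (0 : ℝ) 1)))).map
            (fun ω => (uRV ω, gammaRV ω)))
          ((Pcoin.prod ((geom A).prod (volume.restrict (Set.Icc (0 : ℝ) 1)))).map
            (fun ω => (xRV ω, gammaRV ω))))
      Filter.atTop (nhds 0) := by
  rw [Metric.tendsto_atTop]
  intro η hη
  obtain ⟨M0, hM0⟩ := exists_nat_gt (16 / η)
  set M : ℕ := M0 + 1 with hMd
  have hM : 1 ≤ M := by omega
  have hMr : 16 / η < (M : ℝ) := by rw [hMd]; push_cast; linarith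
  have hMpos : (0 : ℝ) < M := by exact_mod_cast hM
  have hMη : 4 / (M : ℝ) < η / 4 := by
    rw [div_lt_iff₀ hη] at hMr
    rw [div_lt_div_iff₀ hMpos (by norm_num)]
    linarith
  have hρ : 0 < η / 16 := by positivity
  have hlim := err_tendsto hρ M hM
  have hev := hlim.eventually (gt_mem_nhds (show 4 / (M : ℝ) + 4 * (η / 16) < η by linarith))
  obtain ⟨A0, hA0⟩ := Filter.eventually_atTop.mp (hev.and (Filter.eventually_gt_atTop (2 : ℝ)))
  refine ⟨A0, fun A hA => ?_⟩
  obtain ⟨h1, h2⟩ := hA0 A hA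
  have := hgeomP A h2
  have hApos : 0 < A := by linarith
  have hz : 0 < 1 - 2 / A := by
    rw [sub_pos, div_lt_one hApos]; exact h2
  have hz1 : 1 - 2 / A < 1 := by
    have : 0 < 2 / A := by positivity
    linarith
  have hk : ∀ k : ℕ, 1 ≤ k →
      geom A {k} = ENNReal.ofReal ((1 - (1 - 2 / A)) * (1 - 2 / A) ^ (k - 1)) := by
    intro k hk
    rw [hgeomk A h2 k hk, sub_sub_cancel]
  have hb := tv_bound hP hz hz1 hρ M hM (hgeom0 A h2) hk
  have he := err1_le hz hz1 M hM
  have hnn := Real.iSup_nonneg (f := fun E : {E : Set (ℤ × (ℤ → ℤ)) // MeasurableSet E} =>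
    |(((Pcoin.prod ((geom A).prod (volume.restrict (Set.Icc (0 : ℝ) 1)))).map
            (fun ω => (uRV ω, gammaRV ω))) E.1).toReal -
      (((Pcoin.prod ((geom A).prod (volume.restrict (Set.Icc (0 : ℝ) 1)))).map
            (fun ω => (xRV ω, gammaRV ω))) E.1).toReal|) (fun E => abs_nonneg _)
  rw [Real.dist_eq, sub_zero, abs_of_nonneg (by exact hnn)]
  linarith
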